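/- arXiv:2007.02621 — 10 statements merged into one kernel-verified Lean document; each statement's English description precedes it below -/
import Mathlib

section
/- Let G be a finite undirected loopless multigraph with real edge weights and let R be a positive natural number, such that between any pair of vertices u, v there are either exactly R parallel edges, all of the same weight w({u,v}), or no edges. Let G' be the simple graph obtained from G by keeping exactly one edge between each connected pair, with weight w. Then the maximum total weight of a bipartite subgraph J of G in which every vertex is incident to at most R edges of J equals R times the maximum weight of a matching in G'; moreover this maximum is attained by the subgraph consisting of all R parallel copies of every edge of a maximum-weight matching of G'. -/
namespace S1

/-- Weight of a multigraph subgraph given by edge multiplicities `m` (symmetric),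
with edge weights `w`; each unordered pair is counted twice in the double sum,
hence the division by 2. -/
noncomputable def wt {V : Type} [Fintype V] (w : V → V → ℝ) (m : V → V → ℕ) : ℝ :=
  (∑ u, ∑ v, (m u v : ℝ) * w u v) / 2

/-- `m` is (the indicator of) a matching in the simple graph with adjacency `Adj`. -/
def isMatching {V : Type} [Fintype V] (Adj : V → V → Prop) (m : V → V → ℕ) : Prop :=
  (∀ u v, m u v = m v u) ∧ (∀ u v, ¬ Adj u v → m u v = 0) ∧
  (∀ u v, m u v ≤ 1) ∧ (∀ v, ∑ u, m v u ≤ 1)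

/-- `m` gives a bipartite subgraph of the multigraph `G` (which has `R` parallel
copies of every edge of the simple graph `Adj`) in which every vertex is incident
to at most `R` edges. -/
def isBipSub {V : Type} [Fintype V] (Adj : V → V → Prop) (R : ℕ) (m : V → V → ℕ) : Prop :=
  (∀ u v, m u v = m v u) ∧ (∀ u v, ¬ Adj u v → m u v = 0) ∧
  (∀ u v, m u v ≤ R) ∧ (∀ v, ∑ u, m v u ≤ R) ∧
  (∃ p : V → Bool, ∀ u v, 0 < m u v → p u ≠ p v)

end S1

/-!
Write a bipartite subgraph as an orientation of its edges from one side of the bipartition to the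
other. Padding the multiplicity matrix `J` on the diagonal turns it into `R` times a doubly
stochastic matrix, so by Birkhoff's theorem the weight of `J`, which is linear in this matrix, is at
most `R` times its value at some permutation `σ`. The arcs `u → σ u` supported on `J` form a
matching, since no vertex is both a tail and a head, and its weight is that value.
Conversely a matching is bipartite, and so is its `R`-fold multiple.
-/

section Birkhoff

variable {n 𝕜 : Type*} [Fintype n] [Field 𝕜] [LinearOrder 𝕜] [IsStrictOrderedRing 𝕜]

theorem exists_perm_sum_mul_le_of_mem_doublyStochastic [DecidableEq n] {D : Matrix n n 𝕜}
    (hD : D ∈ doublyStochastic 𝕜 n) (f : n → n → 𝕜) :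
    ∃ σ : Equiv.Perm n, ∑ i, ∑ j, D i j * f i j ≤ ∑ i, f i (σ i) := by
  let pairing : Matrix n n 𝕜 →ₗ[𝕜] 𝕜 := ∑ i, ∑ j, f i j • Matrix.entryLinearMap 𝕜 𝕜 i j
  have pairing_apply (A : Matrix n n 𝕜) : pairing A = ∑ i, ∑ j, A i j * f i j := by
    simp [pairing, mul_comm]
  have hD' : D ∈ convexHull 𝕜 {P | ∃ σ : Equiv.Perm n, σ.permMatrix 𝕜 = P} := by
    rwa [← doublyStochastic_eq_convexHull_permMatrix]
  obtain ⟨_, ⟨σ, rfl⟩, hσ⟩ :=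
    (pairing.convexOn convex_univ).exists_ge_of_mem_convexHull (Set.subset_univ _) hD'
  refine ⟨σ, ?_⟩
  simpa [pairing_apply, Equiv.Perm.permMatrix, PEquiv.toMatrix_apply] using hσ

theorem exists_perm_sum_mul_le_of_sum_eq {A : Matrix n n 𝕜} {s : 𝕜}
    (hA : ∀ i j, 0 ≤ A i j) (hrow : ∀ i, ∑ j, A i j = s) (hcol : ∀ j, ∑ i, A i j = s)
    (f : n → n → 𝕜) :
    ∃ σ : Equiv.Perm n, ∑ i, ∑ j, A i j * f i j ≤ s * ∑ i, f i (σ i) := by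
  classical
  rcases isEmpty_or_nonempty n with _ | ⟨⟨i⟩⟩
  · exact ⟨1, by simp⟩
  have hs : 0 ≤ s := hrow i ▸ Finset.sum_nonneg fun j _ => hA i j
  obtain ⟨D, hD, rfl⟩ := (exists_mem_doublyStochastic_eq_smul_iff hs).2 ⟨hA, hrow, hcol⟩
  obtain ⟨σ, hσ⟩ := exists_perm_sum_mul_le_of_mem_doublyStochastic hD f
  refine ⟨σ, ?_⟩
  simpa only [Matrix.smul_apply, smul_eq_mul, mul_assoc, ← Finset.mul_sum] using
    mul_le_mul_of_nonneg_left hσ hs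

theorem exists_perm_sum_mul_le_of_isSymm_of_sum_le {A : Matrix n n 𝕜} {s : 𝕜}
    (hA : ∀ i j, 0 ≤ A i j) (hsymm : A.IsSymm) (hrow : ∀ i, ∑ j, A i j ≤ s)
    {f : n → n → 𝕜} (hf : ∀ i, f i i = 0) :
    ∃ σ : Equiv.Perm n, ∑ i, ∑ j, A i j * f i j ≤ s * ∑ i, f i (σ i) := by
  classical
  let slack : n → 𝕜 := fun i => s - ∑ j, A i j
  have padded_nonneg (i j : n) : 0 ≤ (A + Matrix.diagonal slack) i j := by
    refine add_nonneg (hA i j) ?_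
    rw [Matrix.diagonal_apply]
    split_ifs
    exacts [sub_nonneg.2 (hrow i), le_rfl]
  have padded_row (i : n) : ∑ j, (A + Matrix.diagonal slack) i j = s := by
    simp [slack, Finset.sum_add_distrib, Matrix.diagonal_apply]
  have padded_symm : (A + Matrix.diagonal slack).IsSymm :=
    hsymm.add (Matrix.isSymm_diagonal slack)
  have padded_col (j : n) : ∑ i, (A + Matrix.diagonal slack) i j = s := by
    rw [← padded_row j]
    exact Finset.sum_congr rfl fun i _ => padded_symm.apply j i
  obtain ⟨σ, hσ⟩ := exists_perm_sum_mul_le_of_sum_eq padded_nonneg padded_row padded_col f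
  refine ⟨σ, ?_⟩
  simpa [add_mul, Finset.sum_add_distrib, Matrix.diagonal_apply, hf] using hσ

end Birkhoff

theorem exists_bool_coloring_of_rightUnique {α : Type*} {r : α → α → Prop}
    (hsymm : ∀ a b, r a b → r b a) (hirrefl : ∀ a, ¬ r a a) (huniq : Relator.RightUnique r) :
    ∃ p : α → Bool, ∀ a b, r a b → p a ≠ p b := by
  classical
  let _ : LinearOrder α := linearOrderOfSTO WellOrderingRel
  -- In each related pair the smaller element is the one coloured `true`.
  have lt_partner_iff {a b : α} (hab : r a b) : (∃ c, r a c ∧ a < c) ↔ a < b :=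
    ⟨fun ⟨_, hac, hlt⟩ => huniq hac hab ▸ hlt, fun hlt => ⟨b, hab, hlt⟩⟩
  refine ⟨fun a => decide (∃ c, r a c ∧ a < c), fun a b hab => ?_⟩
  have hne : a ≠ b := by
    rintro rfl
    exact hirrefl a hab
  simp only [lt_partner_iff hab, lt_partner_iff (hsymm a b hab), ne_eq, decide_eq_decide]
  grind

namespace S1

section Orientation

variable {V : Type}

/-- The undirected multigraph underlying the directed multigraph with arc multiplicities `a`.
Each edge is a single arc of `a`, so weights become double sums without the factor `1 / 2`. -/
def unorient (a : V → V → ℕ) (u v : V) : ℕ :=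
  a u v + a v u

open Classical in
/-- The arcs of `A` that lie in the graph of the permutation `σ`, as arc multiplicities.
Forgetting orientations gives a matching when no vertex is both a tail and a head of `A`. -/
noncomputable def permArcs (A : V → V → Prop) (σ : Equiv.Perm V) (u v : V) : ℕ :=
  if σ u = v ∧ A u v then 1 else 0

theorem unorient_ite_eq {J : V → V → ℕ} (hsymm : ∀ u v, J u v = J v u) {p : V → Bool}
    (hp : ∀ u v, 0 < J u v → p u ≠ p v) :
    unorient (fun u v => if p u then J u v else 0) = J := by
  ext u v
  have hpuv := hp u v
  have hJuv := hsymm u v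
  simp only [unorient]
  grind

variable [Fintype V]

theorem wt_unorient {w : V → V → ℝ} (hw : ∀ u v, w u v = w v u) (a : V → V → ℕ) :
    wt w (unorient a) = ∑ u, ∑ v, (a u v : ℝ) * w u v := by
  have reversed : ∑ u, ∑ v, (a v u : ℝ) * w u v = ∑ u, ∑ v, (a u v : ℝ) * w u v := by
    rw [Finset.sum_comm]
    simp only [hw]
  simp only [wt, unorient, Nat.cast_add, add_mul, Finset.sum_add_distrib, reversed]
  ring

theorem wt_unorient_permArcs {w : V → V → ℝ} (hw : ∀ u v, w u v = w v u) (A : V → V → Prop)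
    [DecidableRel A] (σ : Equiv.Perm V) :
    wt w (unorient (permArcs A σ)) = ∑ u, if A u (σ u) then w u (σ u) else 0 := by
  classical
  simp [wt_unorient hw, permArcs, ite_and]

theorem sum_unorient_permArcs_le_one {A : V → V → Prop}
    (hA : ∀ u v x, A u v → ¬ A v x) (σ : Equiv.Perm V) (v : V) :
    ∑ u, unorient (permArcs A σ) v u ≤ 1 := by
  classical
  by_cases htail : ∃ x, A v x
  · calc
      ∑ u, unorient (permArcs A σ) v u ≤ ∑ u, if σ v = u then 1 else 0 :=
        Finset.sum_le_sum fun u _ => by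
          simp only [unorient, permArcs]
          grind
      _ ≤ 1 := by simp
  · calc
      ∑ u, unorient (permArcs A σ) v u ≤ ∑ u, if u = σ.symm v then 1 else 0 :=
        Finset.sum_le_sum fun u _ => by
          simp only [unorient, permArcs, Equiv.eq_symm_apply]
          grind
      _ ≤ 1 := by simp

theorem isMatching_unorient_permArcs {Adj A : V → V → Prop}
    (hAdj : ∀ u v, A u v → Adj u v ∧ Adj v u) (hA : ∀ u v x, A u v → ¬ A v x)
    (σ : Equiv.Perm V) : isMatching Adj (unorient (permArcs A σ)) := by
  have hdeg := sum_unorient_permArcs_le_one hA σ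
  refine ⟨fun u v => add_comm _ _, fun u v huv => ?_, fun u v => ?_, hdeg⟩
  · have not_arc : ¬ A u v := fun h => huv (hAdj u v h).1
    have not_arc_rev : ¬ A v u := fun h => huv (hAdj v u h).2
    simp [unorient, permArcs, not_arc, not_arc_rev]
  · exact (Finset.single_le_sum (fun _ _ => Nat.zero_le _) (Finset.mem_univ v)).trans (hdeg u)

end Orientation

variable {V : Type} [Fintype V] {Adj : V → V → Prop} {R : ℕ} {w : V → V → ℝ}

theorem wt_const_mul (w : V → V → ℝ) (R : ℕ) (m : V → V → ℕ) :
    wt w (fun u v => R * m u v) = R * wt w m := by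
  simp only [wt, Nat.cast_mul, mul_assoc, ← Finset.mul_sum, mul_div_assoc]

theorem isBipSub.exists_isMatching_wt_le (hw : ∀ u v, w u v = w v u) {J : V → V → ℕ}
    (hJ : isBipSub Adj R J) : ∃ M, isMatching Adj M ∧ wt w J ≤ R * wt w M := by
  classical
  obtain ⟨hsymm, hAdj, -, hdeg, p, hp⟩ := hJ
  let A : V → V → Prop := fun u v => p u ∧ 0 < J u v
  have hA_adj (u v : V) (huv : A u v) : Adj u v ∧ Adj v u :=
    ⟨not_imp_comm.1 (hAdj u v) huv.2.ne',
      not_imp_comm.1 (hAdj v u) (hsymm u v ▸ huv.2.ne')⟩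
  have hA_bip (u v x : V) (huv : A u v) : ¬ A v x := fun hvx =>
    hp u v huv.2 (huv.1.trans hvx.1.symm)
  obtain ⟨σ, hσ⟩ := exists_perm_sum_mul_le_of_isSymm_of_sum_le
    (A := Matrix.of fun u v => (J u v : ℝ)) (s := R)
    (f := fun u v => if A u v then w u v else 0)
    (fun u v => Nat.cast_nonneg (J u v)) (Matrix.IsSymm.ext fun u v => by simp [hsymm u v])
    (fun u => by simpa using mod_cast hdeg u) (fun u => if_neg fun h => hA_bip u u u h h)
  refine ⟨unorient (permArcs A σ), isMatching_unorient_permArcs hA_adj hA_bip σ, ?_⟩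
  calc
    wt w J = ∑ u, ∑ v, ((if p u then J u v else 0 : ℕ) : ℝ) * w u v := by
      rw [← wt_unorient hw, unorient_ite_eq hsymm hp]
    _ = ∑ u, ∑ v, (J u v : ℝ) * if A u v then w u v else 0 := by
      refine Finset.sum_congr rfl fun u _ => Finset.sum_congr rfl fun v _ => ?_
      by_cases hpu : p u <;> rcases (J u v).eq_zero_or_pos with hJ | hJ <;> simp [A, hJ, hpu]
    _ ≤ R * ∑ u, if A u (σ u) then w u (σ u) else 0 := hσ
    _ = R * wt w (unorient (permArcs A σ)) := by rw [wt_unorient_permArcs hw]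

theorem isMatching.rightUnique_pos {M : V → V → ℕ} (hM : isMatching Adj M) :
    Relator.RightUnique fun u v => 0 < M u v := by
  classical
  intro u a b ha hb
  by_contra hne
  have hpair : M u a + M u b ≤ ∑ v, M u v := by
    rw [← Finset.sum_pair hne]
    exact Finset.sum_le_sum_of_subset (Finset.subset_univ _)
  have hdeg := hM.2.2.2 u
  lia

theorem isMatching.isBipSub_const_mul (hirr : ∀ v, ¬ Adj v v) {M : V → V → ℕ}
    (hM : isMatching Adj M) (R : ℕ) : isBipSub Adj R (fun u v => R * M u v) := by
  have huniq := hM.rightUnique_pos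
  obtain ⟨hsymm, hAdj, hle, hdeg⟩ := hM
  obtain ⟨p, hp⟩ := exists_bool_coloring_of_rightUnique
    (fun u v huv => hsymm u v ▸ huv) (fun v => (hAdj v v (hirr v)).not_gt) huniq
  refine ⟨fun u v => congrArg (R * ·) (hsymm u v), fun u v huv => by simp [hAdj u v huv],
    fun u v => mul_le_of_le_one_right' (hle u v), fun v => ?_,
    p, fun u v huv => hp u v (Nat.pos_of_mul_pos_left huv)⟩
  rw [← Finset.mul_sum]
  exact mul_le_of_le_one_right' (hdeg v)

theorem finite_isMatching (Adj : V → V → Prop) : {M | isMatching Adj M}.Finite := by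
  classical
  exact (Set.finite_Icc (0 : V → V → ℕ) 1).subset fun M hM =>
    ⟨fun u v => Nat.zero_le (M u v), fun u v => hM.2.2.1 u v⟩

theorem exists_isMatching_forall_wt_le (Adj : V → V → Prop) (w : V → V → ℝ) :
    ∃ M, isMatching Adj M ∧ ∀ M', isMatching Adj M' → wt w M' ≤ wt w M := by
  have isMatching_zero : isMatching Adj fun _ _ => 0 := by simp [isMatching]
  exact Set.exists_max_image _ (wt w) (finite_isMatching Adj) ⟨_, isMatching_zero⟩

end S1

theorem max_bipartite_subgraph_eq_R_mul_max_matching_general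
    {V : Type} [Fintype V] (R : ℕ) {Adj : V → V → Prop} (hirr : ∀ v, ¬ Adj v v)
    {w : V → V → ℝ} (hwsym : ∀ u v, w u v = w v u) :
    ∃ M : V → V → ℕ,
      S1.isMatching Adj M ∧
      (∀ M' : V → V → ℕ, S1.isMatching Adj M' → S1.wt w M' ≤ S1.wt w M) ∧
      S1.isBipSub Adj R (fun u v => R * M u v) ∧
      S1.wt w (fun u v => R * M u v) = (R : ℝ) * S1.wt w M ∧
      (∀ J : V → V → ℕ, S1.isBipSub Adj R J → S1.wt w J ≤ (R : ℝ) * S1.wt w M) := by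
  obtain ⟨M, hM, hmax⟩ := S1.exists_isMatching_forall_wt_le Adj w
  refine ⟨M, hM, hmax, hM.isBipSub_const_mul hirr R, S1.wt_const_mul w R M, fun J hJ => ?_⟩
  obtain ⟨M', hM', hle⟩ := hJ.exists_isMatching_wt_le hwsym
  exact hle.trans (mul_le_mul_of_nonneg_left (hmax M' hM') (Nat.cast_nonneg R))

/-- For a multigraph `G` consisting of exactly `R` parallel edges of the
same positive weight between each adjacent pair of the simple graph `G' = (V, Adj, w)`,
the maximum weight of a bipartite subgraph of `G` with all degrees at most `R` equals
`R` times the maximum weight of a matching of `G'`, attained by taking all `R` parallel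
copies of every edge of a maximum-weight matching of `G'`. -/
theorem max_bipartite_subgraph_eq_R_mul_max_matching
    (V : Type) [Fintype V] [DecidableEq V]
    (R : ℕ) (hR : 1 ≤ R)
    (Adj : V → V → Prop) (hsym : ∀ u v, Adj u v → Adj v u) (hirr : ∀ v, ¬ Adj v v)
    (w : V → V → ℝ) (hwsym : ∀ u v, w u v = w v u) (hwpos : ∀ u v, Adj u v → 0 < w u v) :
    ∃ M : V → V → ℕ,
      S1.isMatching Adj M ∧
      (∀ M' : V → V → ℕ, S1.isMatching Adj M' → S1.wt w M' ≤ S1.wt w M) ∧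
      S1.isBipSub Adj R (fun u v => R * M u v) ∧
      S1.wt w (fun u v => R * M u v) = (R : ℝ) * S1.wt w M ∧
      (∀ J : V → V → ℕ, S1.isBipSub Adj R J → S1.wt w J ≤ (R : ℝ) * S1.wt w M) :=
  max_bipartite_subgraph_eq_R_mul_max_matching_general R hirr hwsym
end

section
/- Let D be a finite loopless directed multigraph with positive arc weights and let R be a positive natural number, such that for every ordered pair (u,v) of vertices, D contains either exactly R parallel arcs from u to v, all of the same weight w(u,v) > 0, or no arcs from u to v, and such that D never contains arcs in both directions between the same pair of vertices. Set r(v) = R for every vertex. Then the maximum total weight of a half-duplex subgraph of D equals R times the maximum weight of a matching in the underlying simple undirected graph of D (which has one edge {u,v} of weight w(u,v) for every pair joined by arcs in D). -/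
namespace S2

/-- Weight of a directed subgraph given by arc multiplicities `m`, with arc weights `w`. -/
noncomputable def dwt {V : Type} [Fintype V] (w : V → V → ℝ) (m : V → V → ℕ) : ℝ :=
  ∑ u, ∑ v, (m u v : ℝ) * w u v

/-- `m` is a half-duplex subgraph of the directed multigraph with `R` parallel arcs
between each `A`-related ordered pair and RF-chain number `R` at every vertex:
supported on arcs, at most `R` parallel copies of each arc, every vertex incident
(as head or tail) to at most `R` arcs, and no vertex is both head of an arc and
tail of an arc. -/
def isHD {V : Type} [Fintype V] (A : V → V → Prop) (R : ℕ) (m : V → V → ℕ) : Prop :=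
  (∀ u v, ¬ A u v → m u v = 0) ∧ (∀ u v, m u v ≤ R) ∧
  (∀ v, ((∑ u, m u v) + ∑ u, m v u) ≤ R) ∧
  (∀ v, 0 < ∑ u, m u v → (∑ u, m v u) = 0)

/-- `m` is a matching of the underlying simple undirected graph (edges oriented along
`A`, since arcs never occur in both directions): a set of arcs no two of which share a
vertex. -/
def isUMatch {V : Type} [Fintype V] (A : V → V → Prop) (m : V → V → ℕ) : Prop :=
  (∀ u v, ¬ A u v → m u v = 0) ∧ (∀ u v, m u v ≤ 1) ∧
  (∀ v, ((∑ u, m u v) + ∑ u, m v u) ≤ 1)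

end S2

/-!
Scaling a matching by `R` gives a half-duplex subgraph. Conversely, every half-duplex subgraph is a
sum of `R` matchings, so one of them carries at least a `1 / R` fraction of its weight. To see this,
view the multiplicities as a matrix with all row and column sums at most `R`. It is a corner of a
matrix whose row and column sums are exactly `R`. By Birkhoff's theorem the latter dominates a
permutation matrix, and subtracting one after another writes it as a sum of `R` permutation
matrices. Their corners have at most one nonzero entry in each row and column; the half-duplex
condition makes the row or the column of every vertex vanish, so these corners are matchings.
-/

open Finset Matrix

namespace S2

section LineSums

variable {n : Type*} [Fintype n]

/-- All row sums and all column sums of the square array `P` are at most `k`. For `k = 1` and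
natural entries these are the subpermutation matrices. A bare function stands for the matrix, as in
`isHD` and `isUMatch`. -/
def LineSumsLE {α : Type*} [AddCommMonoid α] [LE α] (k : α) (P : n → n → α) : Prop :=
  (∀ i, ∑ j, P i j ≤ k) ∧ ∀ j, ∑ i, P i j ≤ k

theorem LineSumsLE.exists_fromBlocks_sum_eq {α : Type*} [AddCommMonoid α] [LE α]
    [ExistsAddOfLE α] {k : α} {P : n → n → α} (hP : LineSumsLE k P) :
    ∃ B C D : Matrix n n α, (∀ i, ∑ j, fromBlocks (of P) B C D i j = k) ∧
      ∀ j, ∑ i, fromBlocks (of P) B C D i j = k := by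
  classical
  choose r hr using fun i => exists_add_of_le (hP.1 i)
  choose c hc using fun j => exists_add_of_le (hP.2 j)
  refine ⟨diagonal r, diagonal c, (of P)ᵀ, ?_, ?_⟩ <;> rintro (i | i) <;>
    simp [diagonal_apply, ← hr, ← hc, add_comm (c _), add_comm (r _)]

theorem exists_perm_forall_pos_of_mem_doublyStochastic [DecidableEq n] {α : Type*}
    [Field α] [LinearOrder α] [IsStrictOrderedRing α] {M : Matrix n n α}
    (hM : M ∈ doublyStochastic α n) :
    ∃ σ : Equiv.Perm n, ∀ i, 0 < M i (σ i) := by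
  obtain ⟨c, hc_nonneg, hc_sum, rfl⟩ := exists_eq_sum_perm_of_mem_doublyStochastic hM
  obtain ⟨σ, -, hσ⟩ : ∃ σ ∈ univ, 0 < c σ := exists_lt_of_sum_lt (by simp [hc_sum])
  refine ⟨σ, fun i => ?_⟩
  rw [Matrix.sum_apply]
  refine sum_pos' (fun τ _ => ?_) ⟨σ, mem_univ σ, ?_⟩
  · exact mul_nonneg (hc_nonneg τ) (nonneg_of_mem_doublyStochastic permMatrix_mem_doublyStochastic)
  · simpa [PEquiv.toMatrix_apply] using hσ

theorem exists_perm_forall_pos_of_sum_eq {k : ℕ} (hk : 0 < k) {Q : Matrix n n ℕ}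
    (hrow : ∀ i, ∑ j, Q i j = k) (hcol : ∀ j, ∑ i, Q i j = k) :
    ∃ σ : Equiv.Perm n, ∀ i, 0 < Q i (σ i) := by
  classical
  obtain ⟨M, hM, hQM⟩ := (exists_mem_doublyStochastic_eq_smul_iff (R := ℚ)
    (M := Q.map (↑)) k.cast_nonneg).2
      ⟨fun i j => (Q i j).cast_nonneg, fun i => by simp [← hrow i], fun j => by simp [← hcol j]⟩
  obtain ⟨σ, hσ⟩ := exists_perm_forall_pos_of_mem_doublyStochastic hM
  refine ⟨σ, fun i => ?_⟩
  have hentry : (Q i (σ i) : ℚ) = k * M i (σ i) := congr_fun₂ hQM i (σ i)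
  have : (0 : ℚ) < Q i (σ i) := hentry ▸ mul_pos (Nat.cast_pos.2 hk) (hσ i)
  exact_mod_cast this

theorem exists_eq_sum_permMatrix [DecidableEq n] {k : ℕ} {Q : Matrix n n ℕ}
    (hrow : ∀ i, ∑ j, Q i j = k) (hcol : ∀ j, ∑ i, Q i j = k) :
    ∃ σ : Fin k → Equiv.Perm n, Q = ∑ t, (σ t).permMatrix ℕ := by
  induction k generalizing Q with
  | zero =>
    refine ⟨Fin.elim0, ?_⟩
    ext i j
    simpa using sum_eq_zero_iff.1 (hrow i) j (mem_univ j)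
  | succ k ih =>
    obtain ⟨τ, hτ⟩ := exists_perm_forall_pos_of_sum_eq k.succ_pos hrow hcol
    have hτ_mem : τ.permMatrix ℕ ∈ doublyStochastic ℕ n := permMatrix_mem_doublyStochastic
    obtain ⟨Q', rfl⟩ : ∃ Q', Q = Q' + τ.permMatrix ℕ := by
      have hle : ∀ i j, τ.permMatrix ℕ i j ≤ Q i j := by
        intro i j
        obtain rfl | hij := eq_or_ne (τ i) j
        · simpa [PEquiv.toMatrix_apply] using Nat.one_le_of_lt (hτ i)
        · simp [PEquiv.toMatrix_apply, hij]
      exact ⟨of fun i j => Q i j - τ.permMatrix ℕ i j,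
        Matrix.ext fun i j => (Nat.sub_add_cancel (hle i j)).symm⟩
    simp only [Matrix.add_apply, sum_add_distrib, sum_row_of_mem_doublyStochastic hτ_mem,
      sum_col_of_mem_doublyStochastic hτ_mem, Nat.add_right_cancel_iff] at hrow hcol
    obtain ⟨σ, rfl⟩ := ih hrow hcol
    exact ⟨Fin.snoc σ τ, by simp [Fin.sum_univ_castSucc]⟩

theorem lineSumsLE_one_permMatrix_inl_inl [DecidableEq n] (σ : Equiv.Perm (n ⊕ n)) :
    LineSumsLE 1 fun i j => σ.permMatrix ℕ (Sum.inl i) (Sum.inl j) := by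
  have hσ : σ.permMatrix ℕ ∈ doublyStochastic ℕ (n ⊕ n) := permMatrix_mem_doublyStochastic
  refine ⟨fun i => ?_, fun j => ?_⟩
  · rw [← sum_row_of_mem_doublyStochastic hσ (Sum.inl i), Fintype.sum_sum_type]
    exact Nat.le_add_right _ _
  · rw [← sum_col_of_mem_doublyStochastic hσ (Sum.inl j), Fintype.sum_sum_type]
    exact Nat.le_add_right _ _

theorem LineSumsLE.exists_eq_sum {k : ℕ} {P : n → n → ℕ} (hP : LineSumsLE k P) :
    ∃ N : Fin k → n → n → ℕ, (∀ t, LineSumsLE 1 (N t)) ∧ P = ∑ t, N t := by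
  classical
  obtain ⟨B, C, D, hrow, hcol⟩ := hP.exists_fromBlocks_sum_eq
  obtain ⟨σ, hσ⟩ := exists_eq_sum_permMatrix hrow hcol
  refine ⟨fun t i j => (σ t).permMatrix ℕ (Sum.inl i) (Sum.inl j),
    fun t => lineSumsLE_one_permMatrix_inl_inl (σ t), ?_⟩
  ext i j
  simpa [Matrix.sum_apply] using congr_fun₂ hσ (Sum.inl i) (Sum.inl j)

end LineSums

variable {V : Type} [Fintype V] {A : V → V → Prop} {R : ℕ}

theorem isHD.lineSumsLE {J : V → V → ℕ} (hJ : isHD A R J) : LineSumsLE R J := by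
  obtain ⟨-, -, hdeg, -⟩ := hJ
  exact ⟨fun v => (Nat.le_add_left _ _).trans (hdeg v),
    fun v => (Nat.le_add_right _ _).trans (hdeg v)⟩

theorem isHD.isUMatch_of_le {J N : V → V → ℕ} (hJ : isHD A R J) (hNJ : N ≤ J)
    (hN : LineSumsLE 1 N) : isUMatch A N := by
  obtain ⟨hsupp, -, -, hduplex⟩ := hJ
  obtain ⟨hrow, hcol⟩ := hN
  refine ⟨fun u v huv => ?_, fun u v => ?_, fun v => ?_⟩
  · exact Nat.eq_zero_of_le_zero ((hNJ u v).trans_eq (hsupp u v huv))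
  · exact (single_le_sum_of_canonicallyOrdered (mem_univ v)).trans (hrow u)
  · have hin : ∑ u, N u v ≤ ∑ u, J u v := sum_le_sum fun u _ => hNJ u v
    have hout : ∑ u, N v u ≤ ∑ u, J v u := sum_le_sum fun u _ => hNJ v u
    have := hrow v
    have := hcol v
    have := hduplex v
    lia

theorem isHD.exists_eq_sum_isUMatch {J : V → V → ℕ} (hJ : isHD A R J) :
    ∃ N : Fin R → V → V → ℕ, (∀ t, isUMatch A (N t)) ∧ J = ∑ t, N t := by
  obtain ⟨N, hN, hJN⟩ := hJ.lineSumsLE.exists_eq_sum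
  have hle (t : Fin R) : N t ≤ J := fun u v => by
    simp only [hJN, Finset.sum_apply]
    exact single_le_sum_of_canonicallyOrdered (f := fun t => N t u v) (mem_univ t)
  exact ⟨N, fun t => hJ.isUMatch_of_le (hle t) (hN t), hJN⟩

theorem isUMatch.isHD_mul {M : V → V → ℕ} (hM : isUMatch A M) (R : ℕ) :
    isHD A R (fun u v => R * M u v) := by
  obtain ⟨hsupp, hone, hdeg⟩ := hM
  refine ⟨fun u v huv => ?_, fun u v => ?_, fun v => ?_, fun v hin => ?_⟩
  · simp only [hsupp u v huv, mul_zero]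
  · exact mul_le_of_le_one_right' (hone u v)
  · simp only [← mul_sum, ← mul_add]
    exact mul_le_of_le_one_right' (hdeg v)
  · simp only [← mul_sum] at hin ⊢
    have hout : ∑ u, M v u = 0 := by
      have := Nat.pos_of_mul_pos_left hin
      have := hdeg v
      lia
    rw [hout, mul_zero]

theorem exists_isUMatch_forall_dwt_le (A : V → V → Prop) (w : V → V → ℝ) :
    ∃ M, isUMatch A M ∧ ∀ M', isUMatch A M' → dwt w M' ≤ dwt w M := by
  classical
  have hfin : {M | isUMatch A M}.Finite :=
    (Set.finite_Iic (1 : V → V → ℕ)).subset fun M hM => hM.2.1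
  have hzero : isUMatch A 0 := by simp [isUMatch]
  exact Set.exists_max_image _ (dwt w) hfin ⟨0, hzero⟩

theorem dwt_mul (w : V → V → ℝ) (k : ℕ) (m : V → V → ℕ) :
    dwt w (fun u v => k * m u v) = k * dwt w m := by
  simp only [dwt, mul_sum, Nat.cast_mul, mul_assoc]

theorem dwt_sum {ι : Type*} (s : Finset ι) (w : V → V → ℝ) (m : ι → V → V → ℕ) :
    dwt w (∑ t ∈ s, m t) = ∑ t ∈ s, dwt w (m t) := by
  simp only [dwt, Finset.sum_apply, Nat.cast_sum, sum_mul]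
  exact (sum_congr rfl fun u _ => sum_comm).trans sum_comm

theorem isHD.dwt_le_mul {J : V → V → ℕ} (hJ : isHD A R J) {w : V → V → ℝ} {b : ℝ}
    (hb : ∀ M, isUMatch A M → dwt w M ≤ b) : dwt w J ≤ R * b := by
  obtain ⟨N, hN, rfl⟩ := hJ.exists_eq_sum_isUMatch
  calc dwt w (∑ t, N t) = ∑ t, dwt w (N t) := dwt_sum univ w N
    _ ≤ ∑ _t : Fin R, b := sum_le_sum fun t _ => hb (N t) (hN t)
    _ = R * b := by simp

end S2

theorem max_halfduplex_eq_R_mul_max_matching_general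
    (V : Type) [Fintype V] (R : ℕ) (A : V → V → Prop) (w : V → V → ℝ) :
    ∃ M : V → V → ℕ,
      S2.isUMatch A M ∧
      (∀ M' : V → V → ℕ, S2.isUMatch A M' → S2.dwt w M' ≤ S2.dwt w M) ∧
      S2.isHD A R (fun u v => R * M u v) ∧
      S2.dwt w (fun u v => R * M u v) = (R : ℝ) * S2.dwt w M ∧
      (∀ J : V → V → ℕ, S2.isHD A R J → S2.dwt w J ≤ (R : ℝ) * S2.dwt w M) := by
  obtain ⟨M, hM, hmax⟩ := S2.exists_isUMatch_forall_dwt_le A w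
  exact ⟨M, hM, hmax, hM.isHD_mul R, S2.dwt_mul w R M, fun _ hJ => hJ.dwt_le_mul hmax⟩

/-- For a loopless directed multigraph `D` with exactly `R` parallel arcs
of the same positive weight between each `A`-related ordered pair (never both
directions), and `r(v) = R` for every vertex, the maximum total weight of a half-duplex
subgraph of `D` equals `R` times the maximum weight of a matching in the underlying
simple undirected graph of `D`. -/
theorem max_halfduplex_eq_R_mul_max_matching
    (V : Type) [Fintype V] [DecidableEq V]
    (R : ℕ) (hR : 1 ≤ R)
    (A : V → V → Prop) (hirr : ∀ v, ¬ A v v) (hanti : ∀ u v, A u v → ¬ A v u)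
    (w : V → V → ℝ) (hwpos : ∀ u v, A u v → 0 < w u v) :
    ∃ M : V → V → ℕ,
      S2.isUMatch A M ∧
      (∀ M' : V → V → ℕ, S2.isUMatch A M' → S2.dwt w M' ≤ S2.dwt w M) ∧
      S2.isHD A R (fun u v => R * M u v) ∧
      S2.dwt w (fun u v => R * M u v) = (R : ℝ) * S2.dwt w M ∧
      (∀ J : V → V → ℕ, S2.isHD A R J → S2.dwt w J ≤ (R : ℝ) * S2.dwt w M) :=
  max_halfduplex_eq_R_mul_max_matching_general V R A w
end

section
/- Let Z = C_1 ∧ … ∧ C_K be a CNF formula over boolean variables x_1, …, x_L, where each clause C_k is a nonempty set of literals from {x_1, ¬x_1, …, x_L, ¬x_L}. Construct the finite loopless digraph D with vertex set {p_l, n_l, r_l : 1 ≤ l ≤ L} ∪ {q_k : 1 ≤ k ≤ K} and arcs: (p_l, q_k) whenever the literal x_l occurs in C_k; (n_l, q_k) whenever ¬x_l occurs in C_k; and (r_l, p_l), (r_l, n_l) for every l. Assign every arc weight 1, and set RF-chain numbers r(p_l) = max(outdeg(p_l), 1), r(n_l) = max(outdeg(n_l), 1), r(r_l) = 1, r(q_k)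 = 1. Then Z is satisfiable if and only if D has a half-duplex subgraph containing exactly K + L arcs (i.e., of total weight K + L). -/
namespace S3

/-- Vertex set of the reduction digraph: `Sum.inl (l, i)` with `i = 0, 1, 2` is
`p_l`, `n_l`, `r_l` respectively, and `Sum.inr k` is the clause vertex `q_k`. -/
abbrev V3 (L K : ℕ) := (Fin L × Fin 3) ⊕ Fin K

/-- Arcs of the reduction digraph: `(p_l, q_k)` when `x_l ∈ C_k`,
`(n_l, q_k)` when `¬x_l ∈ C_k`, and `(r_l, p_l)`, `(r_l, n_l)` for every `l`.
A clause is a finite set of literals `(l, tt) = x_l`, `(l, ff) = ¬x_l`. -/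
def arc3 {L K : ℕ} (C : Fin K → Finset (Fin L × Bool)) : V3 L K → V3 L K → Prop :=
  fun a b =>
    match a, b with
    | Sum.inl (l, i), Sum.inr k =>
        (i.val = 0 ∧ (l, true) ∈ C k) ∨ (i.val = 1 ∧ (l, false) ∈ C k)
    | Sum.inl (l, i), Sum.inl (l', i') => i.val = 2 ∧ l = l' ∧ (i'.val = 0 ∨ i'.val = 1)
    | _, _ => False

/-- RF-chain numbers: `r(p_l) = max (outdeg p_l) 1`, `r(n_l) = max (outdeg n_l) 1`,
`r(r_l) = 1`, `r(q_k) = 1`. -/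
def r3 {L K : ℕ} (C : Fin K → Finset (Fin L × Bool)) : V3 L K → ℕ :=
  fun a =>
    match a with
    | Sum.inl (l, i) =>
        if i.val = 0 then max (Finset.univ.filter (fun k : Fin K => (l, true) ∈ C k)).card 1
        else if i.val = 1 then
          max (Finset.univ.filter (fun k : Fin K => (l, false) ∈ C k)).card 1
        else 1
    | Sum.inr _ => 1

/-- `J` is a half-duplex subgraph of the reduction digraph: a set of arcs such that
every vertex `v` is incident (as head or tail) to at most `r(v)` arcs of `J`,
and no vertex is both head of some arc of `J` and tail of some arc of `J`. -/
def isHDS {L K : ℕ} (C : Fin K → Finset (Fin L × Bool))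
    (J : Finset (V3 L K × V3 L K)) : Prop :=
  (∀ a ∈ J, arc3 C a.1 a.2) ∧
  (∀ v : V3 L K, (J.filter (fun a => a.1 = v ∨ a.2 = v)).card ≤ r3 C v) ∧
  (∀ v : V3 L K, (∃ a ∈ J, a.2 = v) → ∀ a ∈ J, a.1 ≠ v)

end S3

/-!
Call the `K + L` vertices `q_k` and `r_l` hubs. Every arc is incident to exactly one hub, and hubs
have RF-chain number `1`, so a half-duplex subgraph with `K + L` arcs uses exactly one arc at each
hub. Read the arc chosen at `r_l` as pointing to the literal of `x_l` that is made false: the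
half-duplex condition forbids a false literal to send an arc to a clause, so the arc chosen at `q_k`
comes from a true literal of `C_k`. Conversely, an assignment together with a true literal of each
clause determines one arc at each hub, and these arcs form a half-duplex subgraph.
-/

namespace S3

variable {L K : ℕ} {C : Fin K → Finset (Fin L × Bool)}

/-- The vertex of a literal: `p_l` for `(l, true)` and `n_l` for `(l, false)`. -/
def litVertex (x : Fin L × Bool) : V3 L K := Sum.inl (x.1, if x.2 then 0 else 1)

/-- The vertex `r_l` choosing which literal of the variable `l` is false. -/
def varVertex (l : Fin L) : V3 L K := Sum.inl (l, 2)

/-- The vertex `q_k` of the clause `k`. -/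
def clauseVertex (k : Fin K) : V3 L K := Sum.inr k

/-- The arc from a literal to a clause, an arc of the reduction digraph if the literal occurs in
the clause. -/
def clauseArc (x : Fin L × Bool) (k : Fin K) : V3 L K × V3 L K := (litVertex x, clauseVertex k)

/-- The arc from the vertex `r_l` to a literal of the variable `l`. -/
def varArc (x : Fin L × Bool) : V3 L K × V3 L K := (varVertex x.1, litVertex x)

/-- `v` is the tail or the head of the arc `e`. -/
abbrev Incident (e : V3 L K × V3 L K) (v : V3 L K) : Prop := e.1 = v ∨ e.2 = v

theorem litVertex_injective : Function.Injective (litVertex : Fin L × Bool → V3 L K) := by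
  rintro ⟨l, _ | _⟩ ⟨m, _ | _⟩ <;> simp [litVertex]

@[simp]
theorem litVertex_inj {x y : Fin L × Bool} : (litVertex x : V3 L K) = litVertex y ↔ x = y :=
  litVertex_injective.eq_iff

@[simp]
theorem varVertex_inj {l m : Fin L} : (varVertex l : V3 L K) = varVertex m ↔ l = m := by
  simp [varVertex]

@[simp]
theorem clauseVertex_inj {k m : Fin K} : (clauseVertex k : V3 L K) = clauseVertex m ↔ k = m :=
  Sum.inr_injective.eq_iff

@[simp]
theorem litVertex_ne_varVertex (x : Fin L × Bool) (l : Fin L) :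
    (litVertex x : V3 L K) ≠ varVertex l := by
  rcases x with ⟨m, _ | _⟩ <;> simp [litVertex, varVertex]

@[simp]
theorem varVertex_ne_litVertex (l : Fin L) (x : Fin L × Bool) :
    (varVertex l : V3 L K) ≠ litVertex x :=
  (litVertex_ne_varVertex x l).symm

@[simp]
theorem litVertex_ne_clauseVertex (x : Fin L × Bool) (k : Fin K) : litVertex x ≠ clauseVertex k :=
  Sum.inl_ne_inr

@[simp]
theorem clauseVertex_ne_litVertex (k : Fin K) (x : Fin L × Bool) : clauseVertex k ≠ litVertex x :=
  Sum.inr_ne_inl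

@[simp]
theorem varVertex_ne_clauseVertex (l : Fin L) (k : Fin K) : varVertex l ≠ clauseVertex k :=
  Sum.inl_ne_inr

@[simp]
theorem clauseVertex_ne_varVertex (k : Fin K) (l : Fin L) : clauseVertex k ≠ varVertex l :=
  Sum.inr_ne_inl

theorem eq_litVertex_or_varVertex_or_clauseVertex (v : V3 L K) :
    (∃ x, v = litVertex x) ∨ (∃ l, v = varVertex l) ∨ ∃ k, v = clauseVertex k := by
  rcases v with ⟨l, i⟩ | k
  · fin_cases i
    · exact .inl ⟨(l, true), rfl⟩
    · exact .inl ⟨(l, false), rfl⟩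
    · exact .inr (.inl ⟨l, rfl⟩)
  · exact .inr (.inr ⟨k, rfl⟩)

theorem arc3_litVertex_clauseVertex {x : Fin L × Bool} {k : Fin K} :
    arc3 C (litVertex x) (clauseVertex k) ↔ x ∈ C k := by
  rcases x with ⟨l, _ | _⟩ <;> simp [arc3, litVertex, clauseVertex]

theorem arc3_varVertex_litVertex {l : Fin L} {x : Fin L × Bool} :
    arc3 C (varVertex l) (litVertex x) ↔ l = x.1 := by
  rcases x with ⟨m, _ | _⟩ <;> simp [arc3, varVertex, litVertex]

theorem arc3_iff {e : V3 L K × V3 L K} :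
    arc3 C e.1 e.2 ↔ (∃ k, ∃ x ∈ C k, e = clauseArc x k) ∨ ∃ x, e = varArc x := by
  constructor
  · intro h
    obtain ⟨u, v⟩ := e
    obtain ⟨x, rfl⟩ | ⟨l, rfl⟩ | ⟨k, rfl⟩ := eq_litVertex_or_varVertex_or_clauseVertex u <;>
    obtain ⟨y, rfl⟩ | ⟨m, rfl⟩ | ⟨j, rfl⟩ := eq_litVertex_or_varVertex_or_clauseVertex v
    case inl.inr.inr => exact .inl ⟨j, x, arc3_litVertex_clauseVertex.1 h, rfl⟩
    case inr.inl.inl =>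
      obtain rfl := arc3_varVertex_litVertex.1 h
      exact .inr ⟨y, rfl⟩
    case inl.inl | inl.inr.inl =>
      rcases x with ⟨l, _ | _⟩ <;> simp [arc3, litVertex, varVertex] at h
    all_goals simp [arc3, varVertex, litVertex, clauseVertex] at h
  · rintro (⟨k, x, hx, rfl⟩ | ⟨x, rfl⟩)
    · exact arc3_litVertex_clauseVertex.2 hx
    · exact arc3_varVertex_litVertex.2 rfl

theorem r3_litVertex (x : Fin L × Bool) :
    r3 C (litVertex x) = max (Finset.univ.filter fun k => x ∈ C k).card 1 := by
  rcases x with ⟨l, _ | _⟩ <;> simp [r3, litVertex]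

/-- The clause vertices `q_k` and the variable vertices `r_l`, at exactly one of which each arc of
the reduction digraph is incident. -/
def hub : Fin K ⊕ Fin L → V3 L K := Sum.elim clauseVertex varVertex

/-- The index of the hub of an arc, read off from the head of the arc. -/
def hubIndex (e : V3 L K × V3 L K) : Fin K ⊕ Fin L :=
  Sum.elim (fun y => Sum.inr y.1) Sum.inl e.2

@[simp]
theorem hubIndex_clauseArc (x : Fin L × Bool) (k : Fin K) : hubIndex (clauseArc x k) = Sum.inl k :=
  rfl

@[simp]
theorem hubIndex_varArc (x : Fin L × Bool) :
    hubIndex (varArc x : V3 L K × V3 L K) = Sum.inr x.1 :=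
  rfl

theorem r3_hub (i : Fin K ⊕ Fin L) : r3 C (hub i) = 1 := by
  rcases i with k | l <;> rfl

theorem incident_hub_hubIndex {e : V3 L K × V3 L K} (he : arc3 C e.1 e.2) :
    Incident e (hub (hubIndex e)) := by
  obtain ⟨k, x, -, rfl⟩ | ⟨x, rfl⟩ := arc3_iff.1 he
  · exact .inr rfl
  · exact .inl rfl

namespace isHDS

variable {J : Finset (V3 L K × V3 L K)}

theorem eq_of_incident (hJ : isHDS C J) {v : V3 L K} (hv : r3 C v = 1) {e f : V3 L K × V3 L K}
    (he : e ∈ J) (hf : f ∈ J) (hev : Incident e v) (hfv : Incident f v) : e = f :=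
  Finset.card_le_one.1 ((hJ.2.1 v).trans_eq hv) e (Finset.mem_filter.2 ⟨he, hev⟩)
    f (Finset.mem_filter.2 ⟨hf, hfv⟩)

theorem injOn_hubIndex (hJ : isHDS C J) : Set.InjOn hubIndex (J : Set (V3 L K × V3 L K)) := by
  intro e he f hf hef
  have hfe : Incident f (hub (hubIndex e)) := hef ▸ incident_hub_hubIndex (hJ.1 f hf)
  exact hJ.eq_of_incident (r3_hub _) he hf (incident_hub_hubIndex (hJ.1 e he)) hfe

theorem exists_mem_hubIndex_eq (hJ : isHDS C J) (hcard : J.card = K + L) (i : Fin K ⊕ Fin L) :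
    ∃ e ∈ J, hubIndex e = i := by
  have himage : J.image hubIndex = Finset.univ := by
    apply Finset.eq_univ_of_card
    rw [Finset.card_image_of_injOn hJ.injOn_hubIndex, hcard, Fintype.card_sum, Fintype.card_fin,
      Fintype.card_fin]
  exact Finset.mem_image.1 (himage ▸ Finset.mem_univ i)

theorem exists_clauseArc_mem (hJ : isHDS C J) (hcard : J.card = K + L) (k : Fin K) :
    ∃ x ∈ C k, clauseArc x k ∈ J := by
  obtain ⟨e, he, hek⟩ := hJ.exists_mem_hubIndex_eq hcard (Sum.inl k)
  obtain ⟨j, x, hx, rfl⟩ | ⟨x, rfl⟩ := arc3_iff.1 (hJ.1 e he)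
  · obtain rfl : j = k := by simpa using hek
    exact ⟨x, hx, he⟩
  · simp at hek

theorem exists_varArc_mem (hJ : isHDS C J) (hcard : J.card = K + L) (l : Fin L) :
    ∃ b, varArc (l, b) ∈ J := by
  obtain ⟨e, he, hel⟩ := hJ.exists_mem_hubIndex_eq hcard (Sum.inr l)
  obtain ⟨k, x, -, rfl⟩ | ⟨⟨m, b⟩, rfl⟩ := arc3_iff.1 (hJ.1 e he)
  · simp at hel
  · obtain rfl : m = l := by simpa using hel
    exact ⟨b, he⟩

theorem clauseArc_notMem (hJ : isHDS C J) {x : Fin L × Bool} (hx : varArc x ∈ J) (k : Fin K) :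
    clauseArc x k ∉ J :=
  fun hxk => hJ.2.2 (litVertex x) ⟨_, hx, rfl⟩ _ hxk rfl

theorem exists_satisfying (hJ : isHDS C J) (hcard : J.card = K + L) :
    ∃ a : Fin L → Bool, ∀ k, ∃ x ∈ C k, a x.1 = x.2 := by
  choose b hb using hJ.exists_varArc_mem hcard
  refine ⟨fun l => !b l, fun k => ?_⟩
  obtain ⟨⟨l, c⟩, hx, hxk⟩ := hJ.exists_clauseArc_mem hcard k
  have hne : b l ≠ c := by
    rintro rfl
    exact hJ.clauseArc_notMem (hb l) k hxk
  exact ⟨(l, c), hx, Bool.not_eq.2 hne⟩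

end isHDS

section Witness

variable {a : Fin L → Bool} {s : Fin K → Fin L × Bool}

/-- The arc chosen at each hub, given an assignment `a` and a literal `s k` of each clause `k`:
`q_k` receives an arc from `s k`, and `r_l` sends one to the literal of `l` that is false
under `a`. -/
def witnessArc (a : Fin L → Bool) (s : Fin K → Fin L × Bool) : Fin K ⊕ Fin L → V3 L K × V3 L K :=
  Sum.elim (fun k => clauseArc (s k) k) (fun l => varArc (l, !a l))

theorem hubIndex_witnessArc (a : Fin L → Bool) (s : Fin K → Fin L × Bool) :
    Function.LeftInverse hubIndex (witnessArc a s) := by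
  rintro (k | l) <;> rfl

theorem card_image_witnessArc (a : Fin L → Bool) (s : Fin K → Fin L × Bool) :
    (Finset.univ.image (witnessArc a s)).card = K + L := by
  rw [Finset.card_image_of_injective _ (hubIndex_witnessArc a s).injective, Finset.card_univ,
    Fintype.card_sum, Fintype.card_fin, Fintype.card_fin]

theorem arc3_witnessArc (hs : ∀ k, s k ∈ C k) (i : Fin K ⊕ Fin L) :
    arc3 C (witnessArc a s i).1 (witnessArc a s i).2 := by
  rcases i with k | l
  · exact arc3_iff.2 (.inl ⟨k, s k, hs k, rfl⟩)
  · exact arc3_iff.2 (.inr ⟨(l, !a l), rfl⟩)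

theorem incident_witnessArc_hub {i j : Fin K ⊕ Fin L} :
    Incident (witnessArc a s i) (hub j) ↔ i = j := by
  rcases i with k | l <;> rcases j with k' | l' <;>
    simp [Incident, witnessArc, clauseArc, varArc, hub]

theorem incident_witnessArc_litVertex {i : Fin K ⊕ Fin L} {x : Fin L × Bool} :
    Incident (witnessArc a s i) (litVertex x) ↔
      (∃ k, i = Sum.inl k ∧ s k = x) ∨ ∃ l, i = Sum.inr l ∧ (l, !a l) = x := by
  rcases i with k | l <;> simp [Incident, witnessArc, clauseArc, varArc]

theorem card_incident_witnessArc_hub (j : Fin K ⊕ Fin L) :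
    (Finset.univ.filter fun i => Incident (witnessArc a s i) (hub j)).card = 1 := by
  simp only [incident_witnessArc_hub, Finset.filter_eq', Finset.mem_univ, if_true,
    Finset.card_singleton]

theorem card_incident_witnessArc_litVertex_le_of_eq (hs : ∀ k, s k ∈ C k) {x : Fin L × Bool}
    (hx : a x.1 = x.2) :
    (Finset.univ.filter fun i => Incident (witnessArc a s i) (litVertex x)).card ≤
      (Finset.univ.filter fun k => x ∈ C k).card := by
  rw [← Finset.card_map (s := Finset.univ.filter fun k => x ∈ C k) Function.Embedding.inl]
  refine Finset.card_le_card fun i hi => ?_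
  obtain ⟨k, rfl, rfl⟩ | ⟨l, -, rfl⟩ :=
    incident_witnessArc_litVertex.1 (Finset.mem_filter.1 hi).2
  · simpa using hs k
  · simp at hx

theorem card_incident_witnessArc_litVertex_le_one_of_ne (ha : ∀ k, a (s k).1 = (s k).2)
    {x : Fin L × Bool} (hx : a x.1 ≠ x.2) :
    (Finset.univ.filter fun i => Incident (witnessArc a s i) (litVertex x)).card ≤ 1 := by
  rw [← Finset.card_singleton (Sum.inr x.1)]
  refine Finset.card_le_card fun i hi => ?_
  obtain ⟨k, -, rfl⟩ | ⟨l, rfl, rfl⟩ :=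
    incident_witnessArc_litVertex.1 (Finset.mem_filter.1 hi).2
  · exact absurd (ha k) hx
  · exact Finset.mem_singleton_self _

theorem card_incident_witnessArc_le_r3 (hs : ∀ k, s k ∈ C k) (ha : ∀ k, a (s k).1 = (s k).2)
    (v : V3 L K) : (Finset.univ.filter fun i => Incident (witnessArc a s i) v).card ≤ r3 C v := by
  obtain ⟨x, rfl⟩ | ⟨l, rfl⟩ | ⟨k, rfl⟩ := eq_litVertex_or_varVertex_or_clauseVertex v
  · rw [r3_litVertex]
    by_cases hx : a x.1 = x.2
    · exact le_max_of_le_left (card_incident_witnessArc_litVertex_le_of_eq hs hx)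
    · exact le_max_of_le_right (card_incident_witnessArc_litVertex_le_one_of_ne ha hx)
  · exact (card_incident_witnessArc_hub (Sum.inr l)).le
  · exact (card_incident_witnessArc_hub (Sum.inl k)).le

theorem witnessArc_fst_ne_snd (ha : ∀ k, a (s k).1 = (s k).2) (i j : Fin K ⊕ Fin L) :
    (witnessArc a s i).1 ≠ (witnessArc a s j).2 := by
  have hne (k : Fin K) (l : Fin L) : s k ≠ (l, !a l) := by
    intro h
    simpa [h] using ha k
  rcases i with k | l <;> rcases j with k' | l' <;> simp [witnessArc, clauseArc, varArc, hne]

theorem isHDS_image_witnessArc (hs : ∀ k, s k ∈ C k) (ha : ∀ k, a (s k).1 = (s k).2) :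
    isHDS C (Finset.univ.image (witnessArc a s)) := by
  refine ⟨?arcs, fun v => ?degrees, ?halfDuplex⟩
  case arcs => exact Finset.forall_mem_image.2 fun i _ => arc3_witnessArc hs i
  case degrees =>
    rw [Finset.filter_image]
    exact Finset.card_image_le.trans (card_incident_witnessArc_le_r3 hs ha v)
  case halfDuplex =>
    rintro v ⟨e, he, rfl⟩ f hf
    obtain ⟨j, -, rfl⟩ := Finset.mem_image.1 he
    obtain ⟨i, -, rfl⟩ := Finset.mem_image.1 hf
    exact witnessArc_fst_ne_snd ha i j

end Witness

end S3

/-- A CNF formula `Z` (clauses `C k`, all nonempty) is satisfiable iff the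
reduction digraph has a half-duplex subgraph with exactly `K + L` arcs. -/
theorem sat_iff_halfduplex_subgraph_card
    (L K : ℕ) (C : Fin K → Finset (Fin L × Bool)) (hCne : ∀ k, (C k).Nonempty) :
    (∃ a : Fin L → Bool, ∀ k, ∃ p ∈ C k, a p.1 = p.2) ↔
    (∃ J : Finset (S3.V3 L K × S3.V3 L K), S3.isHDS C J ∧ J.card = K + L) := by
  constructor
  · rintro ⟨a, hsat⟩
    choose s hs ha using hsat
    exact ⟨_, S3.isHDS_image_witnessArc hs ha, S3.card_image_witnessArc a s⟩
  · rintro ⟨J, hJ, hcard⟩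
    exact hJ.exists_satisfying hcard
end

section
/- Let D be a directed network in which, for each ordered pair (u,v) joined in the link network L, there are exactly d(u,v) = min(r(u), r(v)) parallel arcs from u to v (the MAX-SU-SM model). Define the sparse expanded network H as the digraph with vertex set {(v,i) : v a vertex of D, 1 ≤ i ≤ r(v)} and, for each link (u,v) of L, arcs ((u,j),(v,k)) for all 1 ≤ j ≤ r(u), 1 ≤ k ≤ r(v) if r(u) ≠ r(v), and only the diagonal arcs ((u,j),(v,j)) for 1 ≤ j ≤ r(u) if r(u) = r(v). Then for every half-duplex subgraph J of D there exists a matching M in H (a set of arcs of H no two of which share a vertex of H) such that, for every link (u,v), the number of arcs of M going from a copy of u to a copy of v equals the number of parallel arcs from u to v in J. -/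
/-!
The arcs of a half-duplex subgraph have their tails in one set of vertices and their heads in a
disjoint one, so they form a bipartite multigraph. The links whose ends have the same number `k` of
RF chains form a bipartite multigraph of maximum degree at most `k`, which by König's theorem has a
proper edge coloring with `k` colors: an arc of color `i` is sent to the diagonal arc joining the
`i`-th copies of its ends. Any remaining arc joins vertices with different numbers of RF chains, so
its ends may be chosen independently among the copies still free, and the degree bound leaves enough
of them.
-/

open Finset Function

section RegularMatrix

variable {α β : Type*} [Fintype α] [Fintype β] {A : Matrix α β ℕ} {k : ℕ}

theorem card_eq_card_of_row_sums_of_col_sums (hk : 0 < k)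
    (hrow : ∀ i, ∑ j, A i j = k) (hcol : ∀ j, ∑ i, A i j = k) :
    Fintype.card α = Fintype.card β := by
  have htotal : ∑ i, ∑ j, A i j = ∑ j, ∑ i, A i j := sum_comm
  simpa [hrow, hcol, hk.ne'] using htotal

theorem card_le_card_biUnion_support_of_row_sums_of_col_sums [DecidableEq β] (hk : 0 < k)
    (hrow : ∀ i, ∑ j, A i j = k) (hcol : ∀ j, ∑ i, A i j = k) (s : Finset α) :
    #s ≤ #(s.biUnion fun i => {j | A i j ≠ 0}) := by
  set N := s.biUnion fun i => ({j | A i j ≠ 0} : Finset β)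
  have hsupport : ∀ i ∈ s, ∑ j ∈ N, A i j = k := fun i hi => by
    rw [← hrow i]
    refine sum_subset (subset_univ N) fun j _ hj => ?_
    by_contra hij
    exact hj (mem_biUnion.2 ⟨i, hi, by simpa using hij⟩)
  refine Nat.le_of_mul_le_mul_right ?_ hk
  calc #s * k = ∑ i ∈ s, ∑ j ∈ N, A i j := by simp [sum_congr rfl hsupport]
    _ = ∑ j ∈ N, ∑ i ∈ s, A i j := sum_comm
    _ ≤ ∑ j ∈ N, ∑ i, A i j := sum_le_sum fun j _ => sum_le_sum_of_subset (subset_univ s)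
    _ = #N * k := by simp [hcol]

theorem exists_equiv_forall_apply_ne_zero (hk : 0 < k)
    (hrow : ∀ i, ∑ j, A i j = k) (hcol : ∀ j, ∑ i, A i j = k) :
    ∃ σ : α ≃ β, ∀ i, A i (σ i) ≠ 0 := by
  classical
  obtain ⟨f, hf, hfA⟩ := (all_card_le_biUnion_card_iff_exists_injective _).1
    (card_le_card_biUnion_support_of_row_sums_of_col_sums hk hrow hcol)
  have hcard := card_eq_card_of_row_sums_of_col_sums hk hrow hcol
  exact ⟨.ofBijective f ((Fintype.bijective_iff_injective_and_card f).2 ⟨hf, hcard⟩),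
    fun i => by simpa using hfA i⟩

theorem exists_equivs_card_filter_eq [DecidableEq β]
    (hrow : ∀ i, ∑ j, A i j = k) (hcol : ∀ j, ∑ i, A i j = k) :
    ∃ σ : Fin k → α ≃ β, ∀ i j, #{c | σ c i = j} = A i j := by
  induction k generalizing A with
  | zero => exact ⟨Fin.elim0, fun i j => by
      simp [sum_eq_zero_iff.1 (hrow i) j (mem_univ j)]⟩
  | succ k ih =>
    obtain ⟨τ, hτ⟩ := exists_equiv_forall_apply_ne_zero k.succ_pos hrow hcol
    let B : Matrix α β ℕ := fun i j => A i j - if τ i = j then 1 else 0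
    have hAB : ∀ i j, A i j = B i j + if τ i = j then 1 else 0 := fun i j => by
      refine (Nat.sub_add_cancel ?_).symm
      split_ifs with hij
      · exact hij ▸ Nat.one_le_iff_ne_zero.2 (hτ i)
      · exact Nat.zero_le _
    have hBrow : ∀ i, ∑ j, B i j = k := fun i => by
      simpa [hAB, sum_add_distrib] using hrow i
    have hBcol : ∀ j, ∑ i, B i j = k := fun j => by
      have hτj : ∑ i, (if τ i = j then 1 else 0) = 1 := by
        rw [τ.sum_comp fun j' => if j' = j then 1 else 0]
        simp
      simpa only [hAB, sum_add_distrib, hτj, Nat.add_right_cancel_iff] using hcol j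
    obtain ⟨σ, hσ⟩ := ih hBrow hBcol
    refine ⟨Fin.cons τ σ, fun i j => ?_⟩
    rw [Fin.card_filter_univ_succ, hAB, ← hσ]
    split_ifs <;> simp_all

theorem exists_equivs_card_filter_inl_eq [DecidableEq α] [DecidableEq β]
    (hrow : ∀ i, ∑ j, A i j ≤ k) (hcol : ∀ j, ∑ i, A i j ≤ k) :
    ∃ σ : Fin k → α ⊕ β ≃ β ⊕ α, ∀ i j, #{c | σ c (.inl i) = .inl j} = A i j := by
  -- The diagonal blocks hold the deficits of the rows and columns of `A`.
  let B : Matrix (α ⊕ β) (β ⊕ α) ℕ := .fromBlocks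
    A (.diagonal fun i => k - ∑ j, A i j) (.diagonal fun j => k - ∑ i, A i j) A.transpose
  have hBrow : ∀ x, ∑ y, B x y = k := by
    rintro (i | j)
    · simp [B, Matrix.diagonal_apply, Nat.add_sub_cancel' (hrow i)]
    · simp [B, Matrix.diagonal_apply, Nat.sub_add_cancel (hcol j)]
  have hBcol : ∀ y, ∑ x, B x y = k := by
    rintro (j | i)
    · simp [B, Matrix.diagonal_apply, Nat.add_sub_cancel' (hcol j)]
    · simp [B, Matrix.diagonal_apply, Nat.sub_add_cancel (hrow i)]
  obtain ⟨σ, hσ⟩ := exists_equivs_card_filter_eq hBrow hBcol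
  exact ⟨σ, fun i j => hσ (.inl i) (.inl j)⟩

end RegularMatrix

section PortAssignment

variable {E V W β : Type*}

/-- A placement of the arcs in `F` onto ports of their endpoints: `p` attaches the arc `e` to the
port `p e` of the vertex `s e`, whose available ports are `S (s e)`, and no two arcs of `F` share
a port of the same vertex. The values of `p` outside `F` are irrelevant. -/
structure IsPortAssignmentOn (S : V → Finset β) (s : E → V) (p : E → β) (F : Finset E) :
    Prop where
  mem : ∀ e ∈ F, p e ∈ S (s e)
  injOn : Set.InjOn (fun e => (s e, p e)) F

theorem exists_injOn_extend_of_card_le [Nonempty β] {F G : Finset E} {T : Finset β} {f : E → β}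
    (hFG : F ⊆ G) (hcard : #G ≤ #T) (hfT : ∀ e ∈ F, f e ∈ T) (hf : Set.InjOn f F) :
    ∃ g, (∀ e ∈ G, g e ∈ T) ∧ Set.InjOn g G ∧ Set.EqOn g f F := by
  classical
  have hrest : #(G \ F) ≤ #(T \ F.image f) := by
    rw [card_sdiff_of_subset hFG, card_sdiff_of_subset (image_subset_iff.2 hfT),
      card_image_of_injOn hf]
    exact Nat.sub_le_sub_right hcard _
  obtain ⟨h, hhT, hh⟩ := (G \ F).finite_toSet.exists_injOn_of_encard_le
    (t := (↑(T \ F.image f) : Set β))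
    (by simpa only [Set.encard_coe_eq_coe_finsetCard, Nat.cast_le])
  have hhT' : ∀ e ∈ G, e ∉ F → h e ∈ T ∧ h e ∉ F.image f := fun e heG heF =>
    mem_sdiff.1 (hhT (mem_coe.2 (mem_sdiff.2 ⟨heG, heF⟩)))
  refine ⟨F.piecewise f h, fun e he => ?_, ?_, fun e he => F.piecewise_eq_of_mem f h he⟩
  · by_cases heF : e ∈ F <;> simp [heF, hfT, hhT' e he]
  · intro e he e' he' hee'
    by_cases heF : e ∈ F <;> by_cases heF' : e' ∈ F <;> simp only [heF, heF', not_false_eq_true,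
      piecewise_eq_of_mem, piecewise_eq_of_notMem] at hee'
    · exact hf heF heF' hee'
    · exact absurd (hee' ▸ mem_image_of_mem f heF) (hhT' e' he' heF').2
    · exact absurd (hee' ▸ mem_image_of_mem f heF') (hhT' e he heF).2
    · exact hh (mem_sdiff.2 ⟨he, heF⟩) (mem_sdiff.2 ⟨he', heF'⟩) hee'

theorem IsPortAssignmentOn.exists_extend [Nonempty β] [DecidableEq V] {S : V → Finset β}
    {s : E → V} {p : E → β} {F G : Finset E} (hp : IsPortAssignmentOn S s p F) (hFG : F ⊆ G)
    (hs : ∀ v, #{e ∈ G | s e = v} ≤ #(S v)) :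
    ∃ q, IsPortAssignmentOn S s q G ∧ Set.EqOn q p F := by
  have hfiber : ∀ v, ∃ g : E → β, (∀ e ∈ ({e ∈ G | s e = v} : Finset E), g e ∈ S v) ∧
      Set.InjOn g ({e ∈ G | s e = v} : Finset E) ∧
      Set.EqOn g p ({e ∈ F | s e = v} : Finset E) := fun v => by
    refine exists_injOn_extend_of_card_le (filter_subset_filter _ hFG) (hs v) ?_ ?_
    · simp only [mem_filter]
      rintro e ⟨he, rfl⟩
      exact hp.mem e he
    · intro e he e' he' hee'
      simp only [coe_filter, Set.mem_ofPred_eq] at he he'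
      exact hp.injOn he.1 he'.1 (Prod.ext (he.2.trans he'.2.symm) hee')
  choose g hgS hg_inj hgp using hfiber
  refine ⟨fun e => g (s e) e, ⟨fun e he => hgS _ e (by simpa using he), ?_⟩,
    fun e he => hgp _ (by simpa using he)⟩
  intro e he e' he' hee'
  simp only [Prod.mk.injEq] at hee'
  obtain ⟨hse, hge⟩ := hee'
  rw [← hse] at hge
  exact hg_inj (s e) (by simpa using he) (by simpa [hse] using he') hge

theorem exists_isPortAssignmentOn [Nonempty β] [DecidableEq V] {S : V → Finset β} {s : E → V}
    {F : Finset E} (hs : ∀ v, #{e ∈ F | s e = v} ≤ #(S v)) :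
    ∃ p, IsPortAssignmentOn S s p F := by
  have hempty : IsPortAssignmentOn S s (fun _ => Classical.arbitrary β) ∅ := ⟨by simp, by simp⟩
  obtain ⟨p, hp, -⟩ := hempty.exists_extend (empty_subset F) hs
  exact ⟨p, hp⟩

theorem exists_equivs_card_filter_inl_eq_card_parallel [Finite V] [Finite W] [DecidableEq V]
    [DecidableEq W] {k : ℕ} {s : E → V} {t : E → W} {F : Finset E}
    (hs : ∀ v, #{e ∈ F | s e = v} ≤ k) (ht : ∀ w, #{e ∈ F | t e = w} ≤ k) :
    ∃ σ : Fin k → V ⊕ W ≃ W ⊕ V,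
      ∀ v w, #{c | σ c (.inl v) = .inl w} = #{e ∈ F | s e = v ∧ t e = w} := by
  have := Fintype.ofFinite V
  have := Fintype.ofFinite W
  let A : Matrix V W ℕ := fun v w => #{e ∈ F | s e = v ∧ t e = w}
  have hArow : ∀ v, ∑ w, A v w ≤ k := fun v => by
    simpa only [A, ← filter_filter, sum_card_fiberwise_eq_card_filter, mem_univ, filter_true]
      using hs v
  have hAcol : ∀ w, ∑ v, A v w ≤ k := fun w => by
    have hA : ∀ v, A v w = #{e ∈ {e ∈ F | t e = w} | s e = v} := fun v => by
      simp only [A, filter_filter, and_comm]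
    simpa only [hA, sum_card_fiberwise_eq_card_filter, mem_univ, filter_true] using ht w
  exact exists_equivs_card_filter_inl_eq hArow hAcol

theorem exists_bipartite_edge_coloring [Finite V] [Finite W] [DecidableEq V] [DecidableEq W]
    {k : ℕ} {s : E → V} {t : E → W} {F : Finset E}
    (hs : ∀ v, #{e ∈ F | s e = v} ≤ k) (ht : ∀ w, #{e ∈ F | t e = w} ≤ k) :
    ∃ c, IsPortAssignmentOn (fun _ => range k) s c F ∧
      IsPortAssignmentOn (fun _ => range k) t c F := by
  obtain ⟨σ, hσ⟩ := exists_equivs_card_filter_inl_eq_card_parallel hs ht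
  let colors (x : V × W) : Finset ℕ :=
    ({c | σ c (.inl x.1) = .inl x.2} : Finset (Fin k)).map Fin.valEmbedding
  have hcolors : ∀ x, #{e ∈ F | (s e, t e) = x} ≤ #(colors x) := fun x => by
    simp [colors, hσ, Prod.ext_iff]
  obtain ⟨c, hc⟩ := exists_isPortAssignmentOn hcolors
  have hcσ : ∀ e ∈ F, ∃ i : Fin k, σ i (.inl (s e)) = .inl (t e) ∧ i = c e := fun e he => by
    simpa [colors] using hc.mem e he
  have hc_mem : ∀ e ∈ F, c e ∈ range k := fun e he => by
    obtain ⟨i, -, hi⟩ := hcσ e he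
    exact mem_range.2 (hi ▸ i.isLt)
  have hc_iff : ∀ e ∈ F, ∀ e' ∈ F, c e = c e' → (s e = s e' ↔ t e = t e') := by
    intro e he e' he' hcc
    obtain ⟨i, hi, hic⟩ := hcσ e he
    obtain ⟨i', hi', hic'⟩ := hcσ e' he'
    obtain rfl : i = i' := Fin.ext (hic.trans (hcc.trans hic'.symm))
    rw [← Sum.inl_injective.eq_iff (b := t e'), ← hi, ← hi', (σ i).apply_eq_iff_eq,
      Sum.inl_injective.eq_iff]
  refine ⟨c, ⟨hc_mem, fun e he e' he' hee' => ?_⟩, ⟨hc_mem, fun e he e' he' hee' => ?_⟩⟩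
  · obtain ⟨hse, hcc⟩ := Prod.ext_iff.1 hee'
    exact hc.injOn he he' (Prod.ext (Prod.ext hse ((hc_iff e he e' he' hcc).1 hse)) hcc)
  · obtain ⟨hte, hcc⟩ := Prod.ext_iff.1 hee'
    exact hc.injOn he he' (Prod.ext (Prod.ext ((hc_iff e he e' he' hcc).2 hte) hte) hcc)

theorem card_filter_le_of_forall_eq [DecidableEq V] {r : V → ℕ} {s : E → V} {F G : Finset E}
    {k : ℕ} (hFG : F ⊆ G) (hF : ∀ e ∈ F, r (s e) = k) (hs : ∀ v, #{e ∈ G | s e = v} ≤ r v) (v : V) :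
    #{e ∈ F | s e = v} ≤ k := by
  obtain hempty | ⟨e, he⟩ := ({e ∈ F | s e = v} : Finset E).eq_empty_or_nonempty
  · simp [hempty]
  · obtain ⟨heF, rfl⟩ := mem_filter.1 he
    exact hF e heF ▸ (card_le_card (filter_subset_filter _ hFG)).trans (hs (s e))

theorem IsPortAssignmentOn.of_level_sets {κ : Type*} [DecidableEq κ] {T : κ → Finset β}
    {r : V → κ} {s : E → V} {ρ : E → κ} {c : κ → E → β} {F : Finset E}
    (hρ : ∀ e ∈ F, r (s e) = ρ e)
    (hc : ∀ k, IsPortAssignmentOn (fun _ => T k) s (c k) {e ∈ F | ρ e = k}) :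
    IsPortAssignmentOn (T ∘ r) s (fun e => c (ρ e) e) F where
  mem e he := by
    rw [comp_apply, hρ e he]
    exact (hc (ρ e)).mem e (by simpa using he)
  injOn e he e' he' hee' := by
    simp only [Prod.mk.injEq] at hee'
    obtain ⟨hse, hce⟩ := hee'
    have hρe : ρ e' = ρ e := by rw [← hρ e he, ← hρ e' he', hse]
    refine (hc (ρ e)).injOn (by simpa using he) (by simpa [hρe] using he') (Prod.ext hse ?_)
    exact hce.trans (congrArg (c · e') hρe)

theorem exists_common_isPortAssignmentOn [Finite V] [Finite W] [DecidableEq V] [DecidableEq W]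
    {a : V → ℕ} {b : W → ℕ} {s : E → V} {t : E → W} {F : Finset E}
    (hab : ∀ e ∈ F, a (s e) = b (t e))
    (hs : ∀ v, #{e ∈ F | s e = v} ≤ a v) (ht : ∀ w, #{e ∈ F | t e = w} ≤ b w) :
    ∃ c, IsPortAssignmentOn (range ∘ a) s c F ∧ IsPortAssignmentOn (range ∘ b) t c F := by
  let level (k : ℕ) : Finset E := {e ∈ F | a (s e) = k}
  have hlevel_subset : ∀ k, level k ⊆ F := fun k => filter_subset _ F
  have hlevel_a : ∀ k, ∀ e ∈ level k, a (s e) = k := fun k e he => (mem_filter.1 he).2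
  have hlevel_b : ∀ k, ∀ e ∈ level k, b (t e) = k := fun k e he =>
    (hab e (hlevel_subset k he)).symm.trans (hlevel_a k e he)
  choose c hcs hct using fun k => exists_bipartite_edge_coloring
    (card_filter_le_of_forall_eq (hlevel_subset k) (hlevel_a k) hs)
    (card_filter_le_of_forall_eq (hlevel_subset k) (hlevel_b k) ht)
  exact ⟨fun e => c (a (s e)) e, .of_level_sets (fun _ _ => rfl) hcs,
    .of_level_sets (fun e he => (hab e he).symm) hct⟩

theorem exists_isPortAssignmentOn_eq_of_eq [Finite V] [Finite W] [DecidableEq V]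
    [DecidableEq W] {a : V → ℕ} {b : W → ℕ} {s : E → V} {t : E → W} {F : Finset E}
    (hs : ∀ v, #{e ∈ F | s e = v} ≤ a v) (ht : ∀ w, #{e ∈ F | t e = w} ≤ b w) :
    ∃ p q, IsPortAssignmentOn (range ∘ a) s p F ∧ IsPortAssignmentOn (range ∘ b) t q F ∧
      ∀ e ∈ F, a (s e) = b (t e) → p e = q e := by
  let B : Finset E := {e ∈ F | a (s e) = b (t e)}
  have hBF : B ⊆ F := filter_subset _ F
  obtain ⟨c, hcs, hct⟩ := exists_common_isPortAssignmentOn (F := B)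
    (fun e he => (mem_filter.1 he).2)
    (fun v => (card_le_card (filter_subset_filter _ hBF)).trans (hs v))
    (fun w => (card_le_card (filter_subset_filter _ hBF)).trans (ht w))
  obtain ⟨p, hp, hpc⟩ := hcs.exists_extend hBF (by simpa using hs)
  obtain ⟨q, hq, hqc⟩ := hct.exists_extend hBF (by simpa using ht)
  refine ⟨p, q, hp, hq, fun e he hab => ?_⟩
  have heB : e ∈ B := mem_filter.2 ⟨he, hab⟩
  exact (hpc heB).trans (hqc heB).symm

/-- The copy `(s e, p e)` of the endpoint `s e` in the expanded network, whose vertices are the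
copies `(v, i)` with `i < r v`. -/
def IsPortAssignmentOn.copy [Fintype E] {r : V → ℕ} {s : E → V} {p : E → ℕ}
    (hp : IsPortAssignmentOn (range ∘ r) s p univ) (e : E) : Σ v, Fin (r v) :=
  ⟨s e, p e, mem_range.1 (hp.mem e (mem_univ e))⟩

theorem IsPortAssignmentOn.copy_injective [Fintype E] {r : V → ℕ} {s : E → V} {p : E → ℕ}
    (hp : IsPortAssignmentOn (range ∘ r) s p univ) : Injective hp.copy := fun e e' hee' =>
  hp.injOn (mem_univ e) (mem_univ e') <|
    congrArg (fun x : Σ v, Fin (r v) => (x.1, (x.2 : ℕ))) hee'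

end PortAssignment

/-- The arcs of the multigraph with `m u w` parallel arcs from `u : V` to `w : W`. -/
abbrev Arc {V W : Type*} (m : V → W → ℕ) : Type _ := Σ a : V × W, Fin (m a.1 a.2)

namespace Arc

variable {V W : Type*} {m : V → W → ℕ}

/-- The vertex an arc leaves. -/
abbrev tail (e : Arc m) : V := e.1.1

/-- The vertex an arc enters. -/
abbrev head (e : Arc m) : W := e.1.2

theorem multiplicity_pos (e : Arc m) : 0 < m e.tail e.head := e.2.pos

theorem tail_ne_head [Fintype V] {m : V → V → ℕ}
    (hhd : ∀ v, 0 < ∑ u, m u v → ∑ u, m v u = 0) (e e' : Arc m) : e.tail ≠ e'.head := by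
  intro hee'
  have hin : 0 < ∑ u, m u e.tail :=
    sum_pos_iff.2 ⟨e'.tail, mem_univ _, hee' ▸ e'.multiplicity_pos⟩
  exact e.multiplicity_pos.ne' (sum_eq_zero_iff.1 (hhd e.tail hin) e.head (mem_univ _))

variable [Fintype V] [Fintype W] (m)

theorem card_filter_endpoints (P : V × W → Prop) [DecidablePred P] :
    #{e : Arc m | P e.1} = ∑ a with P a, m a.1 a.2 := by
  have hsigma : ({e | P e.1} : Finset (Arc m)) =
      ({a | P a} : Finset (V × W)).sigma fun _ => univ := by
    ext e
    simp
  simp [hsigma]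

theorem card_filter_tail [DecidableEq V] (u : V) : #{e : Arc m | e.tail = u} = ∑ w, m u w := by
  simp [card_filter_endpoints m fun a => a.1 = u, sum_filter, Fintype.sum_prod_type]

theorem card_filter_head [DecidableEq W] (w : W) : #{e : Arc m | e.head = w} = ∑ u, m u w := by
  simp [card_filter_endpoints m fun a => a.2 = w, sum_filter, Fintype.sum_prod_type]

theorem card_filter_tail_head [DecidableEq V] [DecidableEq W] (u : V) (w : W) :
    #{e : Arc m | e.tail = u ∧ e.head = w} = m u w := by
  simp [card_filter_endpoints m fun a => a.1 = u ∧ a.2 = w, sum_filter, Fintype.sum_prod_type,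
    ite_and]

end Arc

/-- Let `D` be a directed network under the MAX-SU-SM model (link network
with adjacency `Adj`, `min (r u) (r v)` parallel arcs per link), and let `H` be the
sparse expanded network on vertices `Σ v, Fin (r v)` (all `r u · r v` arcs per link if
`r u ≠ r v`, only the diagonal arcs if `r u = r v`).  Every half-duplex subgraph of `D`
(given by its arc multiplicities `m`) is represented by a matching `M` in `H`: for
every link `(u,v)`, the number of arcs of `M` from a copy of `u` to a copy of `v`
equals `m u v`. -/
theorem halfduplex_subgraph_as_matching_in_sparse_expanded_network
    (V : Type) [Fintype V] [DecidableEq V]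
    (r : V → ℕ) (hr : ∀ v, 1 ≤ r v)
    (Adj : V → V → Prop) (hirr : ∀ v, ¬ Adj v v)
    (m : V → V → ℕ)
    (hsupp : ∀ u v, ¬ Adj u v → m u v = 0)
    (hbound : ∀ u v, m u v ≤ min (r u) (r v))
    (hdeg : ∀ v, ((∑ u, m u v) + ∑ u, m v u) ≤ r v)
    (hhd : ∀ v, 0 < ∑ u, m u v → (∑ u, m v u) = 0) :
    ∃ M : Finset ((Σ v : V, Fin (r v)) × (Σ v : V, Fin (r v))),
      -- every element of `M` is an arc of the sparse expanded network `H`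
      (∀ a ∈ M, Adj a.1.1 a.2.1 ∧ (r a.1.1 = r a.2.1 → a.1.2.val = a.2.2.val)) ∧
      -- `M` is a matching: no two (distinct) arcs share a vertex of `H`
      (∀ a ∈ M, ∀ b ∈ M, a ≠ b →
        a.1 ≠ b.1 ∧ a.1 ≠ b.2 ∧ a.2 ≠ b.1 ∧ a.2 ≠ b.2) ∧
      -- the multiplicities are preserved
      (∀ u v : V,
        (M.filter (fun a => a.1.1 = u ∧ a.2.1 = v)).card = m u v) := by
  have hout : ∀ v, #{e : Arc m | e.tail = v} ≤ r v := fun v =>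
    (Arc.card_filter_tail m v).trans_le (le_of_add_le_right (hdeg v))
  have hin : ∀ v, #{e : Arc m | e.head = v} ≤ r v := fun v =>
    (Arc.card_filter_head m v).trans_le (le_of_add_le_left (hdeg v))
  obtain ⟨p, q, hp, hq, hpq⟩ := exists_isPortAssignmentOn_eq_of_eq hout hin
  have hpq_ne : ∀ e e', hp.copy e ≠ hq.copy e' := fun e e' hee' =>
    Arc.tail_ne_head hhd e e' (congrArg Sigma.fst hee')
  refine ⟨univ.image fun e => (hp.copy e, hq.copy e), ?_, ?_, fun u v => ?_⟩
  · simp only [mem_image, mem_univ, true_and, forall_exists_index, forall_apply_eq_imp_iff]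
    exact fun e => ⟨not_imp_comm.1 (hsupp _ _) e.multiplicity_pos.ne', hpq e (mem_univ e)⟩
  · simp only [mem_image, mem_univ, true_and, forall_exists_index, forall_apply_eq_imp_iff]
    intro e e' hne
    have hee' : e ≠ e' := fun h => hne (by rw [h])
    exact ⟨hp.copy_injective.ne hee', hpq_ne e e', (hpq_ne e' e).symm, hq.copy_injective.ne hee'⟩
  · rw [filter_image, card_image_of_injective _ fun e e' h =>
      hp.copy_injective (congrArg Prod.fst h)]
    exact Arc.card_filter_tail_head m u v
end

section
/- Let D be a directed network in which every vertex has the same RF-chain number R ≥ 1 and, for every ordered pair (u,v), D contains either exactly R parallel arcs from u to v, all of the same positive capacity c(u,v), or no arcs from u to v. Let L be the link network of D, with one arc (u,v) of capacity c(u,v) for each connected ordered pair, and give every vertex of L one RF chain, so that a half-duplex subgraph of L is exactly a set of arcs no two of which share a vertex. Then the optimal half-duplex max-min throughput of D equals R times the optimal half-duplex max-min throughput of L; moreover an optimal unit-time half-duplex schedule for D is obtained by running R parallel copies of an optimal unit-time schedule for L. -/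
namespace S6

/-- `m` is a half-duplex subgraph of the directed network with arc-multiplicity
function `d` (number of available parallel arcs) and RF-chain numbers `r`. -/
def HDSub {V : Type} [Fintype V] (d : V → V → ℕ) (r : V → ℕ) (m : V → V → ℕ) : Prop :=
  (∀ u v, m u v ≤ d u v) ∧
  (∀ v, ((∑ u, m u v) + ∑ u, m v u) ≤ r v) ∧
  (∀ v, 0 < ∑ u, m u v → (∑ u, m v u) = 0)

/-- A unit-time half-duplex schedule: nonnegative timeslot lengths supported on
half-duplex subgraphs (encoded with multiplicities bounded by `n`), summing to `1`. -/
def IsSched {V : Type} [Fintype V] [DecidableEq V] (d : V → V → ℕ) (r : V → ℕ) (n : ℕ)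
    (t : (V → V → Fin (n + 1)) → ℝ) : Prop :=
  (∀ m, 0 ≤ t m) ∧
  (∀ m, t m ≠ 0 → HDSub d r (fun u v => (m u v : ℕ))) ∧
  (∑ m, t m = 1)

/-- Throughput of vertex `v` under schedule `t`: time-weighted capacity of the arcs
entering `v` minus that of the arcs leaving `v` (per-arc capacities `c`). -/
noncomputable def tp {V : Type} [Fintype V] [DecidableEq V] (c : V → V → ℝ) (n : ℕ)
    (t : (V → V → Fin (n + 1)) → ℝ) (v : V) : ℝ :=
  ∑ m, t m * ((∑ u, ((m u v : ℕ) : ℝ) * c u v) - ∑ u, ((m v u : ℕ) : ℝ) * c v u)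

/-- The optimal half-duplex max-min throughput: the supremum of throughputs `θ` such
that some unit-time half-duplex schedule gives every relay BS throughput at least `θ`. -/
noncomputable def optTp {V : Type} [Fintype V] [DecidableEq V] (relay : V → Prop)
    (d : V → V → ℕ) (c : V → V → ℝ) (r : V → ℕ) (n : ℕ) : ℝ :=
  sSup {θ : ℝ | ∃ t : (V → V → Fin (n + 1)) → ℝ,
    IsSched d r n t ∧ ∀ v, relay v → θ ≤ tp c n t v}

/-- The half-duplex subgraph of `D` consisting of all `R` parallel copies of every
arc of a subgraph `s` of the link network `L`. -/
def scaleR {V : Type} (R : ℕ) (s : V → V → Fin 2) : V → V → Fin (R + 1) :=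
  fun u v =>
    ⟨R * (s u v).val, by
      have h : (s u v).val ≤ 1 := Nat.lt_succ_iff.mp (s u v).isLt
      have h2 : R * (s u v).val ≤ R * 1 := Nat.mul_le_mul (le_refl R) h
      omega⟩

/-- Running `R` parallel copies of a schedule of the link network `L`. -/
noncomputable def liftSched {V : Type} [Fintype V] [DecidableEq V] (R : ℕ)
    (tL : (V → V → Fin 2) → ℝ) : (V → V → Fin (R + 1)) → ℝ :=
  fun m => ∑ s ∈ Finset.univ.filter (fun s : V → V → Fin 2 => scaleR R s = m), tL s

end S6

/-!
Only the time-weighted number of active arcs on each ordered pair of vertices matters for the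
throughput, and the matrices of such loads form the convex hull of the half-duplex subgraphs.
Scaling a subgraph of `L` by `R` gives a subgraph of `D`. Conversely, if `m` is the multiplicity
matrix of a subgraph of `D`, then `m / R` has row and column sums at most `1`, so by Birkhoff's
theorem it is a convex combination of partial permutation matrices supported inside `m`. Since no
vertex both sends and receives in `m`, the same holds for each of these matrices, and hence they are
matchings, i.e. half-duplex subgraphs of `L`. So the polytope of `D` is `R` times that of `L`.
-/

namespace S6

open Matrix
open scoped Pointwise

section Birkhoff

variable {n K : Type*}

/-- The dilation of a square matrix to one of twice the size all of whose row and column sums are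
`1`; it reduces Birkhoff's theorem for doubly substochastic matrices to the doubly stochastic
one. -/
def stochasticDilation [Fintype n] [DecidableEq n] [Ring K] (M : Matrix n n K) :
    Matrix (n ⊕ n) (n ⊕ n) K :=
  fromBlocks M (diagonal fun i => 1 - ∑ j, M i j) (diagonal fun j => 1 - ∑ i, M i j) Mᵀ

/-- The partial permutation matrices, with natural-number entries, whose nonzero entries lie in the
support of `M`. Entries are automatically `0` or `1`. -/
def partialPermsWithin [Fintype n] [Zero K] (M : Matrix n n K) : Set (Matrix n n ℕ) :=
  {A | (∀ i, ∑ j, A i j ≤ 1) ∧ (∀ j, ∑ i, A i j ≤ 1) ∧ ∀ i j, A i j ≠ 0 → M i j ≠ 0}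

/-- The linear map which sends a matrix to its upper left block, with the entries outside the
support of `M` deleted; it recovers `M` from its dilation. -/
def maskedBlock [Semiring K] [DecidableEq K] (M : Matrix n n K) :
    Matrix (n ⊕ n) (n ⊕ n) K →ₗ[K] Matrix n n K where
  toFun X := of fun i j => if M i j = 0 then 0 else X (.inl i) (.inl j)
  map_add' X Y := by ext i j; by_cases h : M i j = 0 <;> simp [h]
  map_smul' a X := by ext i j; by_cases h : M i j = 0 <;> simp [h]

variable [Fintype n]

lemma stochasticDilation_mem_doublyStochastic [DecidableEq n] [Ring K] [PartialOrder K]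
    [IsOrderedRing K] {M : Matrix n n K} (hM : ∀ i j, 0 ≤ M i j) (hrow : ∀ i, ∑ j, M i j ≤ 1)
    (hcol : ∀ j, ∑ i, M i j ≤ 1) : stochasticDilation M ∈ doublyStochastic K (n ⊕ n) := by
  have diagonal_nonneg {a : n → K} (ha : ∀ i, a i ≤ 1) (i j : n) :
      0 ≤ diagonal (fun k => 1 - a k) i j := by
    rw [diagonal_apply]
    split_ifs
    exacts [sub_nonneg.2 (ha i), le_rfl]
  refine mem_doublyStochastic_iff_sum.2 ⟨?_, ?_, ?_⟩
  · rintro (i | i) (j | j)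
    exacts [hM i j, diagonal_nonneg hrow i j, diagonal_nonneg hcol i j, hM j i]
  all_goals rintro (i | i) <;> simp [stochasticDilation, diagonal_apply]

lemma maskedBlock_stochasticDilation [DecidableEq n] [Ring K] [DecidableEq K] (M : Matrix n n K) :
    maskedBlock M (stochasticDilation M) = M := by
  ext i j
  by_cases h : M i j = 0 <;> simp [maskedBlock, stochasticDilation, h]

lemma maskedBlock_permMatrix_mem [DecidableEq n] [Semiring K] [DecidableEq K]
    (M : Matrix n n K) (σ : Equiv.Perm (n ⊕ n)) :
    maskedBlock M (σ.permMatrix K) ∈ (fun A => A.map Nat.cast) '' partialPermsWithin M := by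
  refine ⟨of fun i j => if M i j ≠ 0 ∧ σ (.inl i) = .inl j then 1 else 0, ⟨?_, ?_, ?_⟩, ?_⟩
  · intro i
    simp only [of_apply, ← Finset.card_filter, Finset.card_le_one, Finset.mem_filter_univ]
    exact fun j hj k hk => Sum.inl_injective (hj.2.symm.trans hk.2)
  · intro j
    simp only [of_apply, ← Finset.card_filter, Finset.card_le_one, Finset.mem_filter_univ]
    exact fun i hi k hk => Sum.inl_injective (σ.injective (hi.2.trans hk.2.symm))
  · intro i j hij
    rw [of_apply, ite_ne_right_iff] at hij
    exact hij.1.1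
  · ext i j
    by_cases h : M i j = 0 <;>
      simp [maskedBlock, h, Equiv.Perm.permMatrix, PEquiv.toMatrix_apply, eq_comm]

theorem mem_convexHull_partialPermsWithin [Field K] [LinearOrder K] [IsStrictOrderedRing K]
    {M : Matrix n n K} (hM : ∀ i j, 0 ≤ M i j) (hrow : ∀ i, ∑ j, M i j ≤ 1)
    (hcol : ∀ j, ∑ i, M i j ≤ 1) :
    M ∈ convexHull K ((fun A => A.map Nat.cast) '' partialPermsWithin M) := by
  classical
  have birkhoff : stochasticDilation M ∈ convexHull K {σ.permMatrix K | σ : Equiv.Perm (n ⊕ n)} :=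
    doublyStochastic_eq_convexHull_permMatrix (R := K) (n := n ⊕ n) ▸
      stochasticDilation_mem_doublyStochastic hM hrow hcol
  have block_mem := Set.mem_image_of_mem (maskedBlock M) birkhoff
  rw [maskedBlock_stochasticDilation, LinearMap.image_convexHull] at block_mem
  refine convexHull_mono ?_ block_mem
  rintro _ ⟨_, ⟨σ, rfl⟩, rfl⟩
  exact maskedBlock_permMatrix_mem M σ

end Birkhoff

section Subgraphs

variable {V : Type} [Fintype V] {d d' : V → V → ℕ} {r r' : V → ℕ} {m m' : V → V → ℕ}

lemma HDSub.sum_out_le (h : HDSub d r m) (u : V) : ∑ v, m u v ≤ r u :=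
  (Nat.le_add_left _ _).trans (h.2.1 u)

lemma HDSub.sum_in_le (h : HDSub d r m) (v : V) : ∑ u, m u v ≤ r v :=
  (Nat.le_add_right _ _).trans (h.2.1 v)

lemma HDSub.le_chains (h : HDSub d r m) (u v : V) : m u v ≤ r v :=
  (Finset.single_le_sum_of_canonicallyOrdered (f := (m · v)) (Finset.mem_univ u)).trans
    (h.sum_in_le v)

lemma HDSub.nsmul (h : HDSub d r m) (R : ℕ) : HDSub (R • d) (R • r) (R • m) := by
  obtain ⟨le_arcs, le_chains, half_duplex⟩ := h
  simp only [HDSub, Pi.smul_apply, smul_eq_mul, ← Finset.mul_sum, ← mul_add]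
  refine ⟨fun u v => Nat.mul_le_mul_left R (le_arcs u v),
    fun v => Nat.mul_le_mul_left R (le_chains v), fun v hv => ?_⟩
  rw [half_duplex v (Nat.pos_of_mul_pos_left hv), mul_zero]

lemma HDSub.of_support_subset (h : HDSub d r m) (hsupp : ∀ u v, m' u v ≠ 0 → m u v ≠ 0)
    (harcs : ∀ u v, m' u v ≤ d' u v) (hout : ∀ u, ∑ v, m' u v ≤ r' u)
    (hin : ∀ v, ∑ u, m' u v ≤ r' v) : HDSub d' r' m' := by
  have half_duplex (v : V) (hv : 0 < ∑ u, m' u v) : ∑ u, m' v u = 0 := by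
    obtain ⟨u, -, hu⟩ := Finset.exists_ne_zero_of_sum_ne_zero hv.ne'
    have in_pos : 0 < ∑ u, m u v :=
      Finset.sum_pos_iff.2 ⟨u, Finset.mem_univ u, Nat.pos_of_ne_zero (hsupp u v hu)⟩
    have out_eq_zero := Finset.sum_eq_zero_iff.1 (h.2.2 v in_pos)
    exact Finset.sum_eq_zero fun w hw => not_imp_not.1 (hsupp v w) (out_eq_zero w hw)
  refine ⟨harcs, fun v => ?_, half_duplex⟩
  obtain in_eq_zero | in_pos := Nat.eq_zero_or_pos (∑ u, m' u v)
  · rw [in_eq_zero, zero_add]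
    exact hout v
  · rw [half_duplex v in_pos, add_zero]
    exact hin v

/-- The multiplicity matrices of the half-duplex subgraphs, as real matrices; their convex hull is
the set of loads that schedules can realize. -/
def hdMatrices (d : V → V → ℕ) (r : V → ℕ) : Set (Matrix V V ℝ) :=
  (fun A : Matrix V V ℕ => A.map Nat.cast) '' {A | HDSub d r A}

lemma HDSub.map_cast_mem_smul_convexHull {R : ℕ} (hR : 0 < R) {A : Matrix V V ℕ}
    (h : HDSub (R • d) (R • 1) A) :
    A.map Nat.cast ∈ (R : ℝ) • convexHull ℝ (hdMatrices d 1) := by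
  have hR' : (0 : ℝ) < R := Nat.cast_pos.2 hR
  have sum_le_one {a : V → ℕ} (ha : ∑ x, a x ≤ R) : ∑ x, (R : ℝ)⁻¹ * a x ≤ 1 := by
    rw [← Finset.mul_sum, inv_mul_le_one₀ hR']
    exact_mod_cast ha
  rw [Set.mem_smul_set_iff_inv_smul_mem₀ hR'.ne']
  refine convexHull_mono (Set.image_mono fun B hB => ?_) (mem_convexHull_partialPermsWithin
    (M := (R : ℝ)⁻¹ • A.map Nat.cast) (fun u v => ?_) (fun u => ?_) (fun v => ?_))
  · obtain ⟨hrow, hcol, hsupp⟩ := hB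
    have support_subset (u v : V) (hBuv : B u v ≠ 0) : A u v ≠ 0 := by
      simpa [hR.ne'] using hsupp u v hBuv
    refine h.of_support_subset support_subset (fun u v => ?_) hrow hcol
    by_cases hBuv : B u v = 0
    · simp [hBuv]
    have one_le : 1 ≤ d u v :=
      Nat.pos_of_mul_pos_left ((Nat.pos_of_ne_zero (support_subset u v hBuv)).trans_le (h.1 u v))
    exact (Finset.single_le_sum_of_canonicallyOrdered (Finset.mem_univ v)).trans
      ((hrow u).trans one_le)
  · exact mul_nonneg (inv_nonneg.2 hR'.le) (Nat.cast_nonneg _)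
  · exact sum_le_one (by simpa using h.sum_out_le u)
  · exact sum_le_one (by simpa using h.sum_in_le v)

theorem convexHull_hdMatrices_nsmul {R : ℕ} (hR : 0 < R) (d : V → V → ℕ) :
    convexHull ℝ (hdMatrices (R • d) (R • 1)) = (R : ℝ) • convexHull ℝ (hdMatrices d 1) := by
  refine (convexHull_min ?_ ((convex_convexHull ℝ _).smul _)).antisymm ?_
  · rintro _ ⟨A, hA, rfl⟩
    exact HDSub.map_cast_mem_smul_convexHull hR hA
  · rw [← convexHull_smul]
    refine convexHull_mono ?_
    rintro _ ⟨_, ⟨A, hA, rfl⟩, rfl⟩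
    exact ⟨R • A, HDSub.nsmul hA R, by ext; simp [-nsmul_eq_mul]⟩

end Subgraphs

section Schedules

variable {V : Type} [Fintype V] {d : V → V → ℕ} {r : V → ℕ} {n : ℕ}

/-- The throughput of `v` as a linear functional of the load. -/
noncomputable def netInflow (c : V → V → ℝ) (v : V) : Matrix V V ℝ →ₗ[ℝ] ℝ :=
  ∑ u, c u v • entryLinearMap ℝ ℝ u v - ∑ u, c v u • entryLinearMap ℝ ℝ v u

variable [DecidableEq V]

/-- The load of a schedule: the time-weighted number of active arcs on each ordered pair. -/
noncomputable def load (n : ℕ) : ((V → V → Fin (n + 1)) → ℝ) →ₗ[ℝ] Matrix V V ℝ :=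
  Fintype.linearCombination ℝ fun m => of fun u v => ((m u v : ℕ) : ℝ)

lemma load_apply (t : (V → V → Fin (n + 1)) → ℝ) :
    load n t = ∑ m, t m • of fun u v => ((m u v : ℕ) : ℝ) :=
  Fintype.linearCombination_apply ℝ _ t

lemma tp_eq_netInflow_load (c : V → V → ℝ) (t : (V → V → Fin (n + 1)) → ℝ) (v : V) :
    tp c n t v = netInflow c v (load n t) := by
  simp [load_apply, netInflow, tp, mul_sub, Finset.mul_sum, mul_comm (c _ _), mul_assoc]

lemma convex_setOf_isSched (d : V → V → ℕ) (r : V → ℕ) (n : ℕ) :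
    Convex ℝ {t | IsSched d r n t} := by
  rintro s ⟨s_nonneg, s_supp, s_sum⟩ t ⟨t_nonneg, t_supp, t_sum⟩ a b ha hb hab
  refine ⟨fun m => ?_, fun m hm => ?_, ?_⟩
  · exact add_nonneg (mul_nonneg ha (s_nonneg m)) (mul_nonneg hb (t_nonneg m))
  · by_cases hs : s m = 0
    · exact t_supp m fun ht => hm (by simp [hs, ht])
    · exact s_supp m hs
  · simp [Finset.sum_add_distrib, ← Finset.mul_sum, s_sum, t_sum, hab]

lemma isSched_single {m : V → V → Fin (n + 1)} (hm : HDSub d r fun u v => (m u v : ℕ)) :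
    IsSched d r n (Pi.single m 1) := by
  have single_nonneg : 0 ≤ (Pi.single m 1 : (V → V → Fin (n + 1)) → ℝ) :=
    Pi.single_nonneg.2 zero_le_one
  refine ⟨single_nonneg, fun m' hm' => ?_, Fintype.sum_pi_single' m 1⟩
  obtain rfl : m' = m := of_not_not fun hne => hm' (Pi.single_eq_of_ne hne 1)
  exact hm

lemma IsSched.load_mem_convexHull {t : (V → V → Fin (n + 1)) → ℝ} (ht : IsSched d r n t) :
    load n t ∈ convexHull ℝ (hdMatrices d r) := by
  obtain ⟨nonneg, supp, sum_eq_one⟩ := ht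
  rw [load_apply, ← finsum_eq_sum_of_fintype]
  exact (convex_convexHull ℝ _).finsum_mem nonneg ((finsum_eq_sum_of_fintype t).trans sum_eq_one)
    fun m hm => subset_convexHull ℝ _ ⟨_, supp m hm, rfl⟩

theorem load_image_setOf_isSched (hr : ∀ v, r v ≤ n) :
    load n '' {t | IsSched d r n t} = convexHull ℝ (hdMatrices d r) := by
  refine (Set.image_subset_iff.2 fun t ht => IsSched.load_mem_convexHull ht).antisymm
    (convexHull_min ?_ ((convex_setOf_isSched d r n).linear_image (load n)))
  rintro _ ⟨A, hA, rfl⟩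
  let m (u v : V) : Fin (n + 1) := ⟨A u v, Nat.lt_succ_of_le ((hA.le_chains u v).trans (hr v))⟩
  exact ⟨Pi.single m 1, isSched_single hA, Fintype.linearCombination_apply_single ℝ _ m 1 |>.trans
    (one_smul ℝ _)⟩

lemma optTp_eq_sSup_convexHull (relay : V → Prop) (d : V → V → ℕ) (c : V → V → ℝ)
    (hr : ∀ v, r v ≤ n) :
    optTp relay d c r n =
      sSup {θ | ∃ A ∈ convexHull ℝ (hdMatrices d r), ∀ v, relay v → θ ≤ netInflow c v A} := by
  simp only [optTp, tp_eq_netInflow_load, ← load_image_setOf_isSched hr, Set.exists_mem_image,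
    Set.mem_ofPred_eq]

theorem optTp_nsmul (relay : V → Prop) (d : V → V → ℕ) (c : V → V → ℝ) {R : ℕ} (hR : 0 < R) :
    optTp relay (R • d) c (R • 1) R = R * optTp relay d c 1 1 := by
  have hR' : (0 : ℝ) < R := Nat.cast_pos.2 hR
  rw [optTp_eq_sSup_convexHull relay (R • d) c (by simp),
    optTp_eq_sSup_convexHull relay d c (by simp), convexHull_hdMatrices_nsmul hR, ← smul_eq_mul,
    ← Real.sSup_smul_of_nonneg hR'.le]
  congr 1
  ext θ
  simp only [Set.mem_smul_set_iff_inv_smul_mem₀ hR'.ne' _ θ, Set.mem_ofPred_eq, smul_eq_mul,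
    inv_mul_le_iff₀ hR', ← Set.image_smul (t := convexHull ℝ _), Set.exists_mem_image, map_smul]

end Schedules

section ParallelCopies

variable {V : Type} [Fintype V] [DecidableEq V]

lemma sum_liftSched_smul {E : Type*} [AddCommMonoid E] [Module ℝ E] (R : ℕ)
    (t : (V → V → Fin 2) → ℝ) (g : (V → V → Fin (R + 1)) → E) :
    ∑ m, liftSched R t m • g m = ∑ s, t s • g (scaleR R s) := by
  simp only [liftSched, Finset.sum_smul]
  rw [← Finset.sum_fiberwise Finset.univ (scaleR R)]
  refine Finset.sum_congr rfl fun m _ => Finset.sum_congr rfl fun s hs => ?_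
  rw [(Finset.mem_filter.1 hs).2]

lemma load_liftSched (R : ℕ) (t : (V → V → Fin 2) → ℝ) :
    load R (liftSched R t) = (R : ℝ) • load 1 t := by
  simp only [load_apply, sum_liftSched_smul, Finset.smul_sum, smul_comm (R : ℝ)]
  refine Finset.sum_congr rfl fun s _ => congrArg (t s • ·) ?_
  ext u v
  simp [scaleR]

lemma tp_liftSched (c : V → V → ℝ) (R : ℕ) (t : (V → V → Fin 2) → ℝ) (v : V) :
    tp c R (liftSched R t) v = R * tp c 1 t v := by
  simp only [tp_eq_netInflow_load, load_liftSched, map_smul, smul_eq_mul]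

lemma IsSched.liftSched {d : V → V → ℕ} {r : V → ℕ} {t : (V → V → Fin 2) → ℝ}
    (ht : IsSched d r 1 t) (R : ℕ) : IsSched (R • d) (R • r) R (liftSched R t) := by
  obtain ⟨nonneg, supp, sum_eq_one⟩ := ht
  refine ⟨fun m => Finset.sum_nonneg fun s _ => nonneg s, fun m hm => ?_, ?_⟩
  · obtain ⟨s, hs, hts⟩ := Finset.exists_ne_zero_of_sum_ne_zero hm
    obtain rfl : scaleR R s = m := (Finset.mem_filter.1 hs).2
    exact (supp s hts).nsmul R
  · simpa [sum_eq_one] using sum_liftSched_smul R t fun _ => (1 : ℝ)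

end ParallelCopies

end S6

theorem uniform_halfduplex_mtfs_general {V : Type} [Fintype V] [DecidableEq V]
    (relay : V → Prop) {R : ℕ} (hR : 0 < R) (d : V → V → ℕ) (c : V → V → ℝ) :
    S6.optTp relay (R • d) c (R • 1) R = R * S6.optTp relay d c 1 1 ∧
    ∀ tL : (V → V → Fin 2) → ℝ, S6.IsSched d 1 1 tL →
      (∀ v, relay v → S6.optTp relay d c 1 1 ≤ S6.tp c 1 tL v) →
      S6.IsSched (R • d) (R • 1) R (S6.liftSched R tL) ∧
      ∀ v, relay v → S6.optTp relay (R • d) c (R • 1) R ≤ S6.tp c R (S6.liftSched R tL) v := by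
  refine ⟨S6.optTp_nsmul relay d c hR, fun tL htL hopt => ⟨htL.liftSched R, fun v hv => ?_⟩⟩
  rw [S6.optTp_nsmul relay d c hR, S6.tp_liftSched]
  exact mul_le_mul_of_nonneg_left (hopt v hv) R.cast_nonneg

/-- Let `D` be a directed network in which every vertex has `R ≥ 1`
RF chains and every connected ordered pair `(u,v)` (with `Adj u v`) is joined by
exactly `R` parallel arcs of the same positive capacity `c u v`, and let `L` be its
link network (one arc per pair, one RF chain per vertex).  Then the optimal
half-duplex max-min throughput of `D` is `R` times that of `L`; moreover, `R`
parallel copies of any optimal unit-time schedule of `L` form an optimal unit-time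
half-duplex schedule of `D`. -/
theorem uniform_halfduplex_mtfs
    (V : Type) [Fintype V] [DecidableEq V]
    (relay : V → Prop)
    (R : ℕ) (hR : 1 ≤ R)
    (Adj : V → V → Prop) [DecidableRel Adj] (hirr : ∀ v, ¬ Adj v v)
    (c : V → V → ℝ) (hc : ∀ u v, Adj u v → 0 < c u v) :
    S6.optTp relay (fun u v => if Adj u v then R else 0) c (fun _ => R) R
      = (R : ℝ) * S6.optTp relay (fun u v => if Adj u v then 1 else 0) c (fun _ => 1) 1 ∧
    ∀ tL : (V → V → Fin 2) → ℝ,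
      S6.IsSched (fun u v => if Adj u v then 1 else 0) (fun _ => 1) 1 tL →
      (∀ v, relay v →
        S6.optTp relay (fun u v => if Adj u v then 1 else 0) c (fun _ => 1) 1 ≤
          S6.tp c 1 tL v) →
      S6.IsSched (fun u v => if Adj u v then R else 0) (fun _ => R) R (S6.liftSched R tL) ∧
      ∀ v, relay v →
        S6.optTp relay (fun u v => if Adj u v then R else 0) c (fun _ => R) R ≤
          S6.tp c R (S6.liftSched R tL) v := by
  simpa only [Pi.smul_def, Pi.one_def, smul_eq_mul, mul_ite, mul_one, mul_zero] using
    uniform_halfduplex_mtfs_general relay hR (fun u v => if Adj u v then 1 else 0) c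
end

section
/- Let D be a directed network under the MAX-SU-SM model (for each link (u,v), exactly min(r(u), r(v)) parallel arcs of the same positive capacity) in which every relay BS has the same RF-chain number r^M ≥ 1 and each macro BS n_i has RF-chain number k_i · r^M for some k_i ∈ ℕ. Let D' be the directed network obtained from D by replacing each macro BS n_i by k_i macro BS vertices n_i^{(1)}, …, n_i^{(k_i)}, each with r^M RF chains, where each n_i^{(j)} is joined to the relay BSs exactly as n_i was (the same number of parallel arcs with the same heads and the same capacities, under the MAX-SU-SM rule). Then the optimal half-duplex max-min throughput of D equals the optimal half-duplex max-min throughput of D'. -/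
namespace S7

/-- `m` is a half-duplex subgraph of the directed network with arc-multiplicity
function `d` and RF-chain numbers `r`. -/
def HDSub {V : Type} [Fintype V] (d : V → V → ℕ) (r : V → ℕ) (m : V → V → ℕ) : Prop :=
  (∀ u v, m u v ≤ d u v) ∧
  (∀ v, ((∑ u, m u v) + ∑ u, m v u) ≤ r v) ∧
  (∀ v, 0 < ∑ u, m u v → (∑ u, m v u) = 0)

/-- A unit-time half-duplex schedule. -/
def IsSched {V : Type} [Fintype V] [DecidableEq V] (d : V → V → ℕ) (r : V → ℕ) (n : ℕ)
    (t : (V → V → Fin (n + 1)) → ℝ) : Prop :=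
  (∀ m, 0 ≤ t m) ∧
  (∀ m, t m ≠ 0 → HDSub d r (fun u v => (m u v : ℕ))) ∧
  (∑ m, t m = 1)

/-- Throughput of vertex `v` under schedule `t` (per-arc capacities `c`). -/
noncomputable def tp {V : Type} [Fintype V] [DecidableEq V] (c : V → V → ℝ) (n : ℕ)
    (t : (V → V → Fin (n + 1)) → ℝ) (v : V) : ℝ :=
  ∑ m, t m * ((∑ u, ((m u v : ℕ) : ℝ) * c u v) - ∑ u, ((m v u : ℕ) : ℝ) * c v u)

/-- The optimal half-duplex max-min throughput. -/
noncomputable def optTp {V : Type} [Fintype V] [DecidableEq V] (relay : V → Prop)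
    (d : V → V → ℕ) (c : V → V → ℝ) (r : V → ℕ) (n : ℕ) : ℝ :=
  sSup {θ : ℝ | ∃ t : (V → V → Fin (n + 1)) → ℝ,
    IsSched d r n t ∧ ∀ v, relay v → θ ≤ tp c n t v}

/-- Projection from the split network `D'` back to `D`: the copy `n_i^{(j)}` of a
macro BS projects to `n_i`; relay BSs are unchanged. -/
def proj {Vr Vm : Type} {k : Vm → ℕ} : (Vr ⊕ (Σ m : Vm, Fin (k m))) → (Vr ⊕ Vm) :=
  Sum.elim Sum.inl (fun p => Sum.inr p.1)

end S7

/-!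
A schedule never needs an arc entering a macro BS: dropping such arcs can only raise the throughput
of a relay.  What remains is a family of relay-to-relay arcs together with arcs from macros to
relays.  Splitting a macro amounts to dealing its outgoing arcs out among its copies within their
RF-chain budgets, which is possible because the budgets add up to that of the macro.  Merging
collects them again, and the parallel arcs of `D` suffice for this because a relay never receives
on more arcs than it has RF chains.  Neither operation changes what a relay receives, so schedules
can be transported in both directions without lowering any relay throughput.
-/

namespace S7

theorem card_filter_sigma_fst_eq {ι : Type*} [Fintype ι] [DecidableEq ι] (n : ι → ℕ) (i : ι) :
    Finset.card {x : Σ i, Fin (n i) | x.1 = i} = n i := by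
  rw [← Fintype.card_subtype, Fintype.card_congr (Equiv.sigmaSubtype i), Fintype.card_fin]

theorem exists_sum_eq_and_sum_le {ι κ : Type*} [Fintype ι] [Fintype κ] (a : ι → ℕ) (q : κ → ℕ)
    (h : ∑ i, a i ≤ ∑ j, q j) :
    ∃ b : κ → ι → ℕ, (∀ i, ∑ j, b j i = a i) ∧ ∀ j, ∑ i, b j i ≤ q j := by
  classical
  -- Inject `a i` items of each kind `i` into bins `j` with `q j` slots each.
  obtain ⟨slot⟩ : Nonempty ((Σ i, Fin (a i)) ↪ Σ j, Fin (q j)) :=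
    Function.Embedding.nonempty_of_card_le (by simpa using h)
  refine ⟨fun j i => Finset.card {x | x.1 = i ∧ (slot x).1 = j}, fun i => ?_, fun j => ?_⟩
  · calc ∑ j, Finset.card {x | x.1 = i ∧ (slot x).1 = j}
        = Finset.card {x : Σ i, Fin (a i) | x.1 = i} := by
          simp only [← Finset.filter_filter]
          exact (Finset.card_eq_sum_card_fiberwise fun _ _ => Finset.mem_univ _).symm
      _ = a i := card_filter_sigma_fst_eq a i
  · calc ∑ i, Finset.card {x | x.1 = i ∧ (slot x).1 = j}
        = Finset.card {x | (slot x).1 = j} := by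
          rw [Finset.card_eq_sum_card_fiberwise (f := Sigma.fst) fun _ _ => Finset.mem_univ _]
          simp only [Finset.filter_filter, and_comm]
      _ ≤ Finset.card {s : Σ j, Fin (q j) | s.1 = j} :=
          Finset.card_le_card_of_injOn slot (fun _ hx => by simpa using hx) slot.injective.injOn
      _ = q j := card_filter_sigma_fst_eq q j

theorem sum_funOnFinite_map_mul {α β M : Type*} [Fintype α] [Fintype β]
    [NonUnitalNonAssocSemiring M] (f : α → β) (t : α → M) (g : β → M) :
    ∑ b, FunOnFinite.map f t b * g b = ∑ a, t a * g (f a) := by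
  classical
  simp only [FunOnFinite.map_apply_apply, Finset.sum_mul]
  rw [← Finset.sum_fiberwise Finset.univ f fun a => t a * g (f a)]
  refine Finset.sum_congr rfl fun b _ => Finset.sum_congr rfl fun a ha => ?_
  rw [(Finset.mem_filter.mp ha).2]

section Schedules

variable {V W X : Type} [Fintype V] [Fintype W]

theorem HDSub.mono {d m m' : V → V → ℕ} {r : V → ℕ} (h : HDSub d r m)
    (hle : ∀ u v, m' u v ≤ m u v) : HDSub d r m' := by
  have in_le (v : V) : ∑ u, m' u v ≤ ∑ u, m u v := Finset.sum_le_sum fun u _ => hle u v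
  have out_le (v : V) : ∑ u, m' v u ≤ ∑ u, m v u := Finset.sum_le_sum fun u _ => hle v u
  exact ⟨fun u v => (hle u v).trans (h.1 u v),
    fun v => (add_le_add (in_le v) (out_le v)).trans (h.2.1 v),
    fun v hv => Nat.le_zero.mp ((out_le v).trans_eq (h.2.2 v (hv.trans_le (in_le v))))⟩

theorem HDSub.le_head {d m : V → V → ℕ} {r : V → ℕ} (h : HDSub d r m) (u v : V) :
    m u v ≤ r v :=
  calc m u v ≤ ∑ w, m w v :=
        Finset.single_le_sum (f := fun w => m w v) (fun _ _ => Nat.zero_le _) (Finset.mem_univ u)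
    _ ≤ ∑ w, m w v + ∑ w, m v w := Nat.le_add_right _ _
    _ ≤ r v := h.2.1 v

/-- The contribution, per unit time, of the subgraph `m` to the throughput of the vertex `v`. -/
def netInflow (c : V → V → ℝ) (m : V → V → ℕ) (v : V) : ℝ :=
  (∑ u, (m u v : ℝ) * c u v) - ∑ u, (m v u : ℝ) * c v u

variable [DecidableEq V] [DecidableEq W]

theorem IsSched.map {d : V → V → ℕ} {r : V → ℕ} {n : ℕ} {t : (V → V → Fin (n + 1)) → ℝ}
    {d' : W → W → ℕ} {r' : W → ℕ} {n' : ℕ} (ht : IsSched d r n t)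
    (f : (V → V → Fin (n + 1)) → W → W → Fin (n' + 1))
    (hf : ∀ m, HDSub d r (fun u v => m u v) → HDSub d' r' (fun u v => f m u v)) :
    IsSched d' r' n' (FunOnFinite.map f t) := by
  classical
  obtain ⟨t_nonneg, t_support, t_sum⟩ := ht
  obtain ⟨map_nonneg, map_sum⟩ : FunOnFinite.map f t ∈ stdSimplex ℝ _ :=
    stdSimplex.image_linearMap f ⟨t, ⟨t_nonneg, t_sum⟩, rfl⟩
  refine ⟨map_nonneg, fun m' hm' => ?_, map_sum⟩
  rw [FunOnFinite.map_apply_apply] at hm'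
  obtain ⟨m, hm, htm⟩ := Finset.exists_ne_zero_of_sum_ne_zero hm'
  obtain rfl : f m = m' := by simpa using hm
  exact hf m (t_support m htm)

/-- The throughput levels that some unit-time half-duplex schedule guarantees to every relay;
`optTp` is the supremum of this set. -/
def achievable (relay : V → Prop) (d : V → V → ℕ) (c : V → V → ℝ) (r : V → ℕ) (n : ℕ) : Set ℝ :=
  {θ | ∃ t : (V → V → Fin (n + 1)) → ℝ, IsSched d r n t ∧ ∀ v, relay v → θ ≤ tp c n t v}

theorem achievable_subset_of_forall_exists_netInflow_le (e : X → V) (e' : X → W)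
    {d : V → V → ℕ} {c : V → V → ℝ} {r : V → ℕ} {n : ℕ}
    {d' : W → W → ℕ} {c' : W → W → ℝ} {r' : W → ℕ} {n' : ℕ}
    (h : ∀ m, HDSub d r m → ∃ m', HDSub d' r' m' ∧ (∀ u v, m' u v ≤ n') ∧
      ∀ x, netInflow c m (e x) ≤ netInflow c' m' (e' x)) :
    achievable (fun v => ∃ x, v = e x) d c r n ⊆
      achievable (fun v => ∃ x, v = e' x) d' c' r' n' := by
  have h_fin : ∀ m : V → V → Fin (n + 1), HDSub d r (fun u v => m u v) →
      ∃ m' : W → W → Fin (n' + 1), HDSub d' r' (fun u v => m' u v) ∧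
        ∀ x, netInflow c (fun u v => m u v) (e x) ≤ netInflow c' (fun u v => m' u v) (e' x) := by
    intro m hm
    obtain ⟨m', hm', hle, hflow⟩ := h _ hm
    exact ⟨fun u v => ⟨m' u v, Nat.lt_succ_of_le (hle u v)⟩, hm', hflow⟩
  choose! f hf_sub hf_flow using h_fin
  rintro θ ⟨t, ht, hθ⟩
  refine ⟨FunOnFinite.map f t, ht.map f hf_sub, ?_⟩
  rintro _ ⟨x, rfl⟩
  calc θ ≤ ∑ m, t m * netInflow c (fun u v => m u v) (e x) := hθ _ ⟨x, rfl⟩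
    _ ≤ ∑ m, t m * netInflow c' (fun u v => f m u v) (e' x) := by
      refine Finset.sum_le_sum fun m _ => ?_
      obtain htm | htm := eq_or_ne (t m) 0
      · simp [htm]
      · exact mul_le_mul_of_nonneg_left (hf_flow m (ht.2.1 m htm) x) (ht.1 m)
    _ = tp c' n' (FunOnFinite.map f t) (e' x) :=
      (sum_funOnFinite_map_mul f t fun m' => netInflow c' (fun u v => m' u v) (e' x)).symm

end Schedules

section Downlink

variable {Vr A : Type}

/-- The subgraph formed by the relay-to-relay arcs `g` and the macro-to-relay arcs `f`, with no
arc entering a macro. -/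
def downlink (g : Vr → Vr → ℕ) (f : A → Vr → ℕ) : Vr ⊕ A → Vr ⊕ A → ℕ :=
  fun u => Sum.elim (Sum.elim g f u) 0

variable [Fintype Vr] [Fintype A]

theorem hdSub_downlink_iff {d : Vr ⊕ A → Vr ⊕ A → ℕ} {r : Vr ⊕ A → ℕ} {g : Vr → Vr → ℕ}
    {f : A → Vr → ℕ} :
    HDSub d r (downlink g f) ↔
      (∀ x y, g x y ≤ d (Sum.inl x) (Sum.inl y)) ∧ (∀ a y, f a y ≤ d (Sum.inr a) (Sum.inl y)) ∧
      (∀ y, ∑ x, g x y + ∑ a, f a y + ∑ z, g y z ≤ r (Sum.inl y)) ∧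
      (∀ a, ∑ y, f a y ≤ r (Sum.inr a)) ∧
      ∀ y, 0 < ∑ x, g x y + ∑ a, f a y → ∑ z, g y z = 0 := by
  simp only [HDSub, downlink, Sum.forall, Fintype.sum_sum_type, Sum.elim_inl, Sum.elim_inr,
    Pi.zero_apply, Finset.sum_const_zero, Nat.zero_le, implies_true, add_zero, zero_add,
    lt_self_iff_false, false_imp_iff, and_true, and_assoc]

theorem netInflow_downlink (c : Vr ⊕ A → Vr ⊕ A → ℝ) (g : Vr → Vr → ℕ) (f : A → Vr → ℕ) (y : Vr) :
    netInflow c (downlink g f) (Sum.inl y) =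
      ∑ x, (g x y : ℝ) * c (Sum.inl x) (Sum.inl y) + ∑ a, (f a y : ℝ) * c (Sum.inr a) (Sum.inl y) -
        ∑ z, (g y z : ℝ) * c (Sum.inl y) (Sum.inl z) := by
  simp [netInflow, downlink]

theorem HDSub.downlink_le {d : Vr ⊕ A → Vr ⊕ A → ℕ} {r : Vr ⊕ A → ℕ} {g : Vr → Vr → ℕ}
    {f : A → Vr → ℕ} {n : ℕ} (h : HDSub d r (downlink g f)) (hn : ∀ y, r (Sum.inl y) ≤ n)
    (u v : Vr ⊕ A) : downlink g f u v ≤ n := by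
  obtain y | _ := v
  · exact (h.le_head u _).trans (hn y)
  · exact Nat.zero_le n

theorem HDSub.downlink_restrict {d : Vr ⊕ A → Vr ⊕ A → ℕ} {r : Vr ⊕ A → ℕ}
    {m : Vr ⊕ A → Vr ⊕ A → ℕ} (h : HDSub d r m) :
    HDSub d r (downlink (fun x y => m (Sum.inl x) (Sum.inl y))
      (fun a y => m (Sum.inr a) (Sum.inl y))) := by
  refine h.mono ?_
  rintro (x | a) (y | b) <;> simp [downlink]

theorem HDSub.netInflow_le_downlink_restrict {d : Vr ⊕ A → Vr ⊕ A → ℕ} {r : Vr ⊕ A → ℕ}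
    {c : Vr ⊕ A → Vr ⊕ A → ℝ} {m : Vr ⊕ A → Vr ⊕ A → ℕ} (h : HDSub d r m)
    (hc : ∀ x a, d (Sum.inl x) (Sum.inr a) ≠ 0 → 0 ≤ c (Sum.inl x) (Sum.inr a)) (y : Vr) :
    netInflow c m (Sum.inl y) ≤ netInflow c (downlink (fun x y => m (Sum.inl x) (Sum.inl y))
      (fun a y => m (Sum.inr a) (Sum.inl y))) (Sum.inl y) := by
  have uplink_nonneg : 0 ≤ ∑ a, (m (Sum.inl y) (Sum.inr a) : ℝ) * c (Sum.inl y) (Sum.inr a) := by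
    refine Finset.sum_nonneg fun a _ => ?_
    obtain hm | hm := Nat.eq_zero_or_pos (m (Sum.inl y) (Sum.inr a))
    · simp [hm]
    · exact mul_nonneg (Nat.cast_nonneg _) (hc y a (hm.trans_le (h.1 _ _)).ne')
  rw [netInflow_downlink]
  simp only [netInflow, Fintype.sum_sum_type]
  linarith

end Downlink

section Splitting

variable {Vr Vm : Type} [Fintype Vr] [Fintype Vm] {k : Vm → ℕ} {d : Vr ⊕ Vm → Vr ⊕ Vm → ℕ}
  {c : Vr ⊕ Vm → Vr ⊕ Vm → ℝ} {r : Vr → ℕ} {g : Vr → Vr → ℕ} {f : (Σ a, Fin (k a)) → Vr → ℕ}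
  {q : (Σ a, Fin (k a)) → ℕ} {n : ℕ}

theorem HDSub.downlink_split {R : Vm → ℕ}
    (h : HDSub d (Sum.elim r R) (downlink g fun a y => ∑ j, f ⟨a, j⟩ y))
    (hq : ∀ p, ∑ y, f p y ≤ q p) :
    HDSub (fun u v => d (proj u) (proj v)) (Sum.elim r q) (downlink g f) := by
  obtain ⟨g_le, f_le, relay_chains, -, half_duplex⟩ := hdSub_downlink_iff.mp h
  refine hdSub_downlink_iff.mpr ⟨g_le, fun ⟨a, j⟩ y => ?_, ?_, hq, ?_⟩
  · exact (Finset.single_le_sum (f := fun j => f ⟨a, j⟩ y) (fun _ _ => Nat.zero_le _)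
      (Finset.mem_univ j)).trans (f_le a y)
  · simpa only [Fintype.sum_sigma, Sum.elim_inl] using relay_chains
  · simpa only [Fintype.sum_sigma] using half_duplex

theorem HDSub.downlink_merge
    (hd : ∀ a y, d (Sum.inr a) (Sum.inl y) ≠ 0 → r y ≤ d (Sum.inr a) (Sum.inl y))
    (h : HDSub (fun u v => d (proj u) (proj v)) (Sum.elim r q) (downlink g f)) :
    HDSub d (Sum.elim r fun a => ∑ j, q ⟨a, j⟩) (downlink g fun a y => ∑ j, f ⟨a, j⟩ y) := by
  obtain ⟨g_le, f_le, relay_chains, copy_chains, half_duplex⟩ := hdSub_downlink_iff.mp h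
  simp only [Fintype.sum_sigma] at relay_chains half_duplex
  refine hdSub_downlink_iff.mpr ⟨g_le, fun a y => ?_, relay_chains, fun a => ?_, half_duplex⟩
  · obtain hday | hday := eq_or_ne (d (Sum.inr a) (Sum.inl y)) 0
    · exact (Finset.sum_nonpos fun j _ => (f_le ⟨a, j⟩ y).trans_eq hday).trans (Nat.zero_le _)
    · have le_received : ∑ j, f ⟨a, j⟩ y ≤ ∑ a, ∑ j, f ⟨a, j⟩ y :=
        Finset.single_le_sum (f := fun a => ∑ j, f ⟨a, j⟩ y) (fun _ _ => Nat.zero_le _)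
          (Finset.mem_univ a)
      have received_le : _ ≤ r y := relay_chains y
      have := hd a y hday
      omega
  · rw [Finset.sum_comm]
    exact Finset.sum_le_sum fun j _ => copy_chains ⟨a, j⟩

theorem netInflow_downlink_split (c : Vr ⊕ Vm → Vr ⊕ Vm → ℝ) (g : Vr → Vr → ℕ)
    (f : (Σ a, Fin (k a)) → Vr → ℕ) (y : Vr) :
    netInflow (fun u v => c (proj u) (proj v)) (downlink g f) (Sum.inl y) =
      netInflow c (downlink g fun a y => ∑ j, f ⟨a, j⟩ y) (Sum.inl y) := by
  simp only [netInflow_downlink, Fintype.sum_sigma, proj, Sum.elim_inl, Sum.elim_inr, Nat.cast_sum,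
    Finset.sum_mul]

theorem HDSub.exists_split {m : Vr ⊕ Vm → Vr ⊕ Vm → ℕ}
    (hm : HDSub d (Sum.elim r fun a => ∑ j, q ⟨a, j⟩) m)
    (hc : ∀ x a, d (Sum.inl x) (Sum.inr a) ≠ 0 → 0 ≤ c (Sum.inl x) (Sum.inr a))
    (hn : ∀ y, r y ≤ n) :
    ∃ m', HDSub (fun u v => d (proj u) (proj v)) (Sum.elim r q) m' ∧ (∀ u v, m' u v ≤ n) ∧
      ∀ y, netInflow c m (Sum.inl y) ≤
        netInflow (fun u v => c (proj u) (proj v)) m' (Sum.inl y) := by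
  have h_restrict := hm.downlink_restrict
  obtain ⟨-, -, -, macro_chains, -⟩ := hdSub_downlink_iff.mp h_restrict
  choose b b_sum b_le using fun a => exists_sum_eq_and_sum_le _ (fun j => q ⟨a, j⟩) (macro_chains a)
  let f : (Σ a, Fin (k a)) → Vr → ℕ := fun p => b p.1 p.2
  have f_sum : (fun a y => ∑ j, f ⟨a, j⟩ y) = fun a y => m (Sum.inr a) (Sum.inl y) :=
    funext₂ b_sum
  have h_split := HDSub.downlink_split (f := f) (f_sum ▸ h_restrict) fun p => b_le p.1 p.2
  refine ⟨_, h_split, h_split.downlink_le hn, fun y => ?_⟩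
  rw [netInflow_downlink_split, f_sum]
  exact hm.netInflow_le_downlink_restrict hc y

theorem HDSub.exists_merge {m : Vr ⊕ (Σ a, Fin (k a)) → Vr ⊕ (Σ a, Fin (k a)) → ℕ}
    (hm : HDSub (fun u v => d (proj u) (proj v)) (Sum.elim r q) m)
    (hd : ∀ a y, d (Sum.inr a) (Sum.inl y) ≠ 0 → r y ≤ d (Sum.inr a) (Sum.inl y))
    (hc : ∀ x a, d (Sum.inl x) (Sum.inr a) ≠ 0 → 0 ≤ c (Sum.inl x) (Sum.inr a))
    (hn : ∀ y, r y ≤ n) :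
    ∃ m', HDSub d (Sum.elim r fun a => ∑ j, q ⟨a, j⟩) m' ∧ (∀ u v, m' u v ≤ n) ∧
      ∀ y, netInflow (fun u v => c (proj u) (proj v)) m (Sum.inl y) ≤
        netInflow c m' (Sum.inl y) := by
  have h_merge := hm.downlink_restrict.downlink_merge hd
  refine ⟨_, h_merge, h_merge.downlink_le hn, fun y => ?_⟩
  have le_restrict := hm.netInflow_le_downlink_restrict (c := fun u v => c (proj u) (proj v))
    (fun x p => hc x p.1) y
  rwa [netInflow_downlink_split] at le_restrict

end Splitting

end S7

/-- The cutoff `n` comes from encoding subgraphs as functions into `Fin (n + 1)`; it is immaterial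
once `r y ≤ n`, because a subgraph has at most `r y` arcs into a relay `y`. -/
theorem split_macro_bs_preserves_optimum_general {Vr Vm : Type} [Fintype Vr] [Fintype Vm]
    [DecidableEq Vr] [DecidableEq Vm] {k : Vm → ℕ} (r : Vr → ℕ) (q : (Σ a, Fin (k a)) → ℕ) {n : ℕ}
    (hn : ∀ y, r y ≤ n) (d : Vr ⊕ Vm → Vr ⊕ Vm → ℕ) (c : Vr ⊕ Vm → Vr ⊕ Vm → ℝ)
    (hd : ∀ a y, d (Sum.inr a) (Sum.inl y) ≠ 0 → r y ≤ d (Sum.inr a) (Sum.inl y))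
    (hc : ∀ x a, d (Sum.inl x) (Sum.inr a) ≠ 0 → 0 ≤ c (Sum.inl x) (Sum.inr a)) :
    S7.optTp (fun a => ∃ x, a = Sum.inl x) d c (Sum.elim r fun a => ∑ j, q ⟨a, j⟩) n
      = S7.optTp (fun a => ∃ x, a = Sum.inl x) (fun u v => d (S7.proj u) (S7.proj v))
          (fun u v => c (S7.proj u) (S7.proj v)) (Sum.elim r q) n :=
  congrArg sSup <| Set.Subset.antisymm
    (S7.achievable_subset_of_forall_exists_netInflow_le _ _ fun _ hm => hm.exists_split hc hn)
    (S7.achievable_subset_of_forall_exists_netInflow_le _ _ fun _ hm => hm.exists_merge hd hc hn)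

/-- Let `D` be a directed network under the MAX-SU-SM model (arc
multiplicities `d`, per-arc capacities `c`) whose relay BSs (`Sum.inl`) all have
`r^M ≥ 1` RF chains and whose macro BSs (`Sum.inr m`) have `k m · r^M` RF chains
(`k m ≥ 1`), macro BSs having no incoming arcs.  Let `D'` be obtained by splitting
each macro BS `m` into `k m` copies with `r^M` RF chains each, each copy joined to
the relay BSs exactly as `m` was.  Then the optimal half-duplex max-min throughputs
of `D` and `D'` are equal. -/
theorem split_macro_bs_preserves_optimum
    (Vr Vm : Type) [Fintype Vr] [Fintype Vm] [DecidableEq Vr] [DecidableEq Vm]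
    (rM : ℕ) (hrM : 1 ≤ rM) (k : Vm → ℕ) (hk : ∀ m, 1 ≤ k m)
    (d : (Vr ⊕ Vm) → (Vr ⊕ Vm) → ℕ) (c : (Vr ⊕ Vm) → (Vr ⊕ Vm) → ℝ)
    (hloop : ∀ v, d v v = 0)
    (hmax : ∀ u v, d u v ≠ 0 →
      d u v = min (Sum.elim (fun _ => rM) (fun m => k m * rM) u)
                  (Sum.elim (fun _ => rM) (fun m => k m * rM) v))
    (hpos : ∀ u v, d u v ≠ 0 → 0 < c u v)
    (hmacIn : ∀ u (m : Vm), d u (Sum.inr m) = 0) :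
    S7.optTp (fun a => ∃ x, a = Sum.inl x) d c
        (Sum.elim (fun _ => rM) (fun m => k m * rM)) rM
      = S7.optTp (V := Vr ⊕ (Σ m : Vm, Fin (k m)))
          (fun a => ∃ x, a = Sum.inl x)
          (fun a b => d (S7.proj a) (S7.proj b))
          (fun a b => c (S7.proj a) (S7.proj b))
          (fun _ => rM) rM := by
  have hd (a y) (h : d (Sum.inr a) (Sum.inl y) ≠ 0) : rM ≤ d (Sum.inr a) (Sum.inl y) :=
    (le_min (Nat.le_mul_of_pos_left rM (hk a)) le_rfl).trans_eq (hmax _ _ h).symm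
  simpa using split_macro_bs_preserves_optimum_general (fun _ => rM)
    (fun _ : Σ a, Fin (k a) => rM) (fun _ => le_rfl) d c hd fun x a h => (hpos _ _ h).le
end

section
/- Let G be a finite simple graph with positive edge weights w and a number b(v) ∈ ℕ, b(v) ≥ 1, for each vertex v. Construct the graph G'' as follows: replace each vertex v by b(v) copies v^{(1)}, …, v^{(b(v))}; replace each edge {u,v} of G by the b(u)·b(v) edges {u^{(i)}, v^{(j)}} for all i, j, each with weight w({u,v}); then take two disjoint copies of the resulting graph and join each pair of corresponding vertices by an edge of weight 0. Then G'' has a perfect matching, and the maximum weight of a perfect matching of G'' equals 2·W, where W is the maximum weight of a b-matching of G, i.e., the maximum of Σ_{e ∈ E(G)} f(e)·w(e) over functions f : E(G) → ℕ with Σ_{e incident to v} f(e) ≤ b(v) for every vertex v. -/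
namespace S12

/-- Vertices of Tutte's gadget graph `G''`: two copies (indexed by `Bool`) of the
graph obtained from `G` by splitting each vertex `v` into `b v` copies. -/
abbrev W (V : Type) (b : V → ℕ) := Bool × Σ v : V, Fin (b v)

/-- Adjacency of `G''`: within a copy, `u⁽ⁱ⁾ ~ v⁽ʲ⁾` whenever `u ~ v` in `G`;
across the two copies, each pair of corresponding vertices is joined. -/
def adj'' {V : Type} (G : SimpleGraph V) {b : V → ℕ} (a c : W V b) : Prop :=
  (a.1 = c.1 ∧ G.Adj a.2.1 c.2.1) ∨ (a.1 ≠ c.1 ∧ a.2 = c.2)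

/-- Edge weights of `G''`: the weight `w u v` on split edges, `0` on the edges
joining the two copies. -/
noncomputable def wt'' {V : Type} (w : V → V → ℝ) {b : V → ℕ} (a c : W V b) : ℝ :=
  if a.1 = c.1 then w a.2.1 c.2.1 else 0

/-- `σ` is a perfect matching of `G''`, encoded as a fixed-point-free involution
matching adjacent vertices. -/
def isPM {V : Type} (G : SimpleGraph V) {b : V → ℕ} (σ : W V b → W V b) : Prop :=
  (∀ x, σ (σ x) = x) ∧ (∀ x, σ x ≠ x) ∧ (∀ x, adj'' G x (σ x))

/-- The weight of the perfect matching `σ` (each matched pair is counted twice in the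
sum, hence the division by `2`). -/
noncomputable def pmwt {V : Type} [Fintype V] (w : V → V → ℝ) {b : V → ℕ}
    [∀ v, Fintype (Fin (b v))] (σ : W V b → W V b) : ℝ :=
  (∑ x : W V b, wt'' w x (σ x)) / 2

/-- `f` is a `b`-matching of `G`: symmetric edge multiplicities supported on edges of
`G`, with `Σ_u f v u ≤ b v` at every vertex `v`. -/
def isBM {V : Type} [Fintype V] (G : SimpleGraph V) (b : V → ℕ) (f : V → V → ℕ) : Prop :=
  (∀ u v, f u v = f v u) ∧ (∀ u v, ¬ G.Adj u v → f u v = 0) ∧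
  (∀ v, ∑ u, f v u ≤ b v)

/-- The weight of the `b`-matching `f`. -/
noncomputable def bmwt {V : Type} [Fintype V] (w : V → V → ℝ) (f : V → V → ℕ) : ℝ :=
  (∑ u, ∑ v, (f u v : ℝ) * w u v) / 2

end S12

/-!
Between the `b`-matchings of `G` and the perfect matchings of `G''` stand the ordinary matchings of
the split graph. A `b`-matching `f` has at most `b v` edge ends at `v`, so these can be placed on
distinct copies of `v`, which yields a matching of the split graph of the same weight; conversely,
merging the copies of every vertex turns a matching of the split graph into a `b`-matching. A
matching of the split graph, used in both halves of `G''` and completed by the weight-`0` edges at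
the uncovered vertices, is a perfect matching of twice the weight. A perfect matching of `G''`
restricts to one matching of the split graph in each half, and the two weights add up to its own, so
it weighs at most twice the maximum.
-/

namespace S12

open Finset

section Doubling

variable {α : Type*}

/-- The perfect matching of `Bool × α` obtained from a matching `π` of `α`, encoded as an involution
whose fixed points are the uncovered vertices: `π` is used in both halves, and the two copies of an
uncovered vertex are matched with each other. -/
def double [DecidableEq α] (π : α → α) (p : Bool × α) : Bool × α :=
  if π p.2 = p.2 then (!p.1, p.2) else (p.1, π p.2)

/-- The matching that a perfect matching `σ` of `Bool × α` induces on the half `c`, encoded as an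
involution: the vertices which `σ` matches with the other half become fixed points. -/
def restrictHalf (σ : Bool × α → Bool × α) (c : Bool) (x : α) : α :=
  if (σ (c, x)).1 = c then (σ (c, x)).2 else x

theorem double_involutive [DecidableEq α] {π : α → α} (hπ : π.Involutive) :
    (double π).Involutive := by
  rintro ⟨c, x⟩
  by_cases hx : π x = x
  · simp [double, hx]
  · simp [double, hx, hπ x, Ne.symm hx]

theorem restrictHalf_involutive {σ : Bool × α → Bool × α} (hσ : σ.Involutive) (c : Bool) :
    (restrictHalf σ c).Involutive := by
  intro x
  by_cases hx : (σ (c, x)).1 = c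
  · have hpair : (c, (σ (c, x)).2) = σ (c, x) := Prod.ext hx.symm rfl
    simp only [restrictHalf, if_pos hx, hpair, hσ (c, x), ↓reduceIte]
  · simp only [restrictHalf, if_neg hx]

theorem restrictHalf_eq_self_iff {σ : Bool × α → Bool × α} {c : Bool} {x : α}
    (hσ : σ (c, x) ≠ (c, x)) : restrictHalf σ c x = x ↔ (σ (c, x)).1 ≠ c := by
  by_cases hx : (σ (c, x)).1 = c
  · rw [restrictHalf, if_pos hx]
    exact iff_of_false (fun hfix => hσ (Prod.ext hx hfix)) (not_not.2 hx)
  · rw [restrictHalf, if_neg hx]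
    exact iff_of_true rfl hx

end Doubling

section SplitMatching

/-- The vertices of the split graph: `b v` copies of each vertex `v`. -/
abbrev SplitVertex (V : Type) (b : V → ℕ) := Σ v : V, Fin (b v)

/-- `π` is a matching of the split graph, encoded as an involution whose fixed points are the
uncovered vertices. -/
structure IsSplitMatching {V : Type} (G : SimpleGraph V) {b : V → ℕ}
    (π : SplitVertex V b → SplitVertex V b) : Prop where
  involutive : π.Involutive
  adj_of_ne : ∀ x, π x ≠ x → G.Adj x.1 (π x).1

variable {V : Type} [Fintype V] [DecidableEq V] {G : SimpleGraph V} {b : V → ℕ}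

/-- The weight of the matching `π` of the split graph; each matched pair is counted twice in the
sum, hence the division by `2`. -/
noncomputable def splitWeight (w : V → V → ℝ) (π : SplitVertex V b → SplitVertex V b) : ℝ :=
  (∑ x with π x ≠ x, w x.1 (π x).1) / 2

/-- The `b`-matching obtained from the matching `π` of the split graph by merging the copies of each
vertex: the multiplicity of `{u, v}` is the number of copies of `u` matched with a copy of `v`. -/
def mergeCopies (π : SplitVertex V b → SplitVertex V b) (u v : V) : ℕ :=
  #{x | π x ≠ x ∧ x.1 = u ∧ (π x).1 = v}

theorem mergeCopies_comm {π : SplitVertex V b → SplitVertex V b} (hπ : π.Involutive) (u v : V) :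
    mergeCopies π u v = mergeCopies π v u := by
  have swaps_ends : ∀ u v x, π x ≠ x ∧ x.1 = u ∧ (π x).1 = v →
      π (π x) ≠ π x ∧ (π x).1 = v ∧ (π (π x)).1 = u := by
    rintro u v x ⟨hx, hu, hv⟩
    exact ⟨hπ.injective.ne hx, hv, (hπ x).symm ▸ hu⟩
  refine card_nbij' π π ?_ ?_ (fun x _ => hπ x) (fun x _ => hπ x) <;>
    intro x hx <;> simp only [mem_coe, mem_filter_univ] at hx ⊢ <;>
    exact swaps_ends _ _ x hx

theorem card_copies (b : V → ℕ) (v : V) : #{x : SplitVertex V b | x.1 = v} = b v := by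
  rw [card_filter, Fintype.sum_sigma]
  simp [apply_ite card]

theorem sum_mergeCopies_le (π : SplitVertex V b → SplitVertex V b) (u : V) :
    ∑ v, mergeCopies π u v ≤ b u := by
  calc ∑ v, mergeCopies π u v = #{x | π x ≠ x ∧ x.1 = u} := by
        simp only [mergeCopies, ← and_assoc, ← filter_filter _ (fun x => (π x).1 = _)]
        exact (card_eq_sum_card_fiberwise fun _ _ => mem_coe.2 (mem_univ _)).symm
    _ ≤ #{x : SplitVertex V b | x.1 = u} := card_le_card (monotone_filter_right _ fun _ _ h => h.2)
    _ = b u := card_copies b u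

theorem IsSplitMatching.isBM_mergeCopies {π : SplitVertex V b → SplitVertex V b}
    (hπ : IsSplitMatching G π) : isBM G b (mergeCopies π) := by
  refine ⟨mergeCopies_comm hπ.involutive, fun u v huv => ?_, sum_mergeCopies_le π⟩
  refine card_eq_zero.2 (filter_eq_empty_iff.2 ?_)
  rintro x - ⟨hx, rfl, rfl⟩
  exact huv (hπ.adj_of_ne x hx)

theorem bmwt_mergeCopies (w : V → V → ℝ) (π : SplitVertex V b → SplitVertex V b) :
    bmwt w (mergeCopies π) = splitWeight w π := by
  rw [bmwt, splitWeight]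
  congr 1
  calc ∑ u, ∑ v, (mergeCopies π u v : ℝ) * w u v
      = ∑ e : V × V, ∑ x ∈ {x | π x ≠ x} with (x.1, (π x).1) = e, w e.1 e.2 := by
        simp only [Fintype.sum_prod_type, sum_const, nsmul_eq_mul, mergeCopies, filter_filter,
          Prod.mk.injEq]
    _ = ∑ x with π x ≠ x, w x.1 (π x).1 :=
        sum_fiberwise' {x | π x ≠ x} (fun x => (x.1, (π x).1)) (fun e : V × V => w e.1 e.2)

end SplitMatching

section EdgeEnds

theorem viaFintypeEmbedding_involutive {α β : Type*} [Fintype α] [DecidableEq β]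
    {s : Equiv.Perm α} (hs : Function.Involutive s) (e : α ↪ β) :
    Function.Involutive (s.viaFintypeEmbedding e) := by
  intro x
  by_cases hx : x ∈ Set.range e
  · obtain ⟨a, rfl⟩ := hx
    rw [s.viaFintypeEmbedding_apply_image, s.viaFintypeEmbedding_apply_image, hs a]
  · simp only [s.viaFintypeEmbedding_apply_notMem_range e hx]

variable {V : Type} {f : V → V → ℕ}

/-- The ends of the edges of the multigraph with edge multiplicities `f`: `⟨v, u, k⟩` is the end at
`v` of the `k`-th edge between `v` and `u`. -/
abbrev EdgeEnd (f : V → V → ℕ) := Σ v : V, Σ u : V, Fin (f v u)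

/-- The permutation exchanging the two ends of every edge. -/
def flipEnd (hf : ∀ u v, f u v = f v u) : Equiv.Perm (EdgeEnd f) :=
  Function.Involutive.toPerm (fun d => ⟨d.2.1, d.1, Fin.cast (hf _ _) d.2.2⟩) fun _ => rfl

theorem flipEnd_involutive (hf : ∀ u v, f u v = f v u) : Function.Involutive (flipEnd hf) :=
  Function.Involutive.toPerm_involutive _

variable [Fintype V] {G : SimpleGraph V} {b : V → ℕ}

theorem isBM.adj (hf : isBM G b f) (d : EdgeEnd f) : G.Adj d.1 d.2.1 := by
  by_contra hnot
  exact (Fin.cast (hf.2.1 _ _ hnot) d.2.2).elim0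

theorem exists_edgeEnd_embedding (hf : ∀ v, ∑ u, f v u ≤ b v) :
    ∃ e : EdgeEnd f ↪ SplitVertex V b, ∀ d, (e d).1 = d.1 := by
  have hv : ∀ v, Nonempty ((Σ u, Fin (f v u)) ↪ Fin (b v)) := fun v =>
    Function.Embedding.nonempty_of_card_le (by simpa using hf v)
  exact ⟨(Function.Embedding.refl V).sigmaMap fun v => (hv v).some, fun _ => rfl⟩

variable [DecidableEq V] {e : EdgeEnd f ↪ SplitVertex V b}

theorem isBM.viaFintypeEmbedding_flipEnd_ne_self_iff (hf : isBM G b f)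
    (x : SplitVertex V b) :
    (flipEnd hf.1).viaFintypeEmbedding e x ≠ x ↔ x ∈ Set.range e := by
  refine ⟨fun hx => ?_, ?_⟩
  · contrapose! hx
    exact Equiv.Perm.viaFintypeEmbedding_apply_notMem_range _ _ hx
  · rintro ⟨d, rfl⟩ hfix
    rw [Equiv.Perm.viaFintypeEmbedding_apply_image] at hfix
    have hloop : d.2.1 = d.1 := congrArg Sigma.fst (e.injective hfix)
    exact (hf.adj d).ne' hloop

theorem isBM.isSplitMatching_viaFintypeEmbedding_flipEnd (hf : isBM G b f)
    (he : ∀ d, (e d).1 = d.1) :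
    IsSplitMatching G ((flipEnd hf.1).viaFintypeEmbedding e) where
  involutive := viaFintypeEmbedding_involutive (flipEnd_involutive hf.1) e
  adj_of_ne x hx := by
    obtain ⟨d, rfl⟩ := (hf.viaFintypeEmbedding_flipEnd_ne_self_iff x).1 hx
    rw [Equiv.Perm.viaFintypeEmbedding_apply_image, he, he]
    exact hf.adj d

theorem isBM.splitWeight_viaFintypeEmbedding_flipEnd (w : V → V → ℝ) (hf : isBM G b f)
    (he : ∀ d, (e d).1 = d.1) :
    splitWeight w ((flipEnd hf.1).viaFintypeEmbedding e) = bmwt w f := by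
  have hcovered : ({x | (flipEnd hf.1).viaFintypeEmbedding e x ≠ x} : Finset _) = univ.map e := by
    ext x
    simp only [mem_filter_univ, hf.viaFintypeEmbedding_flipEnd_ne_self_iff, mem_map, mem_univ,
      true_and, Set.mem_range]
  rw [splitWeight, bmwt, hcovered, sum_map]
  congr 1
  calc ∑ d, w (e d).1 ((flipEnd hf.1).viaFintypeEmbedding e (e d)).1
      = ∑ d : EdgeEnd f, w d.1 d.2.1 := by
        simp only [Equiv.Perm.viaFintypeEmbedding_apply_image, he]
        rfl
    _ = ∑ u, ∑ v, (f u v : ℝ) * w u v := by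
        simp only [Fintype.sum_sigma, sum_const, card_univ, Fintype.card_fin, nsmul_eq_mul]

theorem isBM.exists_isSplitMatching (hf : isBM G b f) :
    ∃ π : SplitVertex V b → SplitVertex V b,
      IsSplitMatching G π ∧ ∀ w, splitWeight w π = bmwt w f := by
  obtain ⟨e, he⟩ := exists_edgeEnd_embedding hf.2.2
  exact ⟨_, hf.isSplitMatching_viaFintypeEmbedding_flipEnd he,
    fun w => hf.splitWeight_viaFintypeEmbedding_flipEnd w he⟩

end EdgeEnds

section PerfectMatching

variable {V : Type} {G : SimpleGraph V} {b : V → ℕ}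

theorem IsSplitMatching.isPM_double [DecidableEq V] {π : SplitVertex V b → SplitVertex V b}
    (hπ : IsSplitMatching G π) : isPM G (double π) := by
  refine ⟨double_involutive hπ.involutive, ?_, ?_⟩ <;> rintro ⟨c, x⟩ <;> by_cases hx : π x = x
  · simp [double, hx]
  · simp [double, hx]
  · simp [double, adj'', hx]
  · simp [double, adj'', hx, hπ.adj_of_ne x hx]

theorem isPM.isSplitMatching_restrictHalf {σ : W V b → W V b} (hσ : isPM G σ) (c : Bool) :
    IsSplitMatching G (restrictHalf σ c) where
  involutive := restrictHalf_involutive hσ.1 c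
  adj_of_ne x hx := by
    have hc : (σ (c, x)).1 = c :=
      not_not.1 fun hc => hx ((restrictHalf_eq_self_iff (hσ.2.1 _)).2 hc)
    rw [restrictHalf, if_pos hc]
    exact (hσ.2.2 (c, x)).elim And.right fun hcross => absurd hc.symm hcross.1

variable [Fintype V]

theorem pmwt_double [DecidableEq V] (w : V → V → ℝ) (π : SplitVertex V b → SplitVertex V b) :
    pmwt w (double π) = 2 * splitWeight w π := by
  have hhalf : ∀ c x, wt'' w (c, x) (double π (c, x)) = if π x ≠ x then w x.1 (π x).1 else 0 := by
    intro c x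
    by_cases hx : π x = x <;> simp [wt'', double, hx]
  simp only [pmwt, splitWeight, Fintype.sum_prod_type, hhalf, sum_filter, Fintype.sum_bool]
  ring

theorem isPM.pmwt_eq_sum_splitWeight [DecidableEq V] (w : V → V → ℝ) {σ : W V b → W V b}
    (hσ : isPM G σ) : pmwt w σ = ∑ c, splitWeight w (restrictHalf σ c) := by
  have hhalf : ∀ c x, wt'' w (c, x) (σ (c, x)) =
      if restrictHalf σ c x ≠ x then w x.1 (restrictHalf σ c x).1 else 0 := by
    intro c x
    simp only [ne_eq, restrictHalf_eq_self_iff (hσ.2.1 _)]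
    by_cases hc : (σ (c, x)).1 = c
    · simp [wt'', restrictHalf, hc]
    · simp [wt'', hc, Ne.symm hc]
  simp only [pmwt, splitWeight, Fintype.sum_prod_type, hhalf, sum_filter, sum_div]

theorem isBM.exists_isPM_pmwt_eq {f : V → V → ℕ} (hf : isBM G b f) :
    ∃ σ : W V b → W V b, isPM G σ ∧ ∀ w, pmwt w σ = 2 * bmwt w f := by
  classical
  obtain ⟨π, hπ, hweight⟩ := hf.exists_isSplitMatching
  exact ⟨double π, hπ.isPM_double, fun w => by rw [pmwt_double, hweight]⟩

theorem isPM.exists_isBM_pmwt_eq {σ : W V b → W V b} (hσ : isPM G σ) :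
    ∃ f : Bool → V → V → ℕ, (∀ c, isBM G b (f c)) ∧ ∀ w, pmwt w σ = ∑ c, bmwt w (f c) := by
  classical
  refine ⟨fun c => mergeCopies (restrictHalf σ c),
    fun c => (hσ.isSplitMatching_restrictHalf c).isBM_mergeCopies, fun w => ?_⟩
  simp only [bmwt_mergeCopies, hσ.pmwt_eq_sum_splitWeight]

end PerfectMatching

section MaximumWeight

variable {V : Type} [Fintype V] (G : SimpleGraph V) (b : V → ℕ)

theorem isBM_zero : isBM G b 0 :=
  ⟨fun _ _ => rfl, fun _ _ _ => rfl, fun _ => by simp⟩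

theorem finite_setOf_isBM : {f | isBM G b f}.Finite := by
  classical
  refine (Set.finite_Icc (0 : V → V → ℕ) fun u _ => b u).subset ?_
  rintro f ⟨-, -, hdeg⟩
  exact ⟨zero_le, fun u v =>
    (single_le_sum (fun _ _ => Nat.zero_le _) (mem_univ v)).trans (hdeg u)⟩

theorem exists_isBM_forall_bmwt_le (w : V → V → ℝ) :
    ∃ f, isBM G b f ∧ ∀ g, isBM G b g → bmwt w g ≤ bmwt w f :=
  Set.exists_max_image _ (bmwt w) (finite_setOf_isBM G b) ⟨0, isBM_zero G b⟩

end MaximumWeight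

end S12

theorem tutte_reduction_b_matching_general
    (V : Type) [Fintype V] (G : SimpleGraph V)
    (w : V → V → ℝ) (_hwsym : ∀ u v, w u v = w v u) (b : V → ℕ) :
    (∃ σ : S12.W V b → S12.W V b, S12.isPM G σ) ∧
    ∃ Wmax : ℝ,
      (∃ f, S12.isBM G b f ∧ S12.bmwt w f = Wmax) ∧
      (∀ f, S12.isBM G b f → S12.bmwt w f ≤ Wmax) ∧
      (∃ σ : S12.W V b → S12.W V b, S12.isPM G σ ∧ S12.pmwt w σ = 2 * Wmax) ∧
      (∀ σ : S12.W V b → S12.W V b, S12.isPM G σ → S12.pmwt w σ ≤ 2 * Wmax) := by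
  obtain ⟨f, hf, hmax⟩ := S12.exists_isBM_forall_bmwt_le G b w
  obtain ⟨σ, hσ, hweight⟩ := hf.exists_isPM_pmwt_eq
  refine ⟨⟨σ, hσ⟩, S12.bmwt w f, ⟨f, hf, rfl⟩, hmax, ⟨σ, hσ, hweight w⟩, fun τ hτ => ?_⟩
  obtain ⟨g, hg, hsum⟩ := hτ.exists_isBM_pmwt_eq
  calc S12.pmwt w τ = ∑ c, S12.bmwt w (g c) := hsum w
    _ ≤ ∑ _c : Bool, S12.bmwt w f := Finset.sum_le_sum fun c _ => hmax (g c) (hg c)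
    _ = 2 * S12.bmwt w f := by simp

/-- For a finite simple graph `G` with positive symmetric edge weights
`w` and vertex capacities `b v ≥ 1`, the Tutte gadget graph `G''` has a perfect
matching, and the maximum weight of a perfect matching of `G''` equals `2·W`, where
`W` is the maximum weight of a `b`-matching of `G`. -/
theorem tutte_reduction_b_matching
    (V : Type) [Fintype V] [DecidableEq V]
    (G : SimpleGraph V)
    (w : V → V → ℝ) (hwsym : ∀ u v, w u v = w v u)
    (hwpos : ∀ u v, G.Adj u v → 0 < w u v)
    (b : V → ℕ) (hb : ∀ v, 1 ≤ b v) :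
    (∃ σ : S12.W V b → S12.W V b, S12.isPM G σ) ∧
    ∃ Wmax : ℝ,
      (∃ f, S12.isBM G b f ∧ S12.bmwt w f = Wmax) ∧
      (∀ f, S12.isBM G b f → S12.bmwt w f ≤ Wmax) ∧
      (∃ σ : S12.W V b → S12.W V b, S12.isPM G σ ∧ S12.pmwt w σ = 2 * Wmax) ∧
      (∀ σ : S12.W V b → S12.W V b, S12.isPM G σ → S12.pmwt w σ ≤ 2 * Wmax) := by
  exact tutte_reduction_b_matching_general V G w hwsym b
end

section
/- Let G be a finite loopless multigraph with positive edge weights w and a number b(v) ∈ ℕ, 1 ≤ b(v) ≤ deg(v), for each vertex v. Construct the graph G'' as follows: for each vertex v create b(v) outer vertices v^{(1)}, …, v^{(b(v))}; for each edge e = {u,v} of G create two inner vertices e_u, e_v and the edges {u^{(i)}, e_u} for all i, the edge {e_u, e_v}, and the edges {e_v, v^{(j)}} for all j, each of weight w(e); then take two disjoint copies of the resulting graph and join each pair of corresponding outer vertices by an edge of weight 0. Then G'' has a perfect matching, and the maximum weight of a perfect matching of G'' equals 2·(Σ_{e ∈ E(G)} w(e) + W), where W is the maximum weight of a simple b-matching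 of G, i.e., the maximum of Σ_{e ∈ S} w(e) over sets S ⊆ E(G) of edges such that every vertex v is incident to at most b(v) edges of S. -/
namespace S13

/-- One copy of Schrijver's gadget graph: outer vertices `v⁽ⁱ⁾` (`Sum.inl ⟨v, i⟩`,
`i < b v`) and inner vertices `e_u = Sum.inr (e, false)`, `e_v = Sum.inr (e, true)`
for each edge `e = {u, v}` (with `u = fst e`, `v = snd e`). -/
abbrev Core (V E : Type) (b : V → ℕ) := (Σ v : V, Fin (b v)) ⊕ (E × Bool)

/-- Vertices of the full gadget graph `G''`: two copies of the core graph. -/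
abbrev W (V E : Type) (b : V → ℕ) := Bool × Core V E b

/-- Adjacency within one copy: `{u⁽ⁱ⁾, e_u}` for `fst e = u`, `{e_u, e_v}`, and
`{e_v, v⁽ʲ⁾}` for `snd e = v`. -/
def adj0 {V E : Type} (fst snd : E → V) {b : V → ℕ} :
    Core V E b → Core V E b → Prop :=
  fun x y =>
    match x, y with
    | Sum.inl a, Sum.inr (e, s) => (s = false ∧ fst e = a.1) ∨ (s = true ∧ snd e = a.1)
    | Sum.inr (e, s), Sum.inl a => (s = false ∧ fst e = a.1) ∨ (s = true ∧ snd e = a.1)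
    | Sum.inr (e, s), Sum.inr (e', s') => e = e' ∧ s ≠ s'
    | _, _ => False

/-- Weights within one copy: all gadget edges coming from edge `e` get weight `w e`. -/
def wt0 {V E : Type} (w : E → ℝ) {b : V → ℕ} : Core V E b → Core V E b → ℝ :=
  fun x y =>
    match x, y with
    | Sum.inl _, Sum.inr (e, _) => w e
    | Sum.inr (e, _), _ => w e
    | _, _ => 0

/-- Adjacency of `G''`: the core adjacency within each copy, plus a zero-weight edge
between each pair of corresponding outer vertices of the two copies. -/
def adj'' {V E : Type} (fst snd : E → V) {b : V → ℕ} (a c : W V E b) : Prop :=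
  (a.1 = c.1 ∧ adj0 fst snd a.2 c.2) ∨
  (a.1 ≠ c.1 ∧ ∃ x : Σ v : V, Fin (b v), a.2 = Sum.inl x ∧ c.2 = Sum.inl x)

/-- Edge weights of `G''`. -/
noncomputable def wt'' {V E : Type} (w : E → ℝ) {b : V → ℕ} (a c : W V E b) : ℝ :=
  if a.1 = c.1 then wt0 w a.2 c.2 else 0

/-- `σ` is a perfect matching of `G''`, encoded as a fixed-point-free involution
matching adjacent vertices. -/
def isPM {V E : Type} (fst snd : E → V) {b : V → ℕ} (σ : W V E b → W V E b) : Prop :=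
  (∀ x, σ (σ x) = x) ∧ (∀ x, σ x ≠ x) ∧ (∀ x, adj'' fst snd x (σ x))

/-- The weight of the perfect matching `σ` (each matched pair is counted twice, hence
the division by `2`). -/
noncomputable def pmwt {V E : Type} [Fintype V] [Fintype E] (w : E → ℝ) {b : V → ℕ}
    (σ : W V E b → W V E b) : ℝ :=
  (∑ x : W V E b, wt'' w x (σ x)) / 2

/-- `S` is a simple `b`-matching of the multigraph `G`: a set of edges such that every
vertex `v` is incident to at most `b v` edges of `S`. -/
def isSBM {V E : Type} [Fintype E] [DecidableEq V] (fst snd : E → V) (b : V → ℕ)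
    (S : Finset E) : Prop :=
  ∀ v, (S.filter (fun e => fst e = v ∨ snd e = v)).card ≤ b v

end S13

/-!
Cut every edge `e = {u, v}` of `G` into its two half-edges, represented by the inner vertices `e_u`
and `e_v`. Inside one copy of the core graph a perfect matching uses either the middle edge
`{e_u, e_v}`, or one outer edge at each of `e_u` and `e_v`. The edges `S` of the second kind form a
simple `b`-matching, since their half-edges at `v` occupy distinct vertices among the `b v` outer
vertices `v⁽ⁱ⁾`; the copy contributes `w e` for `e ∉ S` and `2 * w e` for `e ∈ S`.

Conversely, a simple `b`-matching `S` gives a matching of the core graph that covers every inner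
vertex. Using it in both copies leaves the same outer vertices uncovered in each of them, and the
edges of weight `0` join these in pairs.
-/

section Fibers

variable {α ι : Type*} {β : ι → Type*} [Fintype α] [DecidableEq ι] [∀ i, Fintype (β i)]

theorem exists_embedding_sigma_iff_card_fiber_le (f : α → ι) :
    (∃ k : α ↪ Σ i, β i, ∀ x, (k x).1 = f x) ↔
      ∀ i, Fintype.card {x // f x = i} ≤ Fintype.card (β i) := by
  simp only [← Function.Embedding.nonempty_iff_card_le]
  constructor
  · rintro ⟨k, hk⟩ i
    have maps_fiber : ∀ x, f x = i → (k x).1 = i := fun x hx => (hk x).trans hx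
    exact ⟨(k.subtypeMap maps_fiber).trans (Equiv.sigmaSubtype i).toEmbedding⟩
  · intro hfiber
    exact ⟨(Equiv.sigmaFiberEquiv f).symm.toEmbedding.trans
      (.sigmaMap (.refl ι) fun i => (hfiber i).some), fun _ => rfl⟩

end Fibers

namespace S13

variable {V E : Type} {fst snd : E → V} {b : V → ℕ}

/-- The vertex of `G` to which the half-edge `(e, s)` is attached; half-edges index the inner
vertices `Sum.inr (e, s)` of the core graph. -/
def endpoint (fst snd : E → V) (e : E) (s : Bool) : V := if s then snd e else fst e

@[simp] theorem endpoint_false (e : E) : endpoint fst snd e false = fst e := rfl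

@[simp] theorem endpoint_true (e : E) : endpoint fst snd e true = snd e := rfl

theorem card_halfEdges_at [DecidableEq V] (hloop : ∀ e, fst e ≠ snd e) (S : Finset E) (v : V) :
    Fintype.card {p : S × Bool // endpoint fst snd p.1 p.2 = v} =
      (S.filter fun e => fst e = v ∨ snd e = v).card := by
  rw [Fintype.card_subtype]
  refine Finset.card_nbij (fun p => (p.1 : E)) ?maps ?inj ?surj
  case maps =>
    rintro ⟨⟨e, he⟩, _ | _⟩ <;> simp +contextual [he]
  case inj =>
    rintro ⟨⟨e, he⟩, s⟩ hs ⟨⟨e', he'⟩, s'⟩ hs' (rfl : e = e')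
    have := hloop e
    cases s <;> cases s' <;> simp_all [eq_comm]
  case surj =>
    intro e he
    obtain ⟨he, hv | hv⟩ := Finset.mem_filter.1 he
    · exact ⟨(⟨e, he⟩, false), by simpa using hv, rfl⟩
    · exact ⟨(⟨e, he⟩, true), by simpa using hv, rfl⟩

theorem isSBM_iff_exists_embedding [Fintype E] [DecidableEq V] (hloop : ∀ e, fst e ≠ snd e)
    (S : Finset E) :
    isSBM fst snd b S ↔
      ∃ k : S × Bool ↪ Σ v, Fin (b v), ∀ p, (k p).1 = endpoint fst snd p.1 p.2 := by
  rw [exists_embedding_sigma_iff_card_fiber_le]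
  simp only [card_halfEdges_at hloop, Fintype.card_fin, isSBM]

theorem isSBM_empty [Fintype E] [DecidableEq V] : isSBM fst snd b ∅ := fun v => by simp

theorem exists_isSBM_forall_sum_le [Fintype E] [DecidableEq V] {R : Type*} [AddCommMonoid R]
    [LinearOrder R] (fst snd : E → V) (b : V → ℕ) (w : E → R) :
    ∃ S, isSBM fst snd b S ∧ ∀ T, isSBM fst snd b T → ∑ e ∈ T, w e ≤ ∑ e ∈ S, w e :=
  Set.exists_max_image {S | isSBM fst snd b S} (fun S => ∑ e ∈ S, w e) (Set.toFinite _)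
    ⟨∅, isSBM_empty⟩

theorem adj0_inl_inr_iff (a : Σ v, Fin (b v)) (e : E) (s : Bool) :
    adj0 fst snd (.inl a) (.inr (e, s)) ↔ a.1 = endpoint fst snd e s := by
  cases s <;> simp [adj0, endpoint, eq_comm]

theorem adj0_inr_inl_iff (e : E) (s : Bool) (a : Σ v, Fin (b v)) :
    adj0 fst snd (.inr (e, s)) (.inl a) ↔ a.1 = endpoint fst snd e s :=
  adj0_inl_inr_iff a e s

theorem adj0_inr_inr_iff (e e' : E) (s s' : Bool) :
    adj0 (b := b) fst snd (.inr (e, s)) (.inr (e', s')) ↔ e' = e ∧ s' = !s := by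
  cases s <;> cases s' <;> simp [adj0, eq_comm]

theorem adj0_irrefl (x : Core V E b) : ¬ adj0 fst snd x x := by
  rcases x with _ | ⟨e, s⟩ <;> simp [adj0]

theorem adj''_irrefl (x : W V E b) : ¬ adj'' fst snd x x := by
  simp [adj'', adj0_irrefl]

theorem adj''_inr_iff (c : Bool) (e : E) (s : Bool) (y : W V E b) :
    adj'' fst snd (c, .inr (e, s)) y ↔
      (∃ a, y = (c, .inl a) ∧ a.1 = endpoint fst snd e s) ∨ y = (c, .inr (e, !s)) := by
  obtain ⟨c', a | ⟨e', s'⟩⟩ := y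
  · simp [adj'', adj0_inr_inl_iff, eq_comm (a := c), and_assoc]
  · simp [adj'', adj0_inr_inr_iff, eq_comm (a := c)]

namespace isPM

variable {σ : W V E b → W V E b}

theorem involutive (hσ : isPM fst snd σ) : Function.Involutive σ := hσ.1

theorem adj (hσ : isPM fst snd σ) (x : W V E b) : adj'' fst snd x (σ x) := hσ.2.2 x

theorem of_involutive (hinv : Function.Involutive σ) (hadj : ∀ x, adj'' fst snd x (σ x)) :
    isPM fst snd σ :=
  ⟨hinv, fun x hx => adj''_irrefl x (hx ▸ hadj x), hadj⟩

theorem apply_eq_comm (hσ : isPM fst snd σ) {x y : W V E b} : σ x = y ↔ σ y = x :=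
  hσ.involutive.eq_iff.trans eq_comm

end isPM

section SelectedEdges

variable [Fintype E]

open Classical in
/-- The simple `b`-matching encoded by a perfect matching `σ` in the copy `c`: the edges `e` whose
middle edge `{e_u, e_v}` is not used by `σ`. -/
noncomputable def selectedEdges (σ : W V E b → W V E b) (c : Bool) : Finset E :=
  {e | σ (c, .inr (e, false)) ≠ (c, .inr (e, true))}

theorem mem_selectedEdges {σ : W V E b → W V E b} {c : Bool} {e : E} :
    e ∈ selectedEdges σ c ↔ σ (c, .inr (e, false)) ≠ (c, .inr (e, true)) := by
  simp [selectedEdges]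

namespace isPM

variable {σ : W V E b → W V E b}

theorem mem_selectedEdges_iff (hσ : isPM fst snd σ) {c : Bool} {e : E} (s : Bool) :
    e ∈ selectedEdges σ c ↔ σ (c, .inr (e, s)) ≠ (c, .inr (e, !s)) := by
  cases s
  · exact mem_selectedEdges
  · exact mem_selectedEdges.trans hσ.apply_eq_comm.not

theorem exists_outer_of_mem_selectedEdges (hσ : isPM fst snd σ) {c : Bool} {e : E}
    (he : e ∈ selectedEdges σ c) (s : Bool) :
    ∃ a : Σ v, Fin (b v), σ (c, .inr (e, s)) = (c, .inl a) ∧ a.1 = endpoint fst snd e s :=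
  ((adj''_inr_iff c e s _).1 (hσ.adj _)).resolve_right ((hσ.mem_selectedEdges_iff s).1 he)

theorem exists_outer_embedding (hσ : isPM fst snd σ) (c : Bool) :
    ∃ k : selectedEdges σ c × Bool ↪ Σ v, Fin (b v),
      (∀ p, σ (c, .inr (p.1, p.2)) = (c, .inl (k p))) ∧
      ∀ p, (k p).1 = endpoint fst snd p.1 p.2 := by
  choose k hσk hk using fun p : selectedEdges σ c × Bool =>
    hσ.exists_outer_of_mem_selectedEdges p.1.2 p.2
  refine ⟨⟨k, fun p q hpq => ?injective⟩, hσk, hk⟩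
  have same_partner : σ (c, .inr (p.1, p.2)) = σ (c, .inr (q.1, q.2)) := by
    rw [hσk, hσk, hpq]
  have same_halfEdge := Sum.inr_injective (Prod.ext_iff.1 (hσ.involutive.injective same_partner)).2
  exact Prod.ext (Subtype.ext (Prod.ext_iff.1 same_halfEdge).1) (Prod.ext_iff.1 same_halfEdge).2

theorem isSBM_selectedEdges [DecidableEq V] (hσ : isPM fst snd σ) (hloop : ∀ e, fst e ≠ snd e)
    (c : Bool) : isSBM fst snd b (selectedEdges σ c) :=
  have ⟨k, _, hk⟩ := hσ.exists_outer_embedding c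
  (isSBM_iff_exists_embedding hloop _).2 ⟨k, hk⟩

end isPM

end SelectedEdges

section Weight

variable {σ : W V E b → W V E b}

theorem isPM.wt''_inr (hσ : isPM fst snd σ) (w : E → ℝ) (c : Bool) (e : E) (s : Bool) :
    wt'' w (c, .inr (e, s)) (σ (c, .inr (e, s))) = w e := by
  obtain ⟨a, ha, -⟩ | hmiddle := (adj''_inr_iff c e s _).1 (hσ.adj _)
  · simp [ha, wt'', wt0]
  · simp [hmiddle, wt'', wt0]

theorem isPM.wt''_inl_eq_zero (hσ : isPM fst snd σ) (w : E → ℝ) {c : Bool} {a : Σ v, Fin (b v)}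
    (ha : ∀ e s, σ (c, .inr (e, s)) ≠ (c, .inl a)) :
    wt'' w (c, .inl a) (σ (c, .inl a)) = 0 := by
  rcases hpartner : σ (c, .inl a) with ⟨c', a' | ⟨e, s⟩⟩
  · simp [wt'', wt0]
  · have hc : c ≠ c' := by
      rintro rfl
      exact ha e s (hσ.apply_eq_comm.1 hpartner)
    simp [wt'', hc]

variable [Fintype V] [Fintype E]

theorem isPM.sum_wt''_inl (hσ : isPM fst snd σ) (w : E → ℝ) (c : Bool) :
    ∑ a, wt'' w (c, .inl a) (σ (c, .inl a)) = 2 * ∑ e ∈ selectedEdges σ c, w e := by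
  obtain ⟨k, hσk, -⟩ := hσ.exists_outer_embedding c
  have sum_eq : ∑ p : selectedEdges σ c × Bool, w p.1 =
      ∑ a, wt'' w (c, .inl a) (σ (c, .inl a)) := by
    refine Fintype.sum_of_injective k k.injective _ _ (fun a ha => ?unselected) fun p => ?selected
    case unselected =>
      refine hσ.wt''_inl_eq_zero w fun e s hes => ha ?_
      have he : e ∈ selectedEdges σ c := by simp [hσ.mem_selectedEdges_iff s, hes]
      exact ⟨(⟨e, he⟩, s), by simpa [hes] using (hσk (⟨e, he⟩, s)).symm⟩
    case selected =>
      simp [hσ.apply_eq_comm.1 (hσk p), wt'', wt0]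
  rw [← sum_eq, Fintype.sum_prod_type]
  simp only [Fintype.sum_bool, ← two_mul, ← Finset.mul_sum]
  rw [Finset.sum_coe_sort (selectedEdges σ c) w]

theorem isPM.pmwt_eq (hσ : isPM fst snd σ) (w : E → ℝ) :
    pmwt w σ = ∑ c, (∑ e, w e + ∑ e ∈ selectedEdges σ c, w e) := by
  have sum_copy (c : Bool) : ∑ x, wt'' w (c, x) (σ (c, x)) =
      2 * (∑ e, w e + ∑ e ∈ selectedEdges σ c, w e) := by
    rw [Fintype.sum_sum_type, hσ.sum_wt''_inl, Fintype.sum_prod_type]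
    simp only [hσ.wt''_inr, Fintype.sum_bool, ← two_mul, ← Finset.mul_sum]
    ring
  rw [pmwt, Fintype.sum_prod_type]
  simp only [sum_copy, ← Finset.mul_sum]
  ring

end Weight

open Classical in
/-- The map of `G''` that a map `τ` of the core graph induces: `τ` in each copy, except that the
fixed points of `τ` are exchanged with their counterparts in the other copy. An involution `τ`
encodes a matching of the core graph, its fixed points being the uncovered vertices. -/
noncomputable def double (τ : Core V E b → Core V E b) (x : W V E b) : W V E b :=
  if τ x.2 = x.2 then (!x.1, x.2) else (x.1, τ x.2)

theorem isPM_double {τ : Core V E b → Core V E b} (hinv : Function.Involutive τ)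
    (hadj : ∀ x, τ x ≠ x → adj0 fst snd x (τ x)) (hinner : ∀ p, τ (.inr p) ≠ .inr p) :
    isPM fst snd (double τ) := by
  refine .of_involutive (fun ⟨c, x⟩ => ?involutive) fun ⟨c, x⟩ => ?adjacent
  case involutive =>
    by_cases hx : τ x = x
    · simp [double, hx]
    · simp [double, hx, hinv x, Ne.symm hx]
  case adjacent =>
    by_cases hx : τ x = x
    · obtain a | p := x
      · simp [double, hx, adj'']
      · exact absurd hx (hinner p)
    · simp [double, hx, adj'', hadj x hx]

section CoreMatching

variable {S : Finset E} (k : S × Bool ↪ Σ v, Fin (b v))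

open Classical in
/-- The matching of the core graph, as an involution fixing the uncovered vertices, that joins each
half-edge `p` of `S` to the outer vertex `k p` and uses the middle edge of each edge not in `S`. -/
noncomputable def coreMatching : Core V E b → Core V E b
  | .inl a => (Function.partialInv k a).elim (.inl a) fun p => .inr (p.1, p.2)
  | .inr (e, s) => if he : e ∈ S then .inl (k (⟨e, he⟩, s)) else .inr (e, !s)

theorem coreMatching_inl_apply (p : S × Bool) :
    coreMatching k (.inl (k p)) = .inr (p.1, p.2) := by
  simp [coreMatching, Function.partialInv_left k.injective]

theorem coreMatching_inl_of_notMem_range {a : Σ v, Fin (b v)} (ha : a ∉ Set.range k) :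
    coreMatching k (.inl a) = .inl a := by
  have partialInv_eq_none : Function.partialInv k a = none := dif_neg ha
  simp [coreMatching, partialInv_eq_none]

theorem coreMatching_inr_of_mem {e : E} (he : e ∈ S) (s : Bool) :
    coreMatching k (.inr (e, s)) = .inl (k (⟨e, he⟩, s)) := by
  simp [coreMatching, he]

theorem coreMatching_inr_of_notMem {e : E} (he : e ∉ S) (s : Bool) :
    coreMatching k (.inr (e, s)) = .inr (e, !s) := by
  simp [coreMatching, he]

theorem coreMatching_inr_ne (p : E × Bool) : coreMatching k (.inr p) ≠ .inr p := by
  obtain ⟨e, s⟩ := p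
  by_cases he : e ∈ S
  · simp [coreMatching_inr_of_mem k he]
  · simp [coreMatching_inr_of_notMem k he]

theorem coreMatching_involutive : Function.Involutive (coreMatching k) := by
  rintro (a | ⟨e, s⟩)
  · by_cases ha : a ∈ Set.range k
    · obtain ⟨p, rfl⟩ := ha
      rw [coreMatching_inl_apply, coreMatching_inr_of_mem k p.1.2]
    · rw [coreMatching_inl_of_notMem_range k ha, coreMatching_inl_of_notMem_range k ha]
  · by_cases he : e ∈ S
    · rw [coreMatching_inr_of_mem k he, coreMatching_inl_apply]
    · rw [coreMatching_inr_of_notMem k he, coreMatching_inr_of_notMem k he, Bool.not_not]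

variable {k}

theorem adj0_coreMatching (hk : ∀ p, (k p).1 = endpoint fst snd p.1 p.2) {x : Core V E b}
    (hx : coreMatching k x ≠ x) : adj0 fst snd x (coreMatching k x) := by
  rcases x with a | ⟨e, s⟩
  · by_cases ha : a ∈ Set.range k
    · obtain ⟨p, rfl⟩ := ha
      rw [coreMatching_inl_apply, adj0_inl_inr_iff]
      exact hk p
    · exact absurd (coreMatching_inl_of_notMem_range k ha) hx
  · by_cases he : e ∈ S
    · rw [coreMatching_inr_of_mem k he, adj0_inr_inl_iff]
      exact hk (⟨e, he⟩, s)
    · rw [coreMatching_inr_of_notMem k he, adj0_inr_inr_iff]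
      exact ⟨rfl, rfl⟩

theorem isPM_double_coreMatching (hk : ∀ p, (k p).1 = endpoint fst snd p.1 p.2) :
    isPM fst snd (double (coreMatching k)) :=
  isPM_double (coreMatching_involutive k) (fun _ => adj0_coreMatching hk) (coreMatching_inr_ne k)

variable (k)

theorem selectedEdges_double_coreMatching [Fintype E] (c : Bool) :
    selectedEdges (double (coreMatching k)) c = S := by
  ext e
  by_cases he : e ∈ S
  · simp [mem_selectedEdges, double, coreMatching_inr_of_mem k he, he]
  · simp [mem_selectedEdges, double, coreMatching_inr_of_notMem k he, he]

end CoreMatching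

theorem isSBM.exists_isPM [Fintype E] [DecidableEq V] {S : Finset E} (hS : isSBM fst snd b S)
    (hloop : ∀ e, fst e ≠ snd e) :
    ∃ σ : W V E b → W V E b, isPM fst snd σ ∧ ∀ c, selectedEdges σ c = S :=
  have ⟨k, hk⟩ := (isSBM_iff_exists_embedding hloop S).1 hS
  ⟨double (coreMatching k), isPM_double_coreMatching hk, selectedEdges_double_coreMatching k⟩

end S13

theorem schrijver_reduction_simple_b_matching_general
    (V E : Type) [Fintype V] [DecidableEq V] [Fintype E]
    (fst snd : E → V) (hloop : ∀ e, fst e ≠ snd e)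
    (w : E → ℝ) (b : V → ℕ) :
    (∃ σ : S13.W V E b → S13.W V E b, S13.isPM fst snd σ) ∧
    ∃ Wmax : ℝ,
      (∃ S : Finset E, S13.isSBM fst snd b S ∧ (∑ e ∈ S, w e) = Wmax) ∧
      (∀ S : Finset E, S13.isSBM fst snd b S → (∑ e ∈ S, w e) ≤ Wmax) ∧
      (∃ σ : S13.W V E b → S13.W V E b, S13.isPM fst snd σ ∧
        S13.pmwt w σ = 2 * ((∑ e : E, w e) + Wmax)) ∧
      (∀ σ : S13.W V E b → S13.W V E b, S13.isPM fst snd σ →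
        S13.pmwt w σ ≤ 2 * ((∑ e : E, w e) + Wmax)) := by
  obtain ⟨S, hS, hmax⟩ := S13.exists_isSBM_forall_sum_le fst snd b w
  obtain ⟨σ, hσ, hσS⟩ := hS.exists_isPM hloop
  refine ⟨⟨σ, hσ⟩, ∑ e ∈ S, w e, ⟨S, hS, rfl⟩, hmax, ⟨σ, hσ, ?attained⟩, fun τ hτ => ?bound⟩
  case attained =>
    simp only [hσ.pmwt_eq, hσS, Fintype.sum_bool, two_mul]
  case bound =>
    calc S13.pmwt w τ
        = ∑ c, (∑ e, w e + ∑ e ∈ S13.selectedEdges τ c, w e) := hτ.pmwt_eq w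
      _ ≤ ∑ _c : Bool, (∑ e, w e + ∑ e ∈ S, w e) := by
          gcongr ∑ _, (_ + ?_) with c
          exact hmax _ (hτ.isSBM_selectedEdges hloop c)
      _ = 2 * (∑ e, w e + ∑ e ∈ S, w e) := by rw [Fintype.sum_bool, two_mul]

/-- For a finite loopless multigraph `G` (edges `E` with endpoints
`fst`, `snd`) with positive edge weights `w` and vertex capacities `1 ≤ b v ≤ deg v`,
the Schrijver gadget graph `G''` has a perfect matching, and the maximum weight of a
perfect matching of `G''` equals `2·(Σ_e w e + W)`, where `W` is the maximum weight of
a simple `b`-matching of `G`. -/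
theorem schrijver_reduction_simple_b_matching
    (V E : Type) [Fintype V] [DecidableEq V] [Fintype E] [DecidableEq E]
    (fst snd : E → V) (hloop : ∀ e, fst e ≠ snd e)
    (w : E → ℝ) (hw : ∀ e, 0 < w e)
    (b : V → ℕ)
    (hb : ∀ v, 1 ≤ b v ∧
      b v ≤ (Finset.univ.filter (fun e => fst e = v ∨ snd e = v)).card) :
    (∃ σ : S13.W V E b → S13.W V E b, S13.isPM fst snd σ) ∧
    ∃ Wmax : ℝ,
      (∃ S : Finset E, S13.isSBM fst snd b S ∧ (∑ e ∈ S, w e) = Wmax) ∧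
      (∀ S : Finset E, S13.isSBM fst snd b S → (∑ e ∈ S, w e) ≤ Wmax) ∧
      (∃ σ : S13.W V E b → S13.W V E b, S13.isPM fst snd σ ∧
        S13.pmwt w σ = 2 * ((∑ e : E, w e) + Wmax)) ∧
      (∀ σ : S13.W V E b → S13.W V E b, S13.isPM fst snd σ →
        S13.pmwt w σ ≤ 2 * ((∑ e : E, w e) + Wmax)) :=
  schrijver_reduction_simple_b_matching_general V E fst snd hloop w b
end

section
/- Let L be a finite simple digraph with an RF-chain number r(v) ≥ 1 on each vertex, and let intf be a symmetric irreflexive interference relation on the arcs of L that holds only between arcs sharing no common vertex. For a link l = (u,v) set d(l) = min(r(u), r(v)). Let H be the expanded network with vertices (v,i) for 1 ≤ i ≤ r(v) and, for each link (u,v) of L, arcs ((u,j),(v,k)) for all j, k. Let C be the conflict graph whose vertices are the arcs of H, with two distinct arcs adjacent in C if and only if they share a vertex of H, or the links of L they expand interfere under intf. Then for every vertex e of C expanding a link l, every independent set of C contained in the closed neighborhood N_C[e] has cardinality at most 2 + Σ_{l' : intf(l', l)} d(l'). Consequently, for any ordering of the vertices of C, the inductive independence number of C is at most max_{l ∈ E(L)}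 Σ_{l' : intf(l', l)} d(l') + 2. -/
namespace S14

/-- Vertices of the expanded network `H`: `r v` copies of each vertex `v` of `L`. -/
abbrev VH (V : Type) (r : V → ℕ) := Σ v : V, Fin (r v)

/-- Adjacency of the conflict graph `C` (full-duplex, MAX-SU-SM): two distinct arcs of
`H` conflict iff they share a vertex of `H` or the links they expand interfere. -/
def adjC {V : Type} {r : V → ℕ} (intf : V × V → V × V → Prop)
    (e f : VH V r × VH V r) : Prop :=
  e ≠ f ∧
  (e.1 = f.1 ∨ e.1 = f.2 ∨ e.2 = f.1 ∨ e.2 = f.2 ∨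
    intf (e.1.1, e.2.1) (f.1.1, f.2.1))

end S14

/-!
An independent set of `C` is a matching in `H`. Hence at most one of its members meets each of the
two endpoints of `e`, and every other member in `N_C[e]` expands a link `l'` interfering with the
link of `e`. For fixed `l' = (u, v)`, the members expanding `l'` have distinct tails among the
`r u` copies of `u` and distinct heads among the `r v` copies of `v`, so there are at most
`min (r u) (r v)` of them.
-/

section ArcMatching

variable {α : Type*}

/-- A matching in a digraph, as a set of ordered pairs: distinct arcs share no endpoint, whether as
tail or as head. Loops are not excluded. -/
def IsArcMatching (M : Set (α × α)) : Prop :=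
  M.Pairwise fun x y => x.1 ≠ y.1 ∧ x.1 ≠ y.2 ∧ x.2 ≠ y.1 ∧ x.2 ≠ y.2

namespace IsArcMatching

variable {M : Set (α × α)} {S : Finset (α × α)}

theorem filter (hS : IsArcMatching (S : Set (α × α))) (p : α × α → Prop) [DecidablePred p] :
    IsArcMatching (S.filter p : Set (α × α)) :=
  Set.Pairwise.mono (Finset.coe_subset.2 (Finset.filter_subset p S)) hS

theorem injOn_fst (hM : IsArcMatching M) : M.InjOn Prod.fst :=
  fun _ hx _ hy h => hM.eq hx hy fun hxy => hxy.1 h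

theorem injOn_snd (hM : IsArcMatching M) : M.InjOn Prod.snd :=
  fun _ hx _ hy h => hM.eq hx hy fun hxy => hxy.2.2.2 h

theorem card_le_one_of_forall_incident (hS : IsArcMatching (S : Set (α × α))) (a : α)
    (incident : ∀ x ∈ S, a = x.1 ∨ a = x.2) : S.card ≤ 1 := by
  refine Finset.card_le_one.2 fun x hx y hy => hS.eq hx hy ?_
  rintro ⟨h₁₁, h₁₂, h₂₁, h₂₂⟩
  rcases incident x hx with rfl | rfl <;> rcases incident y hy with h | h <;> contradiction

end IsArcMatching

end ArcMatching

section SigmaArcs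

variable {V : Type*} {β : V → Type*}

/-- The link of the base network on `V` that an arc of the expanded network expands, where the
expanded network has one copy of `v` for each element of `β v`. -/
def baseLink (x : (Σ v, β v) × (Σ v, β v)) : V × V := (x.1.1, x.2.1)

theorem card_le_card_fiber_of_injOn {ι : Type*} {S : Finset ι} {f : ι → Σ v, β v}
    (hf : Set.InjOn f S) (v : V) [Fintype (β v)] (hv : ∀ x ∈ S, (f x).1 = v) :
    S.card ≤ Fintype.card (β v) := by
  rw [← Finset.card_univ, ← Finset.card_map (Function.Embedding.sigmaMk v)]
  refine Finset.card_le_card_of_injOn f (fun x hx => ?_) hf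
  obtain rfl := hv x hx
  exact Finset.mem_map_of_mem _ (Finset.mem_univ (f x).2)

namespace IsArcMatching

variable [∀ v, Fintype (β v)] {S : Finset ((Σ v, β v) × (Σ v, β v))}

theorem card_le_min_card_fiber (hS : IsArcMatching (S : Set ((Σ v, β v) × (Σ v, β v))))
    (l : V × V) (hl : ∀ x ∈ S, baseLink x = l) :
    S.card ≤ min (Fintype.card (β l.1)) (Fintype.card (β l.2)) :=
  le_min
    (card_le_card_fiber_of_injOn hS.injOn_fst l.1 fun x hx => congrArg Prod.fst (hl x hx))
    (card_le_card_fiber_of_injOn hS.injOn_snd l.2 fun x hx => congrArg Prod.snd (hl x hx))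

theorem card_le_sum_min_card_fiber (hS : IsArcMatching (S : Set ((Σ v, β v) × (Σ v, β v))))
    (T : Finset (V × V)) (hT : ∀ x ∈ S, baseLink x ∈ T) :
    S.card ≤ ∑ l ∈ T, min (Fintype.card (β l.1)) (Fintype.card (β l.2)) := by
  classical
  rw [Finset.card_eq_sum_card_fiberwise hT]
  exact Finset.sum_le_sum fun l _ =>
    (hS.filter _).card_le_min_card_fiber l fun x hx => (Finset.mem_filter.1 hx).2

theorem card_le_two_add_sum_min_card_fiber
    (hS : IsArcMatching (S : Set ((Σ v, β v) × (Σ v, β v))))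
    (a b : Σ v, β v) (T : Finset (V × V))
    (cover : ∀ x ∈ S, (a = x.1 ∨ a = x.2) ∨ (b = x.1 ∨ b = x.2) ∨ baseLink x ∈ T) :
    S.card ≤ 2 + ∑ l ∈ T, min (Fintype.card (β l.1)) (Fintype.card (β l.2)) := by
  classical
  let Sa := S.filter fun x => a = x.1 ∨ a = x.2
  let Sb := S.filter fun x => b = x.1 ∨ b = x.2
  let ST := S.filter fun x => baseLink x ∈ T
  have card_Sa : Sa.card ≤ 1 :=
    (hS.filter _).card_le_one_of_forall_incident a fun x hx => (Finset.mem_filter.1 hx).2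
  have card_Sb : Sb.card ≤ 1 :=
    (hS.filter _).card_le_one_of_forall_incident b fun x hx => (Finset.mem_filter.1 hx).2
  have card_ST : ST.card ≤ ∑ l ∈ T, min (Fintype.card (β l.1)) (Fintype.card (β l.2)) :=
    (hS.filter _).card_le_sum_min_card_fiber T fun x hx => (Finset.mem_filter.1 hx).2
  have S_eq : S = Sa ∪ (Sb ∪ ST) := by
    rw [← Finset.filter_or, ← Finset.filter_or, Finset.filter_true_of_mem cover]
  calc
    S.card = (Sa ∪ (Sb ∪ ST)).card := congrArg Finset.card S_eq
    _ ≤ Sa.card + (Sb.card + ST.card) :=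
      (Finset.card_union_le _ _).trans (Nat.add_le_add_left (Finset.card_union_le _ _) _)
    _ ≤ 2 + ∑ l ∈ T, min (Fintype.card (β l.1)) (Fintype.card (β l.2)) := by omega

end IsArcMatching

end SigmaArcs

section ConflictGraph

variable {V : Type} {r : V → ℕ} {intf : V × V → V × V → Prop}

theorem isArcMatching_of_pairwise_not_adjC {S : Set (S14.VH V r × S14.VH V r)}
    (indep : S.Pairwise fun x y => ¬ S14.adjC intf x y) : IsArcMatching S := by
  intro x hx y hy hxy
  have not_conflict := fun h => indep hx hy hxy ⟨hxy, h⟩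
  tauto

theorem incident_or_intf_of_eq_or_adjC {e x : S14.VH V r × S14.VH V r}
    (h : x = e ∨ S14.adjC intf e x) :
    (e.1 = x.1 ∨ e.1 = x.2) ∨ (e.2 = x.1 ∨ e.2 = x.2) ∨ intf (baseLink e) (baseLink x) := by
  rcases h with rfl | ⟨_, h⟩
  · exact Or.inl (Or.inl rfl)
  · simpa only [or_assoc, baseLink] using h

theorem card_le_of_independent_of_subset_closedNeighborhood {e : S14.VH V r × S14.VH V r}
    {S : Finset (S14.VH V r × S14.VH V r)} (T : Finset (V × V))
    (intf_subset : ∀ l', intf (baseLink e) l' → l' ∈ T)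
    (nbhd : ∀ x ∈ S, x = e ∨ S14.adjC intf e x)
    (indep : ∀ x ∈ S, ∀ y ∈ S, x ≠ y → ¬ S14.adjC intf x y) :
    S.card ≤ 2 + ∑ l' ∈ T, min (r l'.1) (r l'.2) := by
  have matching : IsArcMatching (S : Set (S14.VH V r × S14.VH V r)) :=
    isArcMatching_of_pairwise_not_adjC fun x hx y hy => indep x hx y hy
  simpa only [Fintype.card_fin] using
    matching.card_le_two_add_sum_min_card_fiber e.1 e.2 T fun x hx =>
      (incident_or_intf_of_eq_or_adjC (nbhd x hx)).imp_right (Or.imp_right (intf_subset _))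

theorem inductive_independence_bound_fd_max_general (Adj : V → V → Prop)
    (T : V × V → Finset (V × V)) (intf_subset : ∀ l l', intf l l' → l' ∈ T l) :
    (∀ e : S14.VH V r × S14.VH V r,
      ∀ S : Finset (S14.VH V r × S14.VH V r),
        (∀ x ∈ S, x = e ∨ S14.adjC intf e x) →
        (∀ x ∈ S, ∀ y ∈ S, x ≠ y → ¬ S14.adjC intf x y) →
        S.card ≤ 2 + ∑ l' ∈ T (e.1.1, e.2.1), min (r l'.1) (r l'.2)) ∧
    (∀ B : ℕ, (∀ l : V × V, Adj l.1 l.2 → ∑ l' ∈ T l, min (r l'.1) (r l'.2) ≤ B) →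
      ∀ precedes : S14.VH V r × S14.VH V r → S14.VH V r × S14.VH V r → Prop,
      ∀ e : S14.VH V r × S14.VH V r, Adj e.1.1 e.2.1 →
      ∀ S : Finset (S14.VH V r × S14.VH V r),
        (∀ x ∈ S, x = e ∨ (S14.adjC intf e x ∧ precedes x e)) →
        (∀ x ∈ S, ∀ y ∈ S, x ≠ y → ¬ S14.adjC intf x y) →
        S.card ≤ B + 2) := by
  refine ⟨fun e S nbhd indep =>
    card_le_of_independent_of_subset_closedNeighborhood _ (intf_subset _) nbhd indep,
    fun B sum_le_B _ e he S nbhd indep => ?_⟩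
  calc
    S.card ≤ 2 + ∑ l' ∈ T (baseLink e), min (r l'.1) (r l'.2) :=
      card_le_of_independent_of_subset_closedNeighborhood _ (intf_subset _)
        (fun x hx => (nbhd x hx).imp_right And.left) indep
    _ ≤ 2 + B := Nat.add_le_add_left (sum_le_B (baseLink e) he) 2
    _ = B + 2 := Nat.add_comm 2 B

end ConflictGraph

/-- For the conflict graph `C` of the full-duplex MAX-SU-SM expanded
network of the link network `L` under a pairwise interference relation `intf`
(symmetric, irreflexive, holding only between arcs of `L` sharing no vertex):
(i) for every vertex `e` of `C` expanding the link `l = (e.1.1, e.2.1)`, every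
independent set of `C` contained in the closed neighborhood `N_C[e]` has cardinality
at most `2 + Σ_{l' interfering with l} d(l')` where `d(l') = min (r l'.1) (r l'.2)`;
(ii) consequently, for any ordering (injective ranking `ρ`) of the vertices of `C`,
the inductive independence number of `C` is at most
`max_{l ∈ E(L)} Σ_{l' interfering with l} d(l') + 2`. -/
theorem inductive_independence_bound_fd_max
    (V : Type) [Fintype V] [DecidableEq V]
    (Adj : V → V → Prop) [DecidableRel Adj] (hirr : ∀ v, ¬ Adj v v)
    (r : V → ℕ) (hr : ∀ v, 1 ≤ r v)
    (intf : V × V → V × V → Prop) [DecidableRel intf]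
    (hsym : ∀ l l', intf l l' → intf l' l)
    (hii : ∀ l, ¬ intf l l)
    (harcs : ∀ l l' : V × V, intf l l' →
      Adj l.1 l.2 ∧ Adj l'.1 l'.2 ∧
      l.1 ≠ l'.1 ∧ l.1 ≠ l'.2 ∧ l.2 ≠ l'.1 ∧ l.2 ≠ l'.2) :
    (∀ e : S14.VH V r × S14.VH V r, Adj e.1.1 e.2.1 →
      ∀ S : Finset (S14.VH V r × S14.VH V r),
        (∀ x ∈ S, Adj x.1.1 x.2.1) →
        (∀ x ∈ S, x = e ∨ S14.adjC intf e x) →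
        (∀ x ∈ S, ∀ y ∈ S, x ≠ y → ¬ S14.adjC intf x y) →
        S.card ≤ 2 + ∑ l' ∈ Finset.univ.filter
            (fun l' : V × V => intf l' (e.1.1, e.2.1)), min (r l'.1) (r l'.2)) ∧
    (∀ ρ : (S14.VH V r × S14.VH V r) → ℕ, Function.Injective ρ →
      ∀ e : S14.VH V r × S14.VH V r, Adj e.1.1 e.2.1 →
      ∀ S : Finset (S14.VH V r × S14.VH V r),
        (∀ x ∈ S, Adj x.1.1 x.2.1) →
        (∀ x ∈ S, x = e ∨ (S14.adjC intf e x ∧ ρ x < ρ e)) →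
        (∀ x ∈ S, ∀ y ∈ S, x ≠ y → ¬ S14.adjC intf x y) →
        S.card ≤ (Finset.univ.filter (fun l : V × V => Adj l.1 l.2)).sup
            (fun l => ∑ l' ∈ Finset.univ.filter (fun l' : V × V => intf l' l),
              min (r l'.1) (r l'.2)) + 2) := by
  obtain ⟨nbhd_bound, order_bound⟩ := inductive_independence_bound_fd_max_general (r := r) Adj
    (fun l => Finset.univ.filter (intf · l)) fun l l' h => by simpa using hsym l l' h
  exact ⟨fun e _ S _ => nbhd_bound e S, fun ρ _ e he S _ =>
    order_bound _ (fun l hl => Finset.le_sup (f := fun l => ∑ l' ∈ Finset.univ.filter (intf · l),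
      min (r l'.1) (r l'.2)) (by simpa using hl)) (ρ · < ρ ·) e he S⟩
end

section
/- Let L be a finite simple digraph with an RF-chain number r(v) ≥ 1 on each vertex, and let intf be a symmetric irreflexive interference relation on the arcs of L that holds only between arcs sharing no common vertex. For a link l = (u,v) set d(l) = min(r(u), r(v)). Let H be the sparse half-duplex expanded network with vertices (v,i) for 1 ≤ i ≤ r(v) and, for each link (u,v) of L, arcs ((u,j),(v,k)) for all j, k if r(u) ≠ r(v), and only the diagonal arcs ((u,j),(v,j)) if r(u) = r(v). Let C be the conflict graph whose vertices are the arcs of H, with two distinct arcs adjacent in C if and only if they share a vertex of H, or there is a vertex w of L such that one arc enters a copy of w and the other leaves a copy of w, or the links of L they expand interfere under intf. Then for every vertex e of C expanding a link l = (u,v), every independent set of C contained in the closed neighborhood N_C[e] has cardinality at most r(u) + r(v) + Σ_{l' : intf(l', l)} d(l'). -/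
namespace S15

/-- Vertices of the sparse half-duplex expanded network `H`: `r v` copies of each
vertex `v` of `L`. -/
abbrev VH (V : Type) (r : V → ℕ) := Σ v : V, Fin (r v)

/-- Arcs of the sparse half-duplex expanded network: for a link `(u,v)` of `L`, all
arcs `((u,j),(v,k))` if `r u ≠ r v`, and only the diagonal arcs (`j = k`) if
`r u = r v`. -/
def arcH {V : Type} (Adj : V → V → Prop) {r : V → ℕ} (e : VH V r × VH V r) : Prop :=
  Adj e.1.1 e.2.1 ∧ (r e.1.1 = r e.2.1 → e.1.2.val = e.2.2.val)

/-- Adjacency of the conflict graph `C` (half-duplex): two distinct arcs of `H`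
conflict iff they share a vertex of `H`, or there is a vertex `w` of `L` such that one
arc enters a copy of `w` and the other leaves a copy of `w`, or the links they expand
interfere. -/
def adjC {V : Type} {r : V → ℕ} (intf : V × V → V × V → Prop)
    (e f : VH V r × VH V r) : Prop :=
  e ≠ f ∧
  (e.1 = f.1 ∨ e.1 = f.2 ∨ e.2 = f.1 ∨ e.2 = f.2 ∨
    e.2.1 = f.1.1 ∨ f.2.1 = e.1.1 ∨
    intf (e.1.1, e.2.1) (f.1.1, f.2.1))

end S15

/-!
An independent set of the conflict graph is a matching of `H`, since arcs sharing a vertex conflict,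
and a matching is never larger than a vertex cover. The arcs conflicting with an expansion of
`(u, v)` are covered by the copies of `u`, the copies of `v` and, for every link interfering with
`(u, v)`, the copies of whichever of its endpoints has fewer of them.
-/

namespace S15

section Matching

variable {α : Type*}

/-- A set of arcs, given as ordered pairs of vertices, no two of which have an endpoint in common,
whatever their directions. -/
def IsMatching (S : Finset (α × α)) : Prop :=
  ∀ x ∈ S, ∀ y ∈ S, x ≠ y → x.1 ≠ y.1 ∧ x.1 ≠ y.2 ∧ x.2 ≠ y.1 ∧ x.2 ≠ y.2

/-- A set of vertices containing an endpoint of each arc of `S`; it plays the dual role to a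
matching. -/
def IsVertexCover (W : Finset α) (S : Finset (α × α)) : Prop :=
  ∀ x ∈ S, x.1 ∈ W ∨ x.2 ∈ W

theorem IsMatching.card_le_card_of_isVertexCover {S : Finset (α × α)} {W : Finset α}
    (hS : IsMatching S) (hW : IsVertexCover W S) : S.card ≤ W.card := by
  refine Finset.card_le_card_of_forall_subsingleton (fun x p => p = x.1 ∨ p = x.2) ?_ ?_
  · intro x hx
    rcases hW x hx with hx₁ | hx₂
    · exact ⟨x.1, hx₁, .inl rfl⟩
    · exact ⟨x.2, hx₂, .inr rfl⟩
  · rintro p - x ⟨hx, hpx⟩ y ⟨hy, hpy⟩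
    by_contra hxy
    have hdisjoint := hS x hx y hy hxy
    grind

end Matching

variable {V : Type} {r : V → ℕ}

theorem isMatching_of_pairwise_not_adjC {intf : V × V → V × V → Prop}
    {S : Finset (VH V r × VH V r)} (hS : ∀ x ∈ S, ∀ y ∈ S, x ≠ y → ¬ adjC intf x y) :
    IsMatching S := by
  intro x hx y hy hxy
  have hconf := hS x hx y hy hxy
  unfold adjC at hconf
  tauto

variable (r) in
/-- The copies in the expanded network of a vertex `w` of the link network. -/
def copies (w : V) : Finset (VH V r) :=
  Finset.univ.map (Function.Embedding.sigmaMk w)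

theorem mem_copies {w : V} {p : VH V r} : p ∈ copies r w ↔ p.1 = w := by
  obtain ⟨v, i⟩ := p
  simp only [copies, Finset.mem_map, Finset.mem_univ, true_and, Function.Embedding.sigmaMk_apply]
  constructor
  · rintro ⟨j, hj⟩
    exact (congrArg Sigma.fst hj).symm
  · rintro rfl
    exact ⟨i, rfl⟩

theorem card_copies (w : V) : (copies r w).card = r w := by
  simp [copies]

variable (r) in
/-- The endpoint of the link `l` with fewer copies, the tail in case of a tie; its number of copies
is the paper's `d(l)`. -/
def bottleneck (l : V × V) : V :=
  if r l.1 ≤ r l.2 then l.1 else l.2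

theorem bottleneck_eq_fst_or_snd (l : V × V) : bottleneck r l = l.1 ∨ bottleneck r l = l.2 :=
  ite_eq_or_eq ..

theorem apply_bottleneck (l : V × V) : r (bottleneck r l) = min (r l.1) (r l.2) := by
  rw [bottleneck, apply_ite r, min_def]

section NeighborhoodCover

variable [DecidableEq V]

variable (r) in
/-- The vertices of the expanded network used to cover the arcs that conflict with an expansion of
the link `l`, where `F` is a set of links containing all those that interfere with `l`. -/
def neighborhoodCover (l : V × V) (F : Finset (V × V)) : Finset (VH V r) :=
  copies r l.1 ∪ copies r l.2 ∪ F.biUnion fun l' => copies r (bottleneck r l')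

theorem mem_neighborhoodCover {l : V × V} {F : Finset (V × V)} {p : VH V r} :
    p ∈ neighborhoodCover r l F ↔
      (p.1 = l.1 ∨ p.1 = l.2) ∨ ∃ l' ∈ F, p.1 = bottleneck r l' := by
  simp only [neighborhoodCover, Finset.mem_union, Finset.mem_biUnion, mem_copies]

theorem card_neighborhoodCover_le (l : V × V) (F : Finset (V × V)) :
    (neighborhoodCover r l F).card ≤ r l.1 + r l.2 + ∑ l' ∈ F, min (r l'.1) (r l'.2) :=
  calc (neighborhoodCover r l F).card
      ≤ (copies r l.1).card + (copies r l.2).card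
          + ∑ l' ∈ F, (copies r (bottleneck r l')).card :=
        (Finset.card_union_le _ _).trans <|
          add_le_add (Finset.card_union_le _ _) Finset.card_biUnion_le
    _ = r l.1 + r l.2 + ∑ l' ∈ F, min (r l'.1) (r l'.2) := by
        simp only [card_copies, apply_bottleneck]

theorem isVertexCover_neighborhoodCover {intf : V × V → V × V → Prop} {e : VH V r × VH V r}
    {S : Finset (VH V r × VH V r)} {F : Finset (V × V)}
    (hF : ∀ l, intf (e.1.1, e.2.1) l → l ∈ F) (hS : ∀ x ∈ S, x = e ∨ adjC intf e x) :
    IsVertexCover (neighborhoodCover r (e.1.1, e.2.1) F) S := by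
  intro x hx
  have hcases : ((x.1.1 = e.1.1 ∨ x.1.1 = e.2.1) ∨ x.2.1 = e.1.1 ∨ x.2.1 = e.2.1) ∨
      intf (e.1.1, e.2.1) (x.1.1, x.2.1) := by
    rcases hS x hx with rfl | ⟨-, h | h | h | h | h | h | h⟩ <;> simp [*]
  simp only [mem_neighborhoodCover]
  rcases hcases with (htail | hhead) | hintf
  · exact .inl (.inl htail)
  · exact .inr (.inl hhead)
  · rcases bottleneck_eq_fst_or_snd (r := r) (x.1.1, x.2.1) with htail | hhead
    · exact .inl (.inr ⟨_, hF _ hintf, htail.symm⟩)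
    · exact .inr (.inr ⟨_, hF _ hintf, hhead.symm⟩)

end NeighborhoodCover

end S15

theorem local_independence_bound_hd_general {V : Type} {r : V → ℕ} {intf : V × V → V × V → Prop}
    {e : S15.VH V r × S15.VH V r} {S : Finset (S15.VH V r × S15.VH V r)} {F : Finset (V × V)}
    (hF : ∀ l, intf (e.1.1, e.2.1) l → l ∈ F) (hN : ∀ x ∈ S, x = e ∨ S15.adjC intf e x)
    (hS : S15.IsMatching S) :
    S.card ≤ r e.1.1 + r e.2.1 + ∑ l' ∈ F, min (r l'.1) (r l'.2) := by
  classical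
  exact (hS.card_le_card_of_isVertexCover (S15.isVertexCover_neighborhoodCover hF hN)).trans
    (S15.card_neighborhoodCover_le _ F)

/-- For the conflict graph `C` of the sparse half-duplex expanded
network of the link network `L` under a pairwise interference relation `intf`
(symmetric, irreflexive, holding only between arcs of `L` sharing no vertex): for
every vertex `e` of `C` expanding the link `l = (u,v)`, every independent set of `C`
contained in the closed neighborhood `N_C[e]` has cardinality at most
`r u + r v + Σ_{l' interfering with l} d(l')` where `d(l') = min (r l'.1) (r l'.2)`. -/
theorem local_independence_bound_hd
    (V : Type) [Fintype V] [DecidableEq V]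
    (Adj : V → V → Prop) [DecidableRel Adj] (hirr : ∀ v, ¬ Adj v v)
    (r : V → ℕ) (hr : ∀ v, 1 ≤ r v)
    (intf : V × V → V × V → Prop) [DecidableRel intf]
    (hsym : ∀ l l', intf l l' → intf l' l)
    (hii : ∀ l, ¬ intf l l)
    (harcs : ∀ l l' : V × V, intf l l' →
      Adj l.1 l.2 ∧ Adj l'.1 l'.2 ∧
      l.1 ≠ l'.1 ∧ l.1 ≠ l'.2 ∧ l.2 ≠ l'.1 ∧ l.2 ≠ l'.2) :
    ∀ e : S15.VH V r × S15.VH V r, S15.arcH Adj e →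
      ∀ S : Finset (S15.VH V r × S15.VH V r),
        (∀ x ∈ S, S15.arcH Adj x) →
        (∀ x ∈ S, x = e ∨ S15.adjC intf e x) →
        (∀ x ∈ S, ∀ y ∈ S, x ≠ y → ¬ S15.adjC intf x y) →
        S.card ≤ r e.1.1 + r e.2.1 + ∑ l' ∈ Finset.univ.filter
            (fun l' : V × V => intf l' (e.1.1, e.2.1)), min (r l'.1) (r l'.2) := by
  intro e _ S _ hN hI
  exact local_independence_bound_hd_general (fun l hl => by simpa using hsym _ _ hl) hN
    (S15.isMatching_of_pairwise_not_adjC hI)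
end
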